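/- (Monotonicity in the volume of the random-boundary-condition measures.) Let G = (V,E) be a connected graph of degree bounded by D > 0, with nearest-neighbour ferromagnetic interactions, β > 0, and let ρ be a measure on ℝ with 0 < ∫_ℝ e^{a|u|²}dρ(u) < ∞ for all a > 0 and ρ([0,∞)) > 0. Let a = 8βD, let C̃ be the constant from the n = 2 regularity theorem, let B = ( (2/a)( 2C̃ + log ρ_a(ℝ) − log ρ_{a/2}(ℝ) ) )^{1/2}, and let ζ = ζ_{a,B} be the single-site measure dζ(u) = 1_{u ≥ B} dρ_a(u − B). Then for every β > 0 there exists r > 0 such that for all finite sets Λ' ⊂ Λ ⊂ V with d_G(∂Λ, Λ') > r, the measure ν̃⁰_{Λ',β,ρ} stochastically dominates the Λ'-marginal of ν̃⁰_{Λ,β,ρ}. -/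

import Mathlib

open MeasureTheory
open scoped ENNReal Classical

/-- A walk of length `m` in `(R, J)`. -/
def IsWalk {V : Type*} (J : V → V → ℝ) (R : Set V) (m : ℕ) (w : ℕ → V) : Prop :=
  (∀ i, 0 < i → i < m → w i ∈ R) ∧ ∀ i < m, J (w i) (w (i + 1)) ≠ 0

/-- The quantity `A(x, R, λ, ξ, C)` (case `n = 2`). -/
noncomputable def ARealL {V : Type*} (J : V → V → ℝ) (f : ℝ → ℝ) (lam : ℝ)
    (ξ : V → ℝ) (C : ℝ) (x : V) (R : Set V) : ℝ :=
  sInf {A : ℝ | 1 ≤ A ∧ ∀ (m : ℕ) (w : ℕ → V), IsWalk J R m w → w 0 = x → w m ∈ R →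
    |∑' z : {z : V // z ∉ R}, J (w m) z.1 * ξ z.1| ≤
      (∑' z : {z : V // z ∉ R}, |J (w m) z.1| * f (J (w m) z.1)) * C * A * lam ^ (m + 1) *
        ∏ i ∈ Finset.range m, f (J (w i) (w (i + 1)))}

/-- The Hamiltonian `-H^ξ_{Λ,J}` (already multiplied by `β`). -/
noncomputable def hamil {V : Type*} (J : V → V → ℝ) (β : ℝ) (Λ : Finset V)
    (ξ : V → ℝ) (φ : ↥Λ → ℝ) : ℝ :=
  β * ((1 / 2) * ∑ x : ↥Λ, ∑ y : ↥Λ,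
      (if x.1 ≠ y.1 then J x.1 y.1 * φ x * φ y else 0)
    + ∑ x : ↥Λ, φ x * ∑' y : {y : V // y ∉ Λ}, J x.1 y.1 * ξ y.1)

/-- The finite-volume Gibbs measure `ν^ξ_{Λ,β,ρ,J}` on `ℝ^Λ`. -/
noncomputable def gibbs {V : Type*} (J : V → V → ℝ) (β : ℝ) (ρ : Measure ℝ)
    (Λ : Finset V) (ξ : V → ℝ) : Measure (↥Λ → ℝ) :=
  (((Measure.pi fun _ : ↥Λ => ρ).withDensity
      fun φ => ENNReal.ofReal (Real.exp (hamil J β Λ ξ φ))) Set.univ)⁻¹ •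
    (Measure.pi fun _ : ↥Λ => ρ).withDensity
      fun φ => ENNReal.ofReal (Real.exp (hamil J β Λ ξ φ))

/-- The `Λ'`-marginal of a measure on `ℝ^Λ`, for `Λ' ⊆ Λ`. -/
noncomputable def marg {V : Type*} {Λ' Λ : Finset V} (h : Λ' ⊆ Λ)
    (μ : Measure (↥Λ → ℝ)) : Measure (↥Λ' → ℝ) :=
  μ.map fun φ x => φ ⟨x.1, h x.2⟩

/-- The normalized product measure `ν^0_{Λ,0,ρ,0}`. -/
noncomputable def prodN {V : Type*} (ρ : Measure ℝ) (Λ : Finset V) :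
    Measure (↥Λ → ℝ) :=
  ((Measure.pi fun _ : ↥Λ => ρ) Set.univ)⁻¹ • Measure.pi fun _ : ↥Λ => ρ

/-- The tilted single-site measure `dρ_b(u) = e^(b|u|²) dρ(u)`. -/
noncomputable def rhoMod (ρ : Measure ℝ) (b : ℝ) : Measure ℝ :=
  ρ.withDensity fun u => ENNReal.ofReal (Real.exp (b * u ^ 2))

/-- The shifted truncated single-site measure `dζ_{a,B}(u) = 1_{u ≥ B} dρ_a(u - B)`. -/
noncomputable def zetaM (ρ : Measure ℝ) (a B : ℝ) : Measure ℝ :=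
  ((rhoMod ρ a).map (fun u => u + B)).restrict (Set.Ici B)

/-- Nearest-neighbour interactions on a graph `G`. -/
noncomputable def Jnn {V : Type*} (G : SimpleGraph V) : V → V → ℝ :=
  fun x y => if G.Adj x y then 1 else 0

/-- `∂Λ`: the set of vertices of `Λ` adjacent to `V ∖ Λ`. -/
noncomputable def bdry {V : Type*} (G : SimpleGraph V) (Λ : Finset V) : Finset V :=
  Λ.filter fun x => ∃ y, y ∉ Λ ∧ G.Adj x y

/-- The random-boundary-condition measure `ν̃⁰_{Λ,β,ρ}`: sample the spins on `∂Λ` from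
the normalized product of `ζ`, then the spins on `Λ∖∂Λ` from the finite-volume Gibbs
measure with these boundary spins as boundary conditions. -/
noncomputable def nuTilde {V : Type*} (G : SimpleGraph V) (β : ℝ) (ρ ζ : Measure ℝ)
    (Λ : Finset V) : Measure (↥Λ → ℝ) :=
  (prodN ζ (bdry G Λ)).bind fun ξb =>
    (gibbs (Jnn G) β ρ (Λ \ bdry G Λ)
        (fun y => if h : y ∈ bdry G Λ then ξb ⟨y, h⟩ else 0)).map
      fun ψ x => if h : x.1 ∈ bdry G Λ then ξb ⟨x.1, h⟩
        else ψ ⟨x.1, Finset.mem_sdiff.mpr ⟨x.2, h⟩⟩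

/-- Stochastic domination. -/
def StochDom {ι : Type*} (μ ν : Measure (ι → ℝ)) : Prop :=
  ∀ g : (ι → ℝ) → ℝ, Measurable g → Monotone g → (∃ K, ∀ φ, |g φ| ≤ K) →
    ∫ φ, g φ ∂μ ≤ ∫ φ, g φ ∂ν

theorem two_point_nn {a b c d : NNReal} (h1 : a ≤ c) (h2 : b ≤ c) (h : a * b ≤ c * d) :
    a + b ≤ c + d := by
  rcases eq_or_ne c 0 with rfl | hc
  · simp at h1 h2; simp [h1, h2]
  have hc' : (0:ℝ) < c := by positivity
  have h1' : (a:ℝ) ≤ c := h1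
  have h2' : (b:ℝ) ≤ c := h2
  have h' : (a:ℝ) * b ≤ c * d := by exact_mod_cast h
  have : (a:ℝ) + b ≤ c + d := by
    have : (c:ℝ) * (a + b) ≤ c * (c + d) := by nlinarith [mul_nonneg (sub_nonneg.2 h1') (sub_nonneg.2 h2')]
    exact le_of_mul_le_mul_left this hc'
  exact_mod_cast this

theorem two_point {a b c d : ℝ≥0∞} (h1 : a ≤ c) (h2 : b ≤ c) (h : a * b ≤ c * d) :
    a + b ≤ c + d := by
  by_cases hc : c = ⊤
  · simp [hc]
  by_cases hd : d = ⊤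
  · simp [hd]
  have ha : a ≠ ⊤ := ne_top_of_le_ne_top hc h1
  have hb : b ≠ ⊤ := ne_top_of_le_ne_top hc h2
  lift a to NNReal using ha
  lift b to NNReal using hb
  lift c to NNReal using hc
  lift d to NNReal using hd
  norm_cast at *
  exact two_point_nn h1 h2 h

/-- one-dimensional four functions -/
theorem four_fun_one (μ : Measure ℝ) [SigmaFinite μ] (f1 f2 f3 f4 : ℝ → ℝ≥0∞)
    (m1 : Measurable f1) (m2 : Measurable f2) (m3 : Measurable f3) (m4 : Measurable f4)
    (h : ∀ u v, f1 u * f2 v ≤ f3 (u ⊔ v) * f4 (u ⊓ v)) :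
    (∫⁻ u, f1 u ∂μ) * (∫⁻ u, f2 u ∂μ) ≤ (∫⁻ u, f3 u ∂μ) * (∫⁻ u, f4 u ∂μ) := by
  have key : ∀ (f g : ℝ → ℝ≥0∞), Measurable f → Measurable g →
      ((∫⁻ u, f u ∂μ) * (∫⁻ u, g u ∂μ)) + ((∫⁻ u, f u ∂μ) * (∫⁻ u, g u ∂μ)) =
      ∫⁻ u, ∫⁻ v, (f u * g v + f v * g u) ∂μ ∂μ := by
    intro f g hf hg
    have e1 : ∀ u, ∫⁻ v, (f u * g v + f v * g u) ∂μ = f u * (∫⁻ v, g v ∂μ) + (∫⁻ v, f v ∂μ) * g u := by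
      intro u
      rw [lintegral_add_left (by fun_prop), lintegral_const_mul _ hg, lintegral_mul_const _ hf]
    simp_rw [e1]
    rw [lintegral_add_left (by fun_prop), lintegral_mul_const _ hf, lintegral_const_mul _ hg]
  have h2 : ((∫⁻ u, f1 u ∂μ) * (∫⁻ u, f2 u ∂μ)) + ((∫⁻ u, f1 u ∂μ) * (∫⁻ u, f2 u ∂μ)) ≤
      ((∫⁻ u, f3 u ∂μ) * (∫⁻ u, f4 u ∂μ)) + ((∫⁻ u, f3 u ∂μ) * (∫⁻ u, f4 u ∂μ)) := by
    rw [key f1 f2 m1 m2, key f3 f4 m3 m4]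
    have pt : ∀ u v, u ≤ v → f1 u * f2 v + f1 v * f2 u ≤ f3 v * f4 u + f3 u * f4 v := by
      intro u v huv
      have a1 := h u v
      have a2 := h v u
      have a3 := h u u
      have a4 := h v v
      simp [huv] at a1 a2 a3 a4
      apply two_point a1 a2
      calc f1 u * f2 v * (f1 v * f2 u) = (f1 u * f2 u) * (f1 v * f2 v) := by ring
        _ ≤ (f3 u * f4 u) * (f3 v * f4 v) := mul_le_mul' a3 a4
        _ = _ := by ring
    refine lintegral_mono fun u => lintegral_mono fun v => ?_
    rcases le_total u v with huv | huv
    · simpa [add_comm] using pt u v huv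
    · simpa [add_comm] using pt v u huv
  rw [← two_mul, ← two_mul] at h2
  exact (ENNReal.mul_le_mul_iff_right (by simp) (by simp)).1 h2

theorem update_sup_update {V : Type*} (x y : V → ℝ) (i : V) (u v : ℝ) :
    Function.update x i u ⊔ Function.update y i v = Function.update (x ⊔ y) i (u ⊔ v) := by
  funext j; by_cases h : j = i
  · subst h; simp
  · simp [h]

theorem update_inf_update {V : Type*} (x y : V → ℝ) (i : V) (u v : ℝ) :
    Function.update x i u ⊓ Function.update y i v = Function.update (x ⊓ y) i (u ⊓ v) := by
  funext j; by_cases h : j = i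
  · subst h; simp
  · simp [h]

/-- Karlin–Rinott / four functions for lmarginal -/
theorem four_fun {V : Type*} (μ : V → Measure ℝ) [∀ i, SigmaFinite (μ i)] (s : Finset V)
    (f1 f2 f3 f4 : (V → ℝ) → ℝ≥0∞)
    (m1 : Measurable f1) (m2 : Measurable f2) (m3 : Measurable f3) (m4 : Measurable f4)
    (h : ∀ x y, f1 x * f2 y ≤ f3 (x ⊔ y) * f4 (x ⊓ y)) (x y : V → ℝ) :
    (∫⋯∫⁻_s, f1 ∂μ) x * (∫⋯∫⁻_s, f2 ∂μ) y ≤ (∫⋯∫⁻_s, f3 ∂μ) (x ⊔ y) * (∫⋯∫⁻_s, f4 ∂μ) (x ⊓ y) := by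
  induction s using Finset.induction generalizing x y with
  | empty => simpa using h x y
  | insert i s hi ih =>
    simp only [lmarginal_insert _ m1 hi, lmarginal_insert _ m2 hi, lmarginal_insert _ m3 hi,
      lmarginal_insert _ m4 hi]
    refine four_fun_one (μ i) _ _ _ _ ?_ ?_ ?_ ?_ ?_
    · exact (m1.lmarginal _).comp (measurable_update _)
    · exact (m2.lmarginal _).comp (measurable_update _)
    · exact (m3.lmarginal _).comp (measurable_update _)
    · exact (m4.lmarginal _).comp (measurable_update _)
    · intro u v
      have := ih (Function.update x i u) (Function.update y i v)
      rwa [update_sup_update, update_inf_update] at this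

section Binary
variable {α : Type*}

noncomputable def bE (A : Finset α) (μ g : Finset α → ℝ) : ℝ := ∑ s ∈ A.powerset, μ s * g s
noncomputable def ind (K s : Finset α) : ℝ := if K ⊆ s then 1 else 0
noncomputable def ber (A : Finset α) (p : α → ℝ) (s : Finset α) : ℝ :=
  ∏ j ∈ A, if j ∈ s then p j else 1 - p j
noncomputable def bEB (A : Finset α) (p : α → ℝ) (g : Finset α → ℝ) : ℝ := bE A (ber A p) g

theorem ind_nonneg (K s : Finset α) : 0 ≤ ind K s := by unfold ind; split_ifs <;> norm_num
theorem ind_mono (K : Finset α) : Monotone (ind K) := by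
  intro s t hst; unfold ind; split_ifs with h1 h2
  · exact le_rfl
  · exact absurd (h1.trans hst) h2
  · norm_num
  · exact le_rfl

theorem bE_congr {A : Finset α} {μ g μ' g' : Finset α → ℝ}
    (h : ∀ s ⊆ A, μ s * g s = μ' s * g' s) : bE A μ g = bE A μ' g' :=
  Finset.sum_congr rfl fun s hs => h s (Finset.mem_powerset.1 hs)

theorem bE_le {A : Finset α} {μ g μ' g' : Finset α → ℝ}
    (h : ∀ s ⊆ A, μ s * g s ≤ μ' s * g' s) : bE A μ g ≤ bE A μ' g' :=
  Finset.sum_le_sum fun s hs => h s (Finset.mem_powerset.1 hs)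

theorem bE_nonneg {A : Finset α} {μ g : Finset α → ℝ} (hμ : ∀ s, 0 ≤ μ s) (hg : ∀ s, 0 ≤ g s) :
    0 ≤ bE A μ g := Finset.sum_nonneg fun s _ => mul_nonneg (hμ s) (hg s)

theorem bE_insert {A : Finset α} {i : α} (hi : i ∉ A) (μ g : Finset α → ℝ) :
    bE (insert i A) μ g = bE A μ g + bE A (fun s => μ (insert i s)) (fun s => g (insert i s)) := by
  unfold bE; rw [Finset.sum_powerset_insert hi]

theorem sum_powerset_union' {T R : Finset α} (h : Disjoint T R) (f : Finset α → ℝ) :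
    ∑ s ∈ (T ∪ R).powerset, f s = ∑ η ∈ T.powerset, ∑ s ∈ R.powerset, f (η ∪ s) := by
  induction T using Finset.induction generalizing f with
  | empty => simp
  | insert i T hi ih =>
    rw [Finset.disjoint_insert_left] at h
    rw [Finset.insert_union, Finset.sum_powerset_insert (by simp [hi, h.1]), ih h.2, ih h.2,
      Finset.sum_powerset_insert hi]
    simp [Finset.insert_union]

theorem bE_union {T R : Finset α} (h : Disjoint T R) (μ g : Finset α → ℝ) :
    bE (T ∪ R) μ g = ∑ η ∈ T.powerset, bE R (fun s => μ (η ∪ s)) (fun s => g (η ∪ s)) := by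
  unfold bE; rw [sum_powerset_union' h]

theorem bE_ff (A : Finset α) (f1 f2 f3 f4 : Finset α → ℝ) (h1 : ∀ s, 0 ≤ f1 s)
    (h2 : ∀ s, 0 ≤ f2 s) (h3 : ∀ s, 0 ≤ f3 s) (h4 : ∀ s, 0 ≤ f4 s)
    (h : ∀ s ⊆ A, ∀ t ⊆ A, f1 s * f2 t ≤ f3 (s ∩ t) * f4 (s ∪ t)) :
    (∑ s ∈ A.powerset, f1 s) * (∑ s ∈ A.powerset, f2 s) ≤
      (∑ s ∈ A.powerset, f3 s) * (∑ s ∈ A.powerset, f4 s) := by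
  have := Finset.four_functions_theorem A (f₁ := f1) (f₂ := f2) (f₃ := f3) (f₄ := f4) h1 h2 h3 h4
    (fun s hs t ht => h s hs t ht) (subset_refl _) (subset_refl _)
  simpa using this

theorem bEB_insert {A : Finset α} {i : α} (hi : i ∉ A) (p : α → ℝ) (g : Finset α → ℝ) :
    bEB (insert i A) p g = (1 - p i) * bEB A p g + p i * bEB A p (fun s => g (insert i s)) := by
  unfold bEB
  rw [bE_insert hi]
  congr 1
  · unfold bE; rw [Finset.mul_sum]
    refine Finset.sum_congr rfl fun s hs => ?_
    have hs' := Finset.mem_powerset.1 hs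
    have : i ∉ s := fun h => hi (hs' h)
    simp [ber, Finset.prod_insert hi, this]; ring
  · unfold bE; rw [Finset.mul_sum]
    refine Finset.sum_congr rfl fun s hs => ?_
    have : ∏ j ∈ A, (if j ∈ insert i s then p j else 1 - p j) = ∏ j ∈ A, (if j ∈ s then p j else 1 - p j) := by
      refine Finset.prod_congr rfl fun j hj => ?_
      have : j ≠ i := fun h => hi (h ▸ hj)
      simp [this]
    simp only [ber, Finset.prod_insert hi, this]
    simp; ring

theorem bEB_union {T R : Finset α} (h : Disjoint T R) (p : α → ℝ) (g : Finset α → ℝ) :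
    bEB (T ∪ R) p g = bEB T p (fun η => bEB R p (fun s => g (η ∪ s))) := by
  induction T using Finset.induction generalizing g with
  | empty => simp [bEB, bE, ber]
  | insert i T hi ih =>
    rw [Finset.disjoint_insert_left] at h
    rw [Finset.insert_union, bEB_insert (by simp [hi, h.1]), ih h.2, ih h.2, bEB_insert hi]
    simp [Finset.insert_union]

theorem ber_nonneg {p : α → ℝ} (h0 : ∀ i, 0 ≤ p i) (h1 : ∀ i, p i ≤ 1) (A s : Finset α) :
    0 ≤ ber A p s := Finset.prod_nonneg fun j _ => by
  split_ifs
  · exact h0 j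
  · linarith [h1 j]

theorem bEB_congr {A : Finset α} {p p' : α → ℝ} (g : Finset α → ℝ) (h : ∀ i ∈ A, p i = p' i) :
    bEB A p g = bEB A p' g := by
  refine bE_congr fun s _ => ?_
  congr 1
  exact Finset.prod_congr rfl fun j hj => by rw [h j hj]

theorem bEB_mono {p : α → ℝ} (h0 : ∀ i, 0 ≤ p i) (h1 : ∀ i, p i ≤ 1) (A : Finset α)
    {g g' : Finset α → ℝ} (h : ∀ s, g s ≤ g' s) : bEB A p g ≤ bEB A p g' :=
  bE_le fun s _ => mul_le_mul_of_nonneg_left (h s) (ber_nonneg h0 h1 A s)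

theorem bEB_nonneg {p : α → ℝ} (h0 : ∀ i, 0 ≤ p i) (h1 : ∀ i, p i ≤ 1) (A : Finset α)
    {g : Finset α → ℝ} (h : ∀ s, 0 ≤ g s) : 0 ≤ bEB A p g :=
  bE_nonneg (ber_nonneg h0 h1 A) h

structure BHyp (A : Finset α) (μ : Finset α → ℝ) (p : α → ℝ) : Prop where
  nn : ∀ s, 0 ≤ μ s
  lsm : ∀ s ⊆ A, ∀ t ⊆ A, μ s * μ t ≤ μ (s ∩ t) * μ (s ∪ t)
  orth : ∀ K ⊆ A, bE A μ (ind K) ≤ bE A μ (fun _ => 1) * ∏ i ∈ K, p i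

def BConcl (A : Finset α) : Prop := ∀ (μ : Finset α → ℝ) (p : α → ℝ), (∀ i, 0 ≤ p i) →
  (∀ i, p i ≤ 1) → BHyp A μ p → ∀ g : Finset α → ℝ, (∀ s, 0 ≤ g s) → Monotone g →
  bE A μ g ≤ bE A μ (fun _ => 1) * bEB A p g

/-- tight case -/
theorem b_tight (T R : Finset α) (hd : Disjoint T R) (iT : BConcl T) (iR : BConcl R)
    (μ : Finset α → ℝ) (p : α → ℝ) (h0 : ∀ i, 0 ≤ p i) (h1 : ∀ i, p i ≤ 1)
    (H : BHyp (T ∪ R) μ p) (hmass : bE (T ∪ R) μ (fun _ => 1) = 1)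
    (htight : bE (T ∪ R) μ (ind T) = ∏ i ∈ T, p i) (hpos : 0 < ∏ i ∈ T, p i)
    (g : Finset α → ℝ) (g0 : ∀ s, 0 ≤ g s) (gm : Monotone g) :
    bE (T ∪ R) μ g ≤ bEB (T ∪ R) p g := by
  set M : Finset α → ℝ := fun η => ∑ s ∈ R.powerset, μ (η ∪ s) with hM
  have hMnn : ∀ η, 0 ≤ M η := fun η => Finset.sum_nonneg fun s _ => H.nn _
  have disj : ∀ {s}, s ⊆ R → ∀ i ∈ T, i ∉ s := fun hs i hi h' =>
    Finset.disjoint_left.1 hd hi (hs h')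
  have indTK : ∀ (K η s : Finset α), K ⊆ T → s ⊆ R → ind K (η ∪ s) = ind K η := by
    intro K η s hK hs
    unfold ind
    have : K ⊆ η ∪ s ↔ K ⊆ η := by
      constructor
      · intro h i hi
        rcases Finset.mem_union.1 (h hi) with h | h
        · exact h
        · exact absurd h (disj hs i (hK hi))
      · intro h; exact h.trans Finset.subset_union_left
    simp [this]
  have wK : ∀ K ⊆ T, bE (T ∪ R) μ (ind K) = bE T M (ind K) := by
    intro K hK
    rw [bE_union hd]
    refine Finset.sum_congr rfl fun η _ => ?_
    rw [hM]; simp only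
    unfold bE; rw [Finset.sum_mul]
    refine Finset.sum_congr rfl fun s hs => ?_
    show μ (η ∪ s) * ind K (η ∪ s) = _
    rw [indTK K η s hK (Finset.mem_powerset.1 hs)]
  have hM1 : bE T M (fun _ => 1) = 1 := by
    refine Eq.trans ?_ hmass
    rw [bE_union hd]
    refine Finset.sum_congr rfl fun η _ => ?_
    simp [bE, hM]
  have hMT : M T = ∏ i ∈ T, p i := by
    rw [← htight, wK T (subset_refl _)]
    unfold bE
    rw [Finset.sum_eq_single T]
    · simp [ind]
    · intro b hb hne
      have : ¬ T ⊆ b := fun h => hne (Finset.Subset.antisymm (Finset.mem_powerset.1 hb) h)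
      simp [ind, this]
    · simp
  have hMTpos : 0 < M T := hMT ▸ hpos
  have eqI : ∀ η ζ s t : Finset α, η ⊆ T → ζ ⊆ T → s ⊆ R → t ⊆ R →
      (η ∪ s) ∩ (ζ ∪ t) = (η ∩ ζ) ∪ (s ∩ t) := by
    intro η ζ s t hη hζ hs ht
    ext i
    have : i ∈ T → i ∉ R := fun h => Finset.disjoint_left.1 hd h
    have a1 := @hη i
    have a2 := @hζ i
    have a3 := @hs i
    have a4 := @ht i
    simp only [Finset.mem_inter, Finset.mem_union]
    tauto
  have eqU : ∀ η ζ s t : Finset α, (η ∪ s) ∪ (ζ ∪ t) = (η ∪ ζ) ∪ (s ∪ t) := by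
    intro η ζ s t; ext i; simp only [Finset.mem_union]; tauto
  have lsm' : ∀ η ζ s t : Finset α, η ⊆ T → ζ ⊆ T → s ⊆ R → t ⊆ R →
      μ (η ∪ s) * μ (ζ ∪ t) ≤ μ ((η ∩ ζ) ∪ (s ∩ t)) * μ ((η ∪ ζ) ∪ (s ∪ t)) := by
    intro η ζ s t hη hζ hs ht
    have := H.lsm (η ∪ s) (Finset.union_subset_union hη hs) (ζ ∪ t) (Finset.union_subset_union hζ ht)
    rwa [eqI η ζ s t hη hζ hs ht, eqU] at this
  have HR : BHyp R (fun s => μ (T ∪ s)) p := by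
    refine ⟨fun s => H.nn _, ?_, ?_⟩
    · intro s hs t ht
      have := lsm' T T s t (subset_refl _) (subset_refl _) hs ht
      simpa using this
    · intro K hK
      have e1 : bE R (fun s => μ (T ∪ s)) (fun _ => 1) = ∏ i ∈ T, p i := by
        rw [← hMT]; simp [bE, hM]
      have e2 : bE R (fun s => μ (T ∪ s)) (ind K) = bE (T ∪ R) μ (ind (T ∪ K)) := by
        rw [bE_union hd, Finset.sum_eq_single T]
        · refine bE_congr fun s hs => ?_
          congr 1
          unfold ind
          have : K ⊆ s ↔ T ∪ K ⊆ T ∪ s := by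
            constructor
            · intro h; exact Finset.union_subset_union (subset_refl _) h
            · intro h i hi
              rcases Finset.mem_union.1 (h (Finset.mem_union_right _ hi)) with h' | h'
              · exact absurd (hK hi) (Finset.disjoint_left.1 hd h')
              · exact h'
          simp [this]
        · intro b hb hne
          unfold bE
          refine Finset.sum_eq_zero fun s hs => ?_
          have : ¬ (T ∪ K ⊆ b ∪ s) := by
            intro h
            apply hne
            refine Finset.Subset.antisymm (Finset.mem_powerset.1 hb) ?_
            intro i hi
            rcases Finset.mem_union.1 (h (Finset.mem_union_left _ hi)) with h' | h'
            · exact h'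
            · exact absurd h' (disj (Finset.mem_powerset.1 hs) i hi)
          simp [ind, this]
        · simp
      rw [e1, e2]
      refine (H.orth _ (Finset.union_subset_union (subset_refl _) hK)).trans ?_
      rw [hmass, one_mul, Finset.prod_union (Finset.disjoint_of_subset_right hK hd)]
  have HT : BHyp T M p := by
    refine ⟨hMnn, ?_, ?_⟩
    · intro η hη ζ hζ
      refine bE_ff R _ _ _ _ (fun s => H.nn _) (fun s => H.nn _) (fun s => H.nn _) (fun s => H.nn _) ?_
      intro s hs t ht
      exact lsm' η ζ s t hη hζ hs ht
    · intro K hK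
      rw [← wK K hK, hM1, one_mul]
      have := H.orth K (hK.trans Finset.subset_union_left)
      rwa [hmass, one_mul] at this
  rw [bEB_union hd]
  set Gf : Finset α → ℝ := fun η => bEB R p (fun s => g (η ∪ s)) with hG
  have step : ∀ η ⊆ T, bE R (fun s => μ (η ∪ s)) (fun s => g (η ∪ s)) ≤ M η * Gf η := by
    intro η hη
    have a1 : bE R (fun s => μ (η ∪ s)) (fun s => g (η ∪ s)) * M T ≤
        M η * bE R (fun s => μ (T ∪ s)) (fun s => g (η ∪ s)) := by
      refine bE_ff R _ _ _ _ (fun s => mul_nonneg (H.nn _) (g0 _)) (fun s => H.nn _)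
        (fun s => H.nn _) (fun s => mul_nonneg (H.nn _) (g0 _)) ?_
      intro s hs t ht
      have := lsm' η T s t hη (subset_refl _) hs ht
      rw [Finset.inter_eq_left.2 hη, Finset.union_eq_right.2 hη] at this
      have gg : g (η ∪ s) ≤ g (η ∪ (s ∪ t)) :=
        gm (Finset.union_subset_union (subset_refl _) Finset.subset_union_left)
      calc μ (η ∪ s) * g (η ∪ s) * μ (T ∪ t) = (μ (η ∪ s) * μ (T ∪ t)) * g (η ∪ s) := by ring
        _ ≤ (μ (η ∪ s ∩ t) * μ (T ∪ (s ∪ t))) * g (η ∪ (s ∪ t)) :=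
            mul_le_mul this gg (g0 _) (mul_nonneg (H.nn _) (H.nn _))
        _ = _ := by ring
    have a2 := iR _ p h0 h1 HR (fun s => g (η ∪ s)) (fun s => g0 _)
      (fun s t h => gm (Finset.union_subset_union (subset_refl _) h))
    have e1 : bE R (fun s => μ (T ∪ s)) (fun _ => 1) = M T := by simp [bE, hM]
    rw [e1] at a2
    have a3 : bE R (fun s => μ (η ∪ s)) (fun s => g (η ∪ s)) * M T ≤ (M η * Gf η) * M T := by
      refine a1.trans ((mul_le_mul_of_nonneg_left a2 (hMnn η)).trans ?_)
      rw [hG]; simp only; linarith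
    exact le_of_mul_le_mul_right a3 hMTpos
  have b1 : bE (T ∪ R) μ g ≤ bE T M Gf := by
    rw [bE_union hd]
    exact Finset.sum_le_sum fun η hη => step η (Finset.mem_powerset.1 hη)
  have b2 := iT M p h0 h1 HT Gf (fun η => bEB_nonneg h0 h1 R fun s => g0 _)
    (fun η ζ h => bEB_mono h0 h1 R fun s => gm (Finset.union_subset_union h (subset_refl _)))
  rw [hM1, one_mul] at b2
  exact b1.trans b2

end Binary

section Binary
variable {α : Type*}

theorem crossing {κ : Type*} (S : Finset κ) (l : κ → ℝ → ℝ) (hl : ∀ K, Continuous (l K)) (P Q : ℝ)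
    (hPQ : P ≤ Q) (hP : ∀ K ∈ S, l K P ≤ 0) :
    (∀ K ∈ S, l K Q ≤ 0) ∨ ∃ x, P ≤ x ∧ x ≤ Q ∧ (∀ K ∈ S, l K x ≤ 0) ∧ ∃ K ∈ S, l K x = 0 := by
  by_cases h : ∀ K ∈ S, l K Q ≤ 0
  · exact Or.inl h
  right
  push Not at h
  obtain ⟨K0, hK0, hK0'⟩ := h
  have hne : S.Nonempty := ⟨K0, hK0⟩
  set F : ℝ → ℝ := fun x => S.sup' hne (fun K => l K x) with hF
  have hFc : Continuous F := Continuous.finset_sup'_apply hne fun K _ => hl K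
  have h1 : F P ≤ 0 := Finset.sup'_le _ _ hP
  have h2 : 0 ≤ F Q := hK0'.le.trans (Finset.le_sup' (fun K => l K Q) hK0)
  obtain ⟨x, hx, hx0⟩ := intermediate_value_Icc hPQ hFc.continuousOn ⟨h1, h2⟩
  refine ⟨x, hx.1, hx.2, fun K hK => hx0 ▸ Finset.le_sup' (fun K => l K x) hK, ?_⟩
  obtain ⟨K, hK, hKe⟩ := Finset.exists_mem_eq_sup' hne (fun K => l K x)
  exact ⟨K, hK, by rw [← hKe]; exact hx0⟩

theorem bE_ind_empty (A : Finset α) (μ : Finset α → ℝ) : bE A μ (ind ∅) = bE A μ (fun _ => 1) := by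
  refine bE_congr fun s _ => ?_
  simp [ind]

theorem bE_lin (A : Finset α) (u v : ℝ) (μ ν g : Finset α → ℝ) :
    bE A (fun s => u * μ s + v * ν s) g = u * bE A μ g + v * bE A ν g := by
  unfold bE; rw [Finset.mul_sum, Finset.mul_sum, ← Finset.sum_add_distrib]
  exact Finset.sum_congr rfl fun s _ => by ring

theorem two_point_real {a b c d : ℝ} (hc : 0 ≤ c) (hd : 0 ≤ d) (ha : 0 ≤ a) (hb : 0 ≤ b)
    (h1 : a ≤ c) (h2 : b ≤ c) (h : a * b ≤ c * d) :
    a + b ≤ c + d := by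
  lift a to NNReal using ha
  lift b to NNReal using hb
  lift c to NNReal using hc
  lift d to NNReal using hd
  exact_mod_cast two_point_nn (by exact_mod_cast h1) (by exact_mod_cast h2) (by exact_mod_cast h)

theorem ind_insert_insert {A K s : Finset α} {i : α} (hi : i ∉ A) (hK : K ⊆ A) :
    ind (insert i K) (insert i s) = ind K s := by
  unfold ind
  have : insert i K ⊆ insert i s ↔ K ⊆ s := by
    constructor
    · intro h j hj
      have := h (Finset.mem_insert_of_mem hj)
      rcases Finset.mem_insert.1 this with rfl | h'
      · exact absurd (hK hj) hi
      · exact h'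
    · exact Finset.insert_subset_insert i
  simp [this]

theorem ind_insert_right {A K s : Finset α} {i : α} (hi : i ∉ A) (hK : K ⊆ A) :
    ind K (insert i s) = ind K s := by
  unfold ind
  have : K ⊆ insert i s ↔ K ⊆ s := by
    constructor
    · intro h j hj
      rcases Finset.mem_insert.1 (h hj) with rfl | h'
      · exact absurd (hK hj) hi
      · exact h'
    · intro h; exact h.trans (Finset.subset_insert i s)
  simp [this]

theorem ind_insert_left {A K s : Finset α} {i : α} (hi : i ∉ A) (hs : s ⊆ A) :
    ind (insert i K) s = 0 := by
  unfold ind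
  have : ¬ insert i K ⊆ s := fun h => hi (hs (h (Finset.mem_insert_self i K)))
  simp [this]

theorem b_gen' (A : Finset α) (i : α) (hi : i ∉ A) (IH : ∀ T, T ⊂ insert i A → BConcl T)
    (ν0 ν1 : Finset α → ℝ) (p : α → ℝ) (h0 : ∀ i, 0 ≤ p i) (h1 : ∀ i, p i ≤ 1)
    (hp : ∀ j ∈ insert i A, 0 < p j)
    (n0 : ∀ s, 0 ≤ ν0 s) (n1 : ∀ s, 0 ≤ ν1 s)
    (L00 : ∀ s ⊆ A, ∀ t ⊆ A, ν0 s * ν0 t ≤ ν0 (s ∩ t) * ν0 (s ∪ t))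
    (L11 : ∀ s ⊆ A, ∀ t ⊆ A, ν1 s * ν1 t ≤ ν1 (s ∩ t) * ν1 (s ∪ t))
    (L01 : ∀ s ⊆ A, ∀ t ⊆ A, ν0 s * ν1 t ≤ ν0 (s ∩ t) * ν1 (s ∪ t))
    (M0 : bE A ν0 (fun _ => 1) = 1) (M1 : bE A ν1 (fun _ => 1) = 1)
    (P : ℝ) (P0 : 0 < P) (Pp : P ≤ p i)
    (O : ∀ K ⊆ A, (1 - P) * bE A ν0 (ind K) + P * bE A ν1 (ind K) ≤ ∏ j ∈ K, p j)
    (O1 : ∀ K ⊆ A, P * bE A ν1 (ind K) ≤ p i * ∏ j ∈ K, p j)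
    (g : Finset α → ℝ) (g0 : ∀ s, 0 ≤ g s) (gm : Monotone g) :
    (1 - P) * bE A ν0 g + P * bE A ν1 (fun s => g (insert i s)) ≤
    (1 - p i) * bEB A p g + p i * bEB A p (fun s => g (insert i s)) := by
  have iA : BConcl A := IH A (Finset.ssubset_insert hi)
  have gim : Monotone (fun s => g (insert i s)) := fun s t h => gm (Finset.insert_subset_insert i h)
  have F : ∀ h : Finset α → ℝ, (∀ s, 0 ≤ h s) → Monotone h → bE A ν0 h ≤ bE A ν1 h := by
    intro h hn hm
    have : bE A ν0 h * bE A ν1 (fun _ => 1) ≤ bE A ν0 (fun _ => 1) * bE A ν1 h := by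
      refine bE_ff A _ _ _ _ (fun s => mul_nonneg (n0 _) (hn _)) (fun s => by simpa using n1 _)
        (fun s => by simpa using n0 _) (fun s => mul_nonneg (n1 _) (hn _)) ?_
      intro s hs t ht
      have a := L01 s hs t ht
      have b : h s ≤ h (s ∪ t) := hm Finset.subset_union_left
      calc ν0 s * h s * (ν1 t * 1) = (ν0 s * ν1 t) * h s := by ring
        _ ≤ (ν0 (s ∩ t) * ν1 (s ∪ t)) * h (s ∪ t) :=
          mul_le_mul a b (hn _) (mul_nonneg (n0 _) (n1 _))
        _ = _ := by ring
    rwa [M0, M1, one_mul, mul_one] at this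
  have pi0 : 0 < p i := hp i (Finset.mem_insert_self _ _)
  have hP1 : P ≤ 1 := Pp.trans (h1 i)
  set E0 := bE A ν0 g
  set E1 := bE A ν1 (fun s => g (insert i s))
  set e0 := bEB A p g
  set e1 := bEB A p (fun s => g (insert i s))
  -- at zero
  have Phi0 : E0 ≤ e0 := by
    have H : BHyp A ν0 p := by
      refine ⟨n0, L00, fun K hK => ?_⟩
      rw [M0, one_mul]
      have := F (ind K) (ind_nonneg K) (ind_mono K)
      have := O K hK
      nlinarith
    have := iA ν0 p h0 h1 H g g0 gm
    rwa [M0, one_mul] at this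
  -- suffices: good x
  suffices hx : ∃ x, P ≤ x ∧ (1 - x) * E0 + x * E1 ≤ (1 - p i / P * x) * e0 + p i / P * x * e1 by
    obtain ⟨x, hPx, hx⟩ := hx
    have x0 : 0 < x := P0.trans_le hPx
    have k1 : (1 - P / x) * E0 ≤ (1 - P / x) * e0 :=
      mul_le_mul_of_nonneg_left Phi0 (by rw [sub_nonneg, div_le_one x0]; exact hPx)
    have k2 : P / x * ((1 - x) * E0 + x * E1) ≤ P / x * ((1 - p i / P * x) * e0 + p i / P * x * e1) :=
      mul_le_mul_of_nonneg_left hx (by positivity)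
    have r1 : (1 - P / x) * E0 + P / x * ((1 - x) * E0 + x * E1) = (1 - P) * E0 + P * E1 := by
      field_simp; ring
    have r2 : (1 - P / x) * e0 + P / x * ((1 - p i / P * x) * e0 + p i / P * x * e1) =
        (1 - p i) * e0 + p i * e1 := by
      field_simp; ring
    linarith
  set Q := P / p i with hQ
  have Q0 : 0 < Q := by positivity
  have hPQ : P ≤ Q := by rw [hQ, le_div_iff₀ pi0]; nlinarith [h1 i]
  have hQ1 : Q ≤ 1 := by rw [hQ, div_le_one pi0]; exact Pp
  have feas_empty : ∀ x : ℝ, (1 - x) * bE A ν0 (ind ∅) + x * bE A ν1 (ind ∅) ≤ ∏ j ∈ (∅ : Finset α), p j := by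
    intro x; rw [bE_ind_empty, bE_ind_empty, M0, M1]; simp
  rcases crossing (A.powerset.erase ∅)
    (fun K x => (1 - x) * bE A ν0 (ind K) + x * bE A ν1 (ind K) - ∏ j ∈ K, p j)
    (fun K => by fun_prop) P Q hPQ (fun K hK => by
      have := O K (Finset.mem_powerset.1 (Finset.mem_of_mem_erase hK)); linarith) with hQf | ⟨x, hPx, hxQ, hf, T, hT, hTt⟩
  · refine ⟨Q, hPQ, ?_⟩
    have hk : p i / P * Q = 1 := by rw [hQ]; field_simp
    rw [hk]
    have H : BHyp A (fun s => (1 - Q) * ν0 s + Q * ν1 s) p := by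
      refine ⟨fun s => add_nonneg (mul_nonneg (by linarith) (n0 s)) (mul_nonneg Q0.le (n1 s)), ?_, ?_⟩
      · intro s hs t ht
        have a1 := L00 s hs t ht
        have a2 := L11 s hs t ht
        have a3 := L01 s hs t ht
        have a4 := L01 t ht s hs
        rw [Finset.inter_comm, Finset.union_comm] at a4
        have a5 : ν0 s * ν1 t + ν0 t * ν1 s ≤ ν0 (s ∩ t) * ν1 (s ∪ t) + ν1 (s ∩ t) * ν0 (s ∪ t) := by
          refine two_point_real (mul_nonneg (n0 _) (n1 _)) (mul_nonneg (n1 _) (n0 _)) (mul_nonneg (n0 _) (n1 _))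
            (mul_nonneg (n0 _) (n1 _)) a3 a4 ?_
          calc ν0 s * ν1 t * (ν0 t * ν1 s) = (ν0 s * ν0 t) * (ν1 s * ν1 t) := by ring
            _ ≤ (ν0 (s ∩ t) * ν0 (s ∪ t)) * (ν1 (s ∩ t) * ν1 (s ∪ t)) :=
              mul_le_mul a1 a2 (mul_nonneg (n1 _) (n1 _)) (mul_nonneg (n0 _) (n0 _))
            _ = _ := by ring
        have b1 := mul_le_mul_of_nonneg_left a1 (mul_self_nonneg (1 - Q))
        have b2 := mul_le_mul_of_nonneg_left a2 (mul_self_nonneg Q)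
        have b3 := mul_le_mul_of_nonneg_left a5 (mul_nonneg (sub_nonneg.2 hQ1) Q0.le)
        linarith
      · intro K hK
        rw [bE_lin, bE_lin, M0, M1]
        by_cases hKe : K = ∅
        · subst hKe; have := feas_empty Q; linarith
        · have := hQf K (Finset.mem_erase.2 ⟨hKe, Finset.mem_powerset.2 hK⟩)
          linarith
    have := iA _ p h0 h1 H (fun s => g (insert i s)) (fun s => g0 _) gim
    rw [bE_lin, bE_lin, M0, M1] at this
    have b : E0 ≤ bE A ν0 (fun s => g (insert i s)) :=
      bE_le fun s _ => mul_le_mul_of_nonneg_left (gm (Finset.subset_insert i s)) (n0 s)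
    have b' := mul_le_mul_of_nonneg_left b (sub_nonneg.2 hQ1)
    linarith
  · refine ⟨x, hPx, ?_⟩
    have x0 : 0 < x := P0.trans_le hPx
    have x1 : x ≤ 1 := hxQ.trans hQ1
    have hTA : T ⊆ A := Finset.mem_powerset.1 (Finset.mem_of_mem_erase hT)
    have hTne : T ≠ ∅ := Finset.ne_of_mem_erase hT
    set q : ℝ := p i / P * x with hq
    have q0 : 0 ≤ q := by positivity
    have q1 : q ≤ 1 := by
      have : q ≤ p i / P * Q := mul_le_mul_of_nonneg_left hxQ (by positivity)
      have hk : p i / P * Q = 1 := by rw [hQ]; field_simp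
      linarith
    set p' : α → ℝ := Function.update p i q with hp'
    have p'i : p' i = q := by simp [hp']
    have p'j : ∀ j ∈ A, p' j = p j := fun j hj => by
      have : j ≠ i := fun h => hi (h ▸ hj)
      simp [hp', this]
    have h0' : ∀ j, 0 ≤ p' j := fun j => by
      by_cases h : j = i
      · subst h; rw [p'i]; exact q0
      · simp [hp', h, h0 j]
    have h1' : ∀ j, p' j ≤ 1 := fun j => by
      by_cases h : j = i
      · subst h; rw [p'i]; exact q1
      · simp [hp', h, h1 j]
    have prodp' : ∀ K ⊆ A, ∏ j ∈ K, p' j = ∏ j ∈ K, p j := fun K hK =>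
      Finset.prod_congr rfl fun j hj => p'j j (hK hj)
    set ms : Finset α → ℝ := fun s => if i ∈ s then x * ν1 (s.erase i) else (1 - x) * ν0 s with hms
    have ms0 : ∀ s ⊆ A, ms s = (1 - x) * ν0 s := fun s hs => by
      have : i ∉ s := fun h => hi (hs h)
      simp [hms, this]
    have ms1 : ∀ s ⊆ A, ms (insert i s) = x * ν1 s := fun s hs => by
      have : i ∉ s := fun h => hi (hs h)
      simp [hms, this]
    have Ems : ∀ h, bE (insert i A) ms h = (1 - x) * bE A ν0 h + x * bE A ν1 (fun s => h (insert i s)) := by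
      intro h
      rw [bE_insert hi]
      congr 1
      · unfold bE; rw [Finset.mul_sum]
        exact Finset.sum_congr rfl fun s hs => by rw [ms0 s (Finset.mem_powerset.1 hs)]; ring
      · unfold bE; rw [Finset.mul_sum]
        refine Finset.sum_congr rfl fun s hs => ?_
        show ms (insert i s) * h (insert i s) = _
        rw [ms1 s (Finset.mem_powerset.1 hs)]; ring
    have msmass : bE (insert i A) ms (fun _ => 1) = 1 := by
      rw [Ems, M0, M1]; ring
    have EK : ∀ K ⊆ A, bE (insert i A) ms (ind K) = (1 - x) * bE A ν0 (ind K) + x * bE A ν1 (ind K) := by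
      intro K hK
      rw [Ems]
      simp only [ind_insert_right hi hK]
    have EKi : ∀ K ⊆ A, bE (insert i A) ms (ind (insert i K)) = x * bE A ν1 (ind K) := by
      intro K hK
      rw [Ems]
      simp only [ind_insert_insert hi hK]
      have : bE A ν0 (ind (insert i K)) = 0 := by
        unfold bE
        refine Finset.sum_eq_zero fun s hs => ?_
        rw [ind_insert_left hi (Finset.mem_powerset.1 hs), mul_zero]
      rw [this, mul_zero, zero_add]
    have feas : ∀ K ⊆ A, (1 - x) * bE A ν0 (ind K) + x * bE A ν1 (ind K) ≤ ∏ j ∈ K, p j := by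
      intro K hK
      by_cases hKe : K = ∅
      · subst hKe; exact feas_empty x
      · have := hf K (Finset.mem_erase.2 ⟨hKe, Finset.mem_powerset.2 hK⟩)
        linarith
    have cases_sub : ∀ s ⊆ insert i A, s ⊆ A ∨ ∃ s' ⊆ A, s = insert i s' := by
      intro s hs
      by_cases h : i ∈ s
      · right
        refine ⟨s.erase i, ?_, (Finset.insert_erase h).symm⟩
        intro j hj
        have hj' := Finset.mem_erase.1 hj
        rcases Finset.mem_insert.1 (hs hj'.2) with h' | h'
        · exact absurd h' hj'.1
        · exact h'
      · left
        intro j hj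
        rcases Finset.mem_insert.1 (hs hj) with h' | h'
        · exact absurd (h' ▸ hj) h
        · exact h'
    have H : BHyp (insert i A) ms p' := by
      refine ⟨fun s => ?_, ?_, ?_⟩
      · simp only [hms]; split_ifs
        · exact mul_nonneg x0.le (n1 _)
        · exact mul_nonneg (by linarith) (n0 _)
      · intro s hs0 t ht0
        have x1' : 0 ≤ 1 - x := by linarith
        rcases cases_sub s hs0 with hs | ⟨s, hs, rfl⟩ <;> rcases cases_sub t ht0 with ht | ⟨t, ht, rfl⟩
        · rw [ms0 s hs, ms0 t ht, ms0 _ (Finset.inter_subset_left.trans hs), ms0 _ (Finset.union_subset hs ht)]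
          have := mul_le_mul_of_nonneg_left (L00 s hs t ht) (mul_nonneg x1' x1')
          linarith
        · have hh : i ∉ s := fun h => hi (hs h)
          rw [Finset.inter_insert_of_notMem hh, Finset.union_insert]
          rw [ms0 s hs, ms1 t ht, ms0 _ (Finset.inter_subset_left.trans hs), ms1 _ (Finset.union_subset hs ht)]
          have := mul_le_mul_of_nonneg_left (L01 s hs t ht) (mul_nonneg x1' x0.le)
          linarith
        · have hh : i ∉ t := fun h => hi (ht h)
          rw [Finset.insert_inter_of_notMem hh, Finset.insert_union]
          rw [ms1 s hs, ms0 t ht, ms0 _ (Finset.inter_subset_left.trans hs), ms1 _ (Finset.union_subset hs ht)]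
          have a := L01 t ht s hs
          rw [Finset.inter_comm, Finset.union_comm] at a
          have := mul_le_mul_of_nonneg_left a (mul_nonneg x1' x0.le)
          linarith
        · rw [← Finset.insert_inter_distrib, ← Finset.insert_union_distrib]
          rw [ms1 s hs, ms1 t ht, ms1 _ (Finset.inter_subset_left.trans hs), ms1 _ (Finset.union_subset hs ht)]
          have := mul_le_mul_of_nonneg_left (L11 s hs t ht) (mul_nonneg x0.le x0.le)
          linarith
      · intro K hK0
        rw [msmass, one_mul]
        rcases cases_sub K hK0 with hK | ⟨K, hK, rfl⟩
        · rw [EK K hK, prodp' K hK]; exact feas K hK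
        · rw [EKi K hK, Finset.prod_insert (fun h => hi (hK h)), prodp' K hK, p'i]
          have := mul_le_mul_of_nonneg_left (O1 K hK) (show 0 ≤ x / P by positivity)
          have e1 : x / P * (P * bE A ν1 (ind K)) = x * bE A ν1 (ind K) := by field_simp
          have e2 : x / P * (p i * ∏ j ∈ K, p j) = q * ∏ j ∈ K, p j := by rw [hq]; field_simp
          linarith
    have hTi : T ⊆ insert i A := hTA.trans (Finset.subset_insert i A)
    have hTR : T ∪ (insert i A \ T) = insert i A := Finset.union_sdiff_of_subset hTi
    have key := b_tight T (insert i A \ T) Finset.disjoint_sdiff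
      (IH T (Finset.ssubset_of_subset_of_ssubset hTA (Finset.ssubset_insert hi)))
      (IH _ (Finset.sdiff_ssubset hTi (Finset.nonempty_iff_ne_empty.2 hTne)))
      ms p' h0' h1' (by rw [hTR]; exact H) (by rw [hTR]; exact msmass)
      (by rw [hTR, EK T hTA, prodp' T hTA]; linarith)
      (by rw [prodp' T hTA]; exact Finset.prod_pos fun j hj => hp j (hTi hj)) g g0 gm
    rw [hTR, Ems, bEB_insert hi, p'i, bEB_congr g p'j, bEB_congr _ p'j] at key
    exact key

theorem b_main (A : Finset α) : BConcl A := by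
  induction A using Finset.strongInduction with
  | H A0 IH =>
  intro μ p h0 h1 H g g0 gm
  rcases A0.eq_empty_or_nonempty with rfl | hne
  · simp [bE, bEB, ber]
  -- pick i
  obtain ⟨i, hiA, hii⟩ : ∃ i ∈ A0, (∀ j ∈ A0, 0 < p j) ∨ p i = 0 := by
    by_cases h : ∀ j ∈ A0, 0 < p j
    · obtain ⟨i, hi⟩ := hne; exact ⟨i, hi, Or.inl h⟩
    · push Not at h
      obtain ⟨i, hi, hle⟩ := h
      exact ⟨i, hi, Or.inr (le_antisymm hle (h0 i))⟩
  obtain ⟨A, hi, rfl⟩ : ∃ A, i ∉ A ∧ A0 = insert i A :=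
    ⟨A0.erase i, Finset.notMem_erase i A0, (Finset.insert_erase hiA).symm⟩
  have iA : BConcl A := IH A (Finset.ssubset_insert hi)
  have gim : Monotone (fun s => g (insert i s)) := fun s t h => gm (Finset.insert_subset_insert i h)
  set μ1 : Finset α → ℝ := fun s => μ (insert i s) with hμ1
  have n1 : ∀ s, 0 ≤ μ1 s := fun s => H.nn _
  set m0 := bE A μ (fun _ => 1) with hm0
  set m1 := bE A μ1 (fun _ => 1) with hm1
  have m0n : 0 ≤ m0 := bE_nonneg H.nn (fun _ => zero_le_one)
  have m1n : 0 ≤ m1 := bE_nonneg n1 (fun _ => zero_le_one)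
  have hc : bE (insert i A) μ (fun _ => 1) = m0 + m1 := bE_insert hi _ _
  have L00 : ∀ s ⊆ A, ∀ t ⊆ A, μ s * μ t ≤ μ (s ∩ t) * μ (s ∪ t) := fun s hs t ht =>
    H.lsm s (hs.trans (Finset.subset_insert i A)) t (ht.trans (Finset.subset_insert i A))
  have L11 : ∀ s ⊆ A, ∀ t ⊆ A, μ1 s * μ1 t ≤ μ1 (s ∩ t) * μ1 (s ∪ t) := fun s hs t ht => by
    have := H.lsm _ (Finset.insert_subset_insert i hs) _ (Finset.insert_subset_insert i ht)
    rwa [← Finset.insert_inter_distrib, ← Finset.insert_union_distrib] at this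
  have L01 : ∀ s ⊆ A, ∀ t ⊆ A, μ s * μ1 t ≤ μ (s ∩ t) * μ1 (s ∪ t) := fun s hs t ht => by
    have := H.lsm s (hs.trans (Finset.subset_insert i A)) _ (Finset.insert_subset_insert i ht)
    rwa [Finset.inter_insert_of_notMem (fun h => hi (hs h)), Finset.union_insert] at this
  have O : ∀ K ⊆ A, bE A μ (ind K) + bE A μ1 (ind K) ≤ (m0 + m1) * ∏ j ∈ K, p j := by
    intro K hK
    have := H.orth K (hK.trans (Finset.subset_insert i A))
    rw [hc, bE_insert hi] at this
    simp only [ind_insert_right hi hK] at this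
    exact this
  have O1 : ∀ K ⊆ A, bE A μ1 (ind K) ≤ (m0 + m1) * (p i * ∏ j ∈ K, p j) := by
    intro K hK
    have := H.orth (insert i K) (Finset.insert_subset_insert i hK)
    rw [hc, bE_insert hi, Finset.prod_insert (fun h => hi (hK h))] at this
    simp only [ind_insert_insert hi hK] at this
    have h2 : bE A μ (ind (insert i K)) = 0 := by
      unfold bE
      refine Finset.sum_eq_zero fun s hs => ?_
      rw [ind_insert_left hi (Finset.mem_powerset.1 hs), mul_zero]
    rw [h2, zero_add] at this
    exact this
  have O1e : m1 ≤ (m0 + m1) * p i := by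
    have := O1 ∅ (Finset.empty_subset _)
    rw [bE_ind_empty] at this; simpa using this
  rw [hc, bEB_insert hi, bE_insert hi]
  have e01 : bEB A p g ≤ bEB A p (fun s => g (insert i s)) :=
    bEB_mono h0 h1 A fun s => gm (Finset.subset_insert i s)
  have zero_of : ∀ ν : Finset α → ℝ, (∀ s, 0 ≤ ν s) → bE A ν (fun _ => 1) = 0 → ∀ h, bE A ν h = 0 := by
    intro ν hν hz h
    unfold bE at hz
    rw [Finset.sum_eq_zero_iff_of_nonneg (fun s _ => by simpa using hν s)] at hz
    exact Finset.sum_eq_zero fun s hs => by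
      have := hz s hs; simp at this; simp [this]
  by_cases hm1z : m1 = 0
  · have z := zero_of μ1 n1 hm1z
    rw [z, add_zero, hm1z, add_zero]
    have HA : BHyp A μ p := ⟨H.nn, L00, fun K hK => by
      have := O K hK
      rw [z, hm1z] at this; simpa using this⟩
    have k := iA μ p h0 h1 HA g g0 gm
    refine k.trans ?_
    refine mul_le_mul_of_nonneg_left ?_ m0n
    nlinarith [h0 i]
  have hm1p : 0 < m1 := lt_of_le_of_ne m1n (Ne.symm hm1z)
  by_cases hm0z : m0 = 0
  · have z := zero_of μ H.nn hm0z
    rw [z, zero_add, hm0z, zero_add]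
    have pi1 : p i = 1 := by
      rw [hm0z, zero_add] at O1e
      have : 1 ≤ p i := by nlinarith
      exact le_antisymm (h1 i) this
    have HA : BHyp A μ1 p := ⟨n1, L11, fun K hK => by
      have := O K hK
      rw [z, hm0z] at this; simpa using this⟩
    have k := iA μ1 p h0 h1 HA _ (fun s => g0 _) gim
    rw [pi1]
    refine k.trans (le_of_eq ?_)
    ring
  have hm0p : 0 < m0 := lt_of_le_of_ne m0n (Ne.symm hm0z)
  have hpp : ∀ j ∈ insert i A, 0 < p j := by
    rcases hii with h | h
    · exact h
    · rw [h] at O1e; linarith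
  have c0 : 0 < m0 + m1 := by positivity
  have sc : ∀ (ν h : Finset α → ℝ) (m : ℝ), bE A (fun s => ν s / m) h = bE A ν h / m := by
    intro ν h m; unfold bE; rw [Finset.sum_div]
    exact Finset.sum_congr rfl fun s _ => by ring
  have scl : ∀ a b c d m n : ℝ, 0 < m → 0 < n → a * b ≤ c * d → a / m * (b / n) ≤ c / m * (d / n) := by
    intro a b c d m n hm hn h
    rw [div_mul_div_comm, div_mul_div_comm]
    exact div_le_div_of_nonneg_right h (by positivity)
  have key := b_gen' A i hi IH (fun s => μ s / m0) (fun s => μ1 s / m1) p h0 h1 hpp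
    (fun s => div_nonneg (H.nn s) m0n) (fun s => div_nonneg (n1 s) m1n)
    (fun s hs t ht => scl _ _ _ _ _ _ hm0p hm0p (L00 s hs t ht))
    (fun s hs t ht => scl _ _ _ _ _ _ hm1p hm1p (L11 s hs t ht))
    (fun s hs t ht => scl _ _ _ _ _ _ hm0p hm1p (L01 s hs t ht))
    (by rw [sc]; exact div_self hm0z) (by rw [sc]; exact div_self hm1z)
    (m1 / (m0 + m1)) (by positivity) (by rw [div_le_iff₀ c0]; linarith)
    (fun K hK => by
      rw [sc, sc]
      have := O K hK
      have e : (1 - m1 / (m0 + m1)) * (bE A μ (ind K) / m0) + m1 / (m0 + m1) * (bE A μ1 (ind K) / m1) =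
        (bE A μ (ind K) + bE A μ1 (ind K)) / (m0 + m1) := by
        field_simp; ring
      rw [e, div_le_iff₀ c0]; linarith)
    (fun K hK => by
      rw [sc]
      have := O1 K hK
      have e : m1 / (m0 + m1) * (bE A μ1 (ind K) / m1) = (bE A μ1 (ind K)) / (m0 + m1) := by
        field_simp
      rw [e, div_le_iff₀ c0]; linarith) g g0 gm
  rw [sc, sc] at key
  have := mul_le_mul_of_nonneg_left key c0.le
  refine le_trans (le_of_eq ?_) this
  field_simp; ring

end Binary

theorem bEB_ind {α : Type*} (A K : Finset α) (p : α → ℝ) (hK : K ⊆ A) :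
    bEB A p (ind K) = ∏ j ∈ K, p j := by
  induction A using Finset.induction generalizing K with
  | empty =>
    have : K = ∅ := Finset.subset_empty.1 hK
    subst this
    simp [bEB, bE, ber, ind]
  | insert i A hi ih =>
    rw [bEB_insert hi]
    by_cases h : i ∈ K
    · obtain ⟨K', hK', rfl⟩ : ∃ K', i ∉ K' ∧ K = insert i K' :=
        ⟨K.erase i, Finset.notMem_erase i K, (Finset.insert_erase h).symm⟩
      have hKA : K' ⊆ A := (Finset.insert_subset_insert_iff hK').1 hK
      have e : bEB A p (ind (insert i K')) = 0 := by
        unfold bEB bE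
        refine Finset.sum_eq_zero fun s hs => ?_
        rw [ind_insert_left hi (Finset.mem_powerset.1 hs), mul_zero]
      simp only [ind_insert_insert hi hKA]
      rw [e, Finset.prod_insert hK', mul_zero, zero_add]
      exact congrArg _ (ih K' hKA)
    · have hKA : K ⊆ A := (Finset.subset_insert_iff_of_notMem h).1 hK
      simp only [ind_insert_right hi hKA]
      have := ih K hKA
      rw [this]; ring

theorem exists_factors (F : ℝ → ℝ) (hF : Antitone F) (F0 : ∀ t, 0 ≤ F t) (F1 : ∀ t, F t ≤ 1)
    (T : Finset ℝ) : ∃ p : ℝ → ℝ, (∀ t, 0 ≤ p t) ∧ (∀ t, p t ≤ 1) ∧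
      ∀ s ∈ T, ∏ t ∈ T.filter (fun t => t ≤ s), p t = F s := by
  induction T using Finset.induction_on_max with
  | empty => exact ⟨fun _ => 1, by simp, by simp, by simp⟩
  | insert a T ha ih =>
    obtain ⟨p, p0, p1, hp⟩ := ih
    have hkey : ∃ q, 0 ≤ q ∧ q ≤ 1 ∧ q * ∏ t ∈ T, p t = F a := by
      rcases T.eq_empty_or_nonempty with rfl | hne
      · exact ⟨F a, F0 a, F1 a, by simp⟩
      · have hm := T.max'_mem hne
        have e : ∏ t ∈ T, p t = F (T.max' hne) := by
          rw [← hp _ hm]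
          congr 1
          rw [Finset.filter_true_of_mem]
          intro t ht; exact T.le_max' t ht
        have hle : F a ≤ F (T.max' hne) := hF (ha _ hm).le
        refine ⟨F a / F (T.max' hne), div_nonneg (F0 _) (F0 _), div_le_one_of_le₀ hle (F0 _), ?_⟩
        rw [e]
        by_cases hz : F (T.max' hne) = 0
        · rw [hz, mul_zero]; rw [hz] at hle; exact (le_antisymm hle (F0 a)).symm
        · field_simp
    obtain ⟨q, q0, q1, hq⟩ := hkey
    have haT : a ∉ T := fun h => lt_irrefl _ (ha a h)
    refine ⟨Function.update p a q, fun t => ?_, fun t => ?_, fun s hs => ?_⟩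
    · by_cases h : t = a
      · subst h; simpa using q0
      · simpa [h] using p0 t
    · by_cases h : t = a
      · subst h; simpa using q1
      · simpa [h] using p1 t
    · have cong : ∀ U ⊆ T, ∏ t ∈ U, Function.update p a q t = ∏ t ∈ U, p t := fun U hU =>
        Finset.prod_congr rfl fun t ht => by
          have : t ≠ a := fun h => haT (h ▸ hU ht)
          simp [this]
      rcases Finset.mem_insert.1 hs with rfl | hs
      · rw [Finset.filter_true_of_mem, Finset.prod_insert haT, cong T (subset_refl _)]
        · simpa using hq
        · intro t ht
          rcases Finset.mem_insert.1 ht with rfl | ht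
          · exact le_rfl
          · exact (ha t ht).le
      · rw [Finset.filter_insert, if_neg (not_le.2 (ha s hs)), cong _ (Finset.filter_subset _ _)]
        exact hp s hs

section Dom
variable {ι : Type*} [Fintype ι]

/-- coordinate bits -/
noncomputable def gA (T : Finset ℝ) : Finset (ι × ℝ) := Finset.univ ×ˢ T
noncomputable def bits (T : Finset ℝ) (x : ι → ℝ) : Finset (ι × ℝ) :=
  (gA T).filter fun q => q.2 ≤ x q.1

theorem bits_sub (T : Finset ℝ) (x : ι → ℝ) : bits T x ⊆ gA T := Finset.filter_subset _ _

theorem mem_bits {T : Finset ℝ} {x : ι → ℝ} {q : ι × ℝ} : q ∈ bits T x ↔ q.2 ∈ T ∧ q.2 ≤ x q.1 := by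
  simp [bits, gA]

theorem bits_sup (T : Finset ℝ) (x y : ι → ℝ) : bits T (x ⊔ y) = bits T x ∪ bits T y := by
  ext q; simp only [mem_bits, Finset.mem_union, Pi.sup_apply, le_sup_iff]; tauto

theorem bits_inf (T : Finset ℝ) (x y : ι → ℝ) : bits T (x ⊓ y) = bits T x ∩ bits T y := by
  ext q; simp only [mem_bits, Finset.mem_inter, Pi.inf_apply, le_inf_iff]; tauto

theorem bits_le_iff {T : Finset ℝ} {k x : ι → ℝ} (hk : ∀ i, k i ∈ T) : bits T k ⊆ bits T x ↔ k ≤ x := by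
  constructor
  · intro h i
    exact (mem_bits.1 (h (mem_bits.2 ⟨hk i, le_rfl⟩ : (i, k i) ∈ bits T k))).2
  · intro h q hq
    rw [mem_bits] at *
    exact ⟨hq.1, hq.2.trans (h _)⟩

theorem measurable_bits (T : Finset ℝ) (s : Finset (ι × ℝ)) :
    MeasurableSet (bits (ι := ι) T ⁻¹' {s}) := by
  by_cases hs : s ⊆ gA T
  · have : bits (ι := ι) T ⁻¹' {s} = ⋂ q ∈ gA (ι := ι) T, {x | q.2 ≤ x q.1 ↔ q ∈ s} := by
      ext x
      simp only [Set.mem_preimage, Set.mem_singleton_iff, Set.mem_iInter, Set.mem_ofPred_eq]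
      constructor
      · rintro rfl q hq
        simp [bits, hq]
      · intro h
        ext q
        constructor
        · intro hq
          exact (h q (bits_sub T x hq)).1 (mem_bits.1 hq).2
        · intro hq
          exact Finset.mem_filter.2 ⟨hs hq, (h q (hs hq)).2 hq⟩
    rw [this]
    refine Finset.measurableSet_biInter _ fun q _ => ?_
    by_cases hq : q ∈ s
    · simp only [hq, iff_true]
      exact measurableSet_le measurable_const (measurable_pi_apply _)
    · simp only [hq, iff_false, not_le]
      exact measurableSet_lt (measurable_pi_apply _) measurable_const
  · have : bits (ι := ι) T ⁻¹' {s} = ∅ := by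
      ext x
      simp only [Set.mem_preimage, Set.mem_singleton_iff, Set.mem_empty_iff_false, iff_false]
      rintro rfl
      exact hs (bits_sub T x)
    rw [this]; exact MeasurableSet.empty

theorem bE_bits (μ : Measure (ι → ℝ)) [IsFiniteMeasure μ] (T : Finset ℝ) (Q : Finset (ι × ℝ) → Prop) :
    bE (gA T) (fun s => μ.real (bits T ⁻¹' {s})) (fun s => if Q s then 1 else 0) =
      μ.real {x | Q (bits T x)} := by
  unfold bE
  simp only [mul_ite, mul_one, mul_zero]
  rw [← Finset.sum_filter, sum_measureReal_preimage_singleton _ (fun y _ => measurable_bits T y)]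
  congr 1
  ext x
  simp [bits_sub]

/-- expectation of unions: Bernoulli vs product -/
theorem bEB_inclexcl (ν : Measure (ι → ℝ)) [IsFiniteMeasure ν] (T : Finset ℝ) (p : ι × ℝ → ℝ)
    (h : ∀ k : ι → ℝ, (∀ i, k i ∈ T) → ν.real (Set.Ici k) = bEB (gA T) p (ind (bits T k)))
    (𝒦 : Finset (ι → ℝ)) (h𝒦 : ∀ k ∈ 𝒦, ∀ i, k i ∈ T) :
    bEB (gA T) p (fun s => if ∃ k ∈ 𝒦, bits T k ⊆ s then 1 else 0) = ν.real (⋃ k ∈ 𝒦, Set.Ici k) ∧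
    ∀ k0 : ι → ℝ, (∀ i, k0 i ∈ T) → bEB (gA T) p
      (fun s => (if ∃ k ∈ 𝒦, bits T k ⊆ s then 1 else 0) * ind (bits T k0) s) =
      ν.real ((⋃ k ∈ 𝒦, Set.Ici k) ∩ Set.Ici k0) := by
  have lin : ∀ f1 f2 f3 : Finset (ι × ℝ) → ℝ, bEB (gA T) p (fun s => f1 s + f2 s - f3 s) =
      bEB (gA T) p f1 + bEB (gA T) p f2 - bEB (gA T) p f3 := by
    intro f1 f2 f3
    unfold bEB bE
    rw [← Finset.sum_add_distrib, ← Finset.sum_sub_distrib]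
    exact Finset.sum_congr rfl fun s _ => by ring
  have meas : ∀ 𝒦 : Finset (ι → ℝ), MeasurableSet (⋃ k ∈ 𝒦, Set.Ici k) := fun 𝒦 =>
    Finset.measurableSet_biUnion _ fun k _ => isClosed_Ici.measurableSet
  have mIci : ∀ k : ι → ℝ, MeasurableSet (Set.Ici k) := fun k => isClosed_Ici.measurableSet
  have ie : ∀ A B : Set (ι → ℝ), MeasurableSet B → ν.real (A ∪ B) = ν.real A + ν.real B - ν.real (A ∩ B) := by
    intro A B hB
    have := measureReal_union_add_inter (μ := ν) (s := A) (t := B) hB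
    linarith
  have indsup : ∀ (k k0 : ι → ℝ) s, ind (bits T k) s * ind (bits T k0) s = ind (bits T (k ⊔ k0)) s := by
    intro k k0 s
    unfold ind
    rw [bits_sup]
    by_cases h1 : bits T k ⊆ s <;> by_cases h2 : bits T k0 ⊆ s <;> simp [h1, h2, Finset.union_subset_iff]
  induction 𝒦 using Finset.induction with
  | empty => simp [bEB, bE]
  | insert k 𝒦 hk ih =>
    obtain ⟨ih1, ih2⟩ := ih fun k hk => h𝒦 k (Finset.mem_insert_of_mem hk)
    have kT := h𝒦 k (Finset.mem_insert_self _ _)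
    have supT : ∀ k0 : ι → ℝ, (∀ i, k0 i ∈ T) → ∀ i, (k ⊔ k0) i ∈ T := by
      intro k0 hk0 i
      rcases le_total (k i) (k0 i) with h' | h' <;> simp [h', kT i, hk0 i]
    have e1 : ∀ s, (if ∃ k' ∈ insert k 𝒦, bits T k' ⊆ s then (1:ℝ) else 0) =
        (if ∃ k ∈ 𝒦, bits T k ⊆ s then 1 else 0) + ind (bits T k) s -
        (if ∃ k ∈ 𝒦, bits T k ⊆ s then 1 else 0) * ind (bits T k) s := by
      intro s
      unfold ind
      by_cases h1 : ∃ k ∈ 𝒦, bits T k ⊆ s <;> by_cases h2 : bits T k ⊆ s <;>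
        simp only [Finset.exists_mem_insert, h1, h2] <;> norm_num
    constructor
    · simp only [e1]
      rw [lin, ih1, ih2 k kT]
      rw [Finset.set_biUnion_insert, Set.union_comm, ie _ _ (mIci k), h k kT]
    · intro k0 hk0
      have e2 : ∀ s, (if ∃ k' ∈ insert k 𝒦, bits T k' ⊆ s then (1:ℝ) else 0) * ind (bits T k0) s =
        (if ∃ k ∈ 𝒦, bits T k ⊆ s then 1 else 0) * ind (bits T k0) s + ind (bits T (k ⊔ k0)) s -
        (if ∃ k ∈ 𝒦, bits T k ⊆ s then 1 else 0) * ind (bits T (k ⊔ k0)) s := by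
        intro s
        rw [e1, ← indsup]; ring
      simp only [e2]
      rw [lin, ih2 k0 hk0, ih2 _ (supT k0 hk0)]
      rw [Finset.set_biUnion_insert, Set.union_comm, Set.union_inter_distrib_right,
        ie _ _ ((mIci k).inter (mIci k0)), Set.Ici_inter_Ici, h _ (supT k0 hk0)]
      have : (⋃ x ∈ 𝒦, Set.Ici x) ∩ Set.Ici k0 ∩ Set.Ici (k ⊔ k0) = (⋃ x ∈ 𝒦, Set.Ici x) ∩ Set.Ici (k ⊔ k0) := by
        rw [Set.inter_assoc, Set.Ici_inter_Ici]
        congr 2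
        simp
      rw [this]

theorem dom_union (μ : Measure (ι → ℝ)) [IsFiniteMeasure μ] (ζ : ι → Measure ℝ)
    [∀ i, IsProbabilityMeasure (ζ i)]
    (hlsm : ∀ A B C D : Set (ι → ℝ), MeasurableSet A → MeasurableSet B → MeasurableSet C →
      MeasurableSet D → (∀ x ∈ A, ∀ y ∈ B, x ⊔ y ∈ C ∧ x ⊓ y ∈ D) →
      μ.real A * μ.real B ≤ μ.real C * μ.real D)
    (horth : ∀ (S : Finset ι) (t : ι → ℝ), μ.real {x | ∀ i ∈ S, t i ≤ x i} ≤
      μ.real Set.univ * ∏ i ∈ S, (ζ i).real (Set.Ici (t i)))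
    (𝒦 : Finset (ι → ℝ)) :
    μ.real (⋃ k ∈ 𝒦, Set.Ici k) ≤ μ.real Set.univ * (Measure.pi ζ).real (⋃ k ∈ 𝒦, Set.Ici k) := by
  set T : Finset ℝ := 𝒦.biUnion fun k => Finset.univ.image k with hT
  have kT : ∀ k ∈ 𝒦, ∀ i, k i ∈ T := fun k hk i => by
    rw [hT, Finset.mem_biUnion]; exact ⟨k, hk, Finset.mem_image_of_mem _ (Finset.mem_univ i)⟩
  have hex := fun i => exists_factors (fun t => (ζ i).real (Set.Ici t))
    (fun s t hst => measureReal_mono (Set.Ici_subset_Ici.2 hst)) (fun t => measureReal_nonneg)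
    (fun t => measureReal_le_one) T
  choose P P0 P1 hP using hex
  set p : ι × ℝ → ℝ := fun q => P q.1 q.2 with hp
  have prodbig : ∀ (S : Finset ι) (t : ι → ℝ), (∀ i ∈ S, t i ∈ T) →
      ∏ q ∈ (S ×ˢ T).filter (fun q => q.2 ≤ t q.1), p q = ∏ i ∈ S, (ζ i).real (Set.Ici (t i)) := by
    intro S t ht
    rw [Finset.prod_filter, Finset.prod_product]
    refine Finset.prod_congr rfl fun i hi => ?_
    rw [← hP i (t i) (ht i hi), Finset.prod_filter]
  set m : Finset (ι × ℝ) → ℝ := fun s => μ.real (bits T ⁻¹' {s}) with hm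
  have mass : bE (gA T) m (fun _ => 1) = μ.real Set.univ := by
    have := bE_bits μ T (fun _ => True)
    simpa using this
  have H : BHyp (gA T) m p := by
    refine ⟨fun s => measureReal_nonneg, ?_, ?_⟩
    · intro s hs t ht
      refine (hlsm (bits T ⁻¹' {s}) (bits T ⁻¹' {t}) (bits T ⁻¹' {s ∪ t}) (bits T ⁻¹' {s ∩ t})
        (measurable_bits T _) (measurable_bits T _) (measurable_bits T _)
        (measurable_bits T _) ?_).trans (le_of_eq ?_)
      · intro x hx y hy
        simp only [Set.mem_preimage, Set.mem_singleton_iff] at *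
        rw [bits_sup, bits_inf, hx, hy]; exact ⟨rfl, rfl⟩
      · rw [mul_comm]; congr!
    · intro K hK
      have e1 := bE_bits μ T (fun s => K ⊆ s)
      have e2 : bE (gA T) m (ind K) = μ.real {x | K ⊆ bits T x} := by
        rw [← e1]; exact bE_congr fun s _ => by unfold ind; congr!
      rw [mass, e2]
      set S := K.image Prod.fst with hS
      have hmax : ∀ i : ι, ∃ t : ℝ, i ∈ S → ((i, t) ∈ K ∧ ∀ t', (i, t') ∈ K → t' ≤ t) := by
        intro i
        by_cases hi : i ∈ S
        · have hne : (K.filter fun q => q.1 = i).Nonempty := by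
            obtain ⟨q, hq, rfl⟩ := Finset.mem_image.1 hi
            exact ⟨q, Finset.mem_filter.2 ⟨hq, rfl⟩⟩
          obtain ⟨q, hq, hqm⟩ := Finset.exists_max_image _ (fun q : ι × ℝ => q.2) hne
          obtain ⟨hq1, rfl⟩ := Finset.mem_filter.1 hq
          exact ⟨q.2, fun _ => ⟨hq1, fun t' ht' => hqm (q.1, t') (Finset.mem_filter.2 ⟨ht', rfl⟩)⟩⟩
        · exact ⟨0, fun h => absurd h hi⟩
      choose t ht using hmax
      have tT : ∀ i ∈ S, t i ∈ T := fun i hi => by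
        have := hK (ht i hi).1
        simpa [gA] using this
      have s1 : {x : ι → ℝ | K ⊆ bits T x} ⊆ {x | ∀ i ∈ S, t i ≤ x i} := by
        intro x hx i hi
        exact (mem_bits.1 (hx (ht i hi).1)).2
      refine (measureReal_mono s1).trans ((horth S t).trans ?_)
      refine mul_le_mul_of_nonneg_left ?_ measureReal_nonneg
      rw [← prodbig S t tT]
      have sub : K ⊆ (S ×ˢ T).filter (fun q => q.2 ≤ t q.1) := by
        intro q hq
        have hqS : q.1 ∈ S := Finset.mem_image_of_mem _ hq
        refine Finset.mem_filter.2 ⟨Finset.mem_product.2 ⟨hqS, ?_⟩, (ht q.1 hqS).2 q.2 hq⟩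
        have := hK hq
        simpa [gA] using this
      rw [← Finset.prod_sdiff sub]
      have a1 : 0 ≤ ∏ j ∈ K, p j := Finset.prod_nonneg fun q _ => P0 _ _
      have a2 : ∏ q ∈ (S ×ˢ T).filter (fun q => q.2 ≤ t q.1) \ K, p q ≤ 1 :=
        Finset.prod_le_one (fun q _ => P0 _ _) fun q _ => P1 _ _
      nlinarith
  have key := b_main (gA T) m p (fun q => P0 _ _) (fun q => P1 _ _) H
    (fun s => if ∃ k ∈ 𝒦, bits T k ⊆ s then 1 else 0) (fun s => by positivity)
    (by
      intro s t hst
      simp only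
      split_ifs with h1 h2
      · exact le_rfl
      · obtain ⟨k, hk, hks⟩ := h1; exact absurd ⟨k, hk, hks.trans hst⟩ h2
      · exact zero_le_one
      · exact le_rfl)
  have pis : ∀ k : ι → ℝ, (∀ i, k i ∈ T) → (Measure.pi ζ).real (Set.Ici k) = bEB (gA T) p (ind (bits T k)) := by
    intro k hk
    rw [bEB_ind _ _ _ (bits_sub T k)]
    have e := prodbig Finset.univ k (fun i _ => hk i)
    have : (Finset.univ ×ˢ T).filter (fun q => q.2 ≤ k q.1) = bits T k := rfl
    rw [this] at e
    rw [e, ← Set.pi_univ_Ici, measureReal_def, Measure.pi_pi, ENNReal.toReal_prod]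
    rfl
  have eb := bE_bits μ T (fun s => ∃ k ∈ 𝒦, bits T k ⊆ s)
  rw [(bEB_inclexcl (Measure.pi ζ) T p pis 𝒦 kT).1, mass] at key
  have key2 : μ.real {x : ι → ℝ | ∃ k ∈ 𝒦, bits T k ⊆ bits T x} ≤ _ :=
    (le_of_eq (by rw [← eb]; exact bE_congr fun s _ => by congr!)).trans key
  have e : {x : ι → ℝ | ∃ k ∈ 𝒦, bits T k ⊆ bits T x} = ⋃ k ∈ 𝒦, Set.Ici k := by
    ext x
    simp only [Set.mem_ofPred_eq, Set.mem_iUnion, Set.mem_Ici, exists_prop]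
    constructor
    · rintro ⟨k, hk, h⟩; exact ⟨k, hk, (bits_le_iff (kT k hk)).1 h⟩
    · rintro ⟨k, hk, h⟩; exact ⟨k, hk, (bits_le_iff (kT k hk)).2 h⟩
  rwa [e] at key2

end Dom

section DomB
open scoped Pointwise
variable {ι : Type*} [Fintype ι]

theorem dom_compact (μ : Measure (ι → ℝ)) [IsFiniteMeasure μ] (ζ : ι → Measure ℝ)
    [∀ i, IsProbabilityMeasure (ζ i)]
    (hU : ∀ 𝒦 : Finset (ι → ℝ), μ.real (⋃ k ∈ 𝒦, Set.Ici k) ≤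
      μ.real Set.univ * (Measure.pi ζ).real (⋃ k ∈ 𝒦, Set.Ici k))
    (K : Set (ι → ℝ)) (hK : IsCompact K) :
    μ.real K ≤ μ.real Set.univ * (Measure.pi ζ).real (K + Set.Ici (0 : ι → ℝ)) := by
  set F : Set (ι → ℝ) := K + Set.Ici (0 : ι → ℝ) with hF
  have Fcl : IsClosed F := isClosed_Ici.add_left_of_isCompact hK
  have Fup : ∀ x y, x ∈ F → x ≤ y → y ∈ F := by
    rintro x y ⟨k, hk, v, hv, rfl⟩ hxy
    refine ⟨k, hk, y - k, ?_, by simp⟩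
    have : 0 ≤ v := hv
    simp only [Set.mem_Ici, sub_nonneg]
    exact le_trans (by simpa using this) hxy
  have KF : ∀ k ∈ K, k ∈ F := fun k hk => ⟨k, hk, 0, by simp, by simp⟩
  set ε : ℕ → (ι → ℝ) := fun n _ => 1 / ((n : ℝ) + 1) with hε
  have εpos : ∀ n i, 0 < ε n i := fun n i => by simp only [hε]; positivity
  set Fn : ℕ → Set (ι → ℝ) := fun n => {x | x + ε n ∈ F} with hFn
  have mFn : ∀ n, MeasurableSet (Fn n) := fun n =>
    (Fcl.measurableSet).preimage (measurable_id.add_const _)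
  have anti : Antitone Fn := by
    intro n m hnm x hx
    refine Fup _ _ hx ?_
    intro i
    simp only [Pi.add_apply, hε, add_le_add_iff_left]
    exact one_div_le_one_div_of_le (by positivity) (by exact_mod_cast Nat.succ_le_succ hnm)
  have inter : ⋂ n, Fn n ⊆ F := by
    intro x hx
    rw [Set.mem_iInter] at hx
    have ht : Filter.Tendsto (fun n => x + ε n) Filter.atTop (nhds (x + 0)) := by
      refine tendsto_const_nhds.add ?_
      rw [tendsto_pi_nhds]
      intro i
      exact tendsto_one_div_add_atTop_nhds_zero_nat
    rw [add_zero] at ht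
    exact Fcl.mem_of_tendsto ht (Filter.Eventually.of_forall hx)
  have bound : ∀ n, μ.real K ≤ μ.real Set.univ * (Measure.pi ζ).real (Fn n) := by
    intro n
    obtain ⟨t, htK, hcov⟩ := hK.elim_nhds_subcover (fun k => {x | ∀ i, k i - ε n i < x i}) (by
      intro k hk
      refine IsOpen.mem_nhds ?_ (fun i => by have := εpos n i; linarith)
      have : {x : ι → ℝ | ∀ i, k i - ε n i < x i} = ⋂ i, {x | k i - ε n i < x i} := by
        ext; simp
      rw [this]
      exact isOpen_iInter_of_finite fun i => isOpen_lt continuous_const (continuous_apply i))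
    have h1 := hU (t.image fun k => k - ε n)
    refine le_trans (measureReal_mono ?_ (measure_ne_top _ _)) (h1.trans (mul_le_mul_of_nonneg_left
      (measureReal_mono ?_) measureReal_nonneg))
    · intro x hx
      have := hcov hx
      simp only [Set.mem_iUnion, exists_prop] at this ⊢
      obtain ⟨k, hk, h⟩ := this
      exact ⟨k - ε n, Finset.mem_image_of_mem _ hk, fun i => (h i).le⟩
    · intro x hx
      simp only [Set.mem_iUnion, exists_prop, Finset.mem_image] at hx
      obtain ⟨_, ⟨k, hk, rfl⟩, h⟩ := hx
      refine Fup k _ (KF k (htK k hk)) ?_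
      intro i
      have := h i
      simp only [Pi.sub_apply, Pi.add_apply] at *
      linarith
  have lim : Filter.Tendsto (fun n => (Measure.pi ζ).real (Fn n)) Filter.atTop
      (nhds ((Measure.pi ζ).real (⋂ n, Fn n))) := by
    have := tendsto_measure_iInter_atTop (μ := Measure.pi ζ)
      (fun n => (mFn n).nullMeasurableSet) anti ⟨0, measure_ne_top _ _⟩
    exact (ENNReal.tendsto_toReal (measure_ne_top _ _)).comp this
  have := ge_of_tendsto' (lim.const_mul (μ.real Set.univ)) bound
  exact this.trans (mul_le_mul_of_nonneg_left (measureReal_mono inter) measureReal_nonneg)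

theorem dom_upper (μ : Measure (ι → ℝ)) [IsFiniteMeasure μ] (ζ : ι → Measure ℝ)
    [∀ i, IsProbabilityMeasure (ζ i)]
    (hU : ∀ 𝒦 : Finset (ι → ℝ), μ.real (⋃ k ∈ 𝒦, Set.Ici k) ≤
      μ.real Set.univ * (Measure.pi ζ).real (⋃ k ∈ 𝒦, Set.Ici k))
    (A : Set (ι → ℝ)) (hA : MeasurableSet A) (hup : IsUpperSet A) :
    μ A ≤ μ Set.univ * (Measure.pi ζ) A := by
  refine le_of_forall_lt fun r hr => ?_
  obtain ⟨K, hKA, hK, hrK⟩ := hA.exists_lt_isCompact hr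
  refine lt_of_lt_of_le hrK ?_
  have h := dom_compact μ ζ hU K hK
  have h2 : K + Set.Ici (0 : ι → ℝ) ⊆ A := by
    rintro _ ⟨k, hk, v, hv, rfl⟩
    exact hup (by simpa using hv) (hKA hk)
  have h3 := h.trans (mul_le_mul_of_nonneg_left (measureReal_mono h2) measureReal_nonneg)
  rw [measureReal_def, measureReal_def, measureReal_def, ← ENNReal.toReal_mul] at h3
  exact (ENNReal.toReal_le_toReal (measure_ne_top _ _)
    (ENNReal.mul_ne_top (measure_ne_top _ _) (measure_ne_top _ _))).1 h3

theorem dom_lintegral (μ : Measure (ι → ℝ)) [IsFiniteMeasure μ] (ζ : ι → Measure ℝ)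
    [∀ i, IsProbabilityMeasure (ζ i)]
    (hlsm : ∀ A B C D : Set (ι → ℝ), MeasurableSet A → MeasurableSet B → MeasurableSet C →
      MeasurableSet D → (∀ x ∈ A, ∀ y ∈ B, x ⊔ y ∈ C ∧ x ⊓ y ∈ D) →
      μ.real A * μ.real B ≤ μ.real C * μ.real D)
    (horth : ∀ (S : Finset ι) (t : ι → ℝ), μ.real {x | ∀ i ∈ S, t i ≤ x i} ≤
      μ.real Set.univ * ∏ i ∈ S, (ζ i).real (Set.Ici (t i)))
    (g : (ι → ℝ) → ℝ) (g0 : ∀ x, 0 ≤ g x) (gm : Measurable g) (gmono : Monotone g) :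
    ∫⁻ x, ENNReal.ofReal (g x) ∂μ ≤ μ Set.univ * ∫⁻ x, ENNReal.ofReal (g x) ∂Measure.pi ζ := by
  rw [lintegral_eq_lintegral_meas_lt μ (Filter.Eventually.of_forall g0) gm.aemeasurable,
    lintegral_eq_lintegral_meas_lt _ (Filter.Eventually.of_forall g0) gm.aemeasurable,
    ← lintegral_const_mul' _ _ (measure_ne_top _ _)]
  refine lintegral_mono fun t => ?_
  exact dom_upper μ ζ (dom_union μ ζ hlsm horth) _ (measurableSet_lt measurable_const gm)
    (fun x y hxy hx => lt_of_lt_of_le hx (gmono hxy))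

end DomB

section Ham
variable {V : Type*} (G : SimpleGraph V) [∀ x : V, Fintype (G.neighborSet x)] (β : ℝ)

noncomputable def clN (I : Finset V) : Finset V := I ∪ I.biUnion fun a => G.neighborFinset a

noncomputable def hN (N I : Finset V) (x : V → ℝ) : ℝ :=
  β / 2 * ∑ a ∈ N, ∑ b ∈ N, if G.Adj a b ∧ (a ∈ I ∨ b ∈ I) then x a * x b else 0

noncomputable def hI (I : Finset V) (x : V → ℝ) : ℝ := hN G β (clN G I) I x

variable {G}
theorem sub_clN (I : Finset V) : I ⊆ clN G I := Finset.subset_union_left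

theorem nbr_clN {I : Finset V} {a b : V} (ha : a ∈ I) (h : G.Adj a b) : b ∈ clN G I :=
  Finset.mem_union_right _ (Finset.mem_biUnion.2 ⟨a, ha, by simpa using h⟩)

theorem pair_clN {I : Finset V} {a b : V} (h : G.Adj a b ∧ (a ∈ I ∨ b ∈ I)) :
    a ∈ clN G I ∧ b ∈ clN G I := by
  rcases h with ⟨h, ha | hb⟩
  · exact ⟨sub_clN I ha, nbr_clN ha h⟩
  · exact ⟨nbr_clN hb h.symm, sub_clN I hb⟩

theorem clN_mono {I K : Finset V} (h : I ⊆ K) : clN G I ⊆ clN G K :=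
  Finset.union_subset_union h (Finset.biUnion_subset_biUnion_of_subset_left _ h)

variable {β}
theorem hN_eq {N I : Finset V} (h : clN G I ⊆ N) (x : V → ℝ) : hN G β N I x = hI G β I x := by
  unfold hI hN
  congr 1
  symm
  rw [Finset.sum_subset h]
  · refine Finset.sum_congr rfl fun a _ => Finset.sum_subset h fun b _ hb => ?_
    rw [if_neg fun h' => hb (pair_clN h').2]
  · intro a _ ha
    exact Finset.sum_eq_zero fun b _ => if_neg fun h' => ha (pair_clN h').1

theorem hamil_tsum (I : Finset V) (a : V) (ha : a ∈ I) (x : V → ℝ) :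
    ∑' y : {y : V // y ∉ I}, Jnn G a y.1 * x y.1 =
      ∑ y ∈ clN G I \ I, if G.Adj a y then x y else 0 := by
  have h1 : ∀ y, Jnn G a y * x y = if G.Adj a y then x y else 0 := fun y => by
    unfold Jnn; split_ifs <;> simp
  have := tsum_subtype {y : V | y ∉ I} (fun y => Jnn G a y * x y)
  refine this.trans ?_
  rw [tsum_eq_sum (s := clN G I \ I)]
  · refine Finset.sum_congr rfl fun y hy => ?_
    rw [Set.indicator_of_mem (by simpa using (Finset.mem_sdiff.1 hy).2), h1]
  · intro y hy
    by_cases hyI : y ∈ I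
    · exact Set.indicator_of_notMem (by simpa using hyI) _
    · rw [Set.indicator_of_mem (by simpa using hyI), h1, if_neg]
      exact fun h => hy (Finset.mem_sdiff.2 ⟨nbr_clN ha h, hyI⟩)

theorem hamil_eq' (I : Finset V) (x : V → ℝ) :
    hamil (Jnn G) β I x (fun a => x a.1) = hI G β I x := by
  have e1 : ∑ a : ↥I, ∑ b : ↥I, (if a.1 ≠ b.1 then Jnn G a.1 b.1 * x a.1 * x b.1 else 0) =
      ∑ a ∈ I, ∑ b ∈ I, if G.Adj a b then x a * x b else 0 := by
    rw [← Finset.sum_coe_sort I]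
    refine Finset.sum_congr rfl fun a _ => ?_
    rw [← Finset.sum_coe_sort I]
    refine Finset.sum_congr rfl fun b _ => ?_
    unfold Jnn
    by_cases h : G.Adj a.1 b.1
    · simp [h, h.ne]
    · simp [h]
  have e2 : ∑ a : ↥I, x a.1 * ∑' y : {y : V // y ∉ I}, Jnn G a.1 y.1 * x y.1 =
      ∑ a ∈ I, ∑ b ∈ clN G I \ I, if G.Adj a b then x a * x b else 0 := by
    rw [← Finset.sum_coe_sort I]
    refine Finset.sum_congr rfl fun a _ => ?_
    rw [hamil_tsum I a.1 a.2, Finset.mul_sum]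
    refine Finset.sum_congr rfl fun b _ => ?_
    split_ifs <;> simp
  unfold hamil hI hN
  rw [e1, e2]
  have sp : ∀ f : V → ℝ, ∑ a ∈ clN G I, f a = ∑ a ∈ I, f a + ∑ a ∈ clN G I \ I, f a := fun f => by
    rw [add_comm]; exact (Finset.sum_sdiff (sub_clN I)).symm
  rw [sp]
  have f1 : ∑ a ∈ I, ∑ b ∈ clN G I, (if G.Adj a b ∧ (a ∈ I ∨ b ∈ I) then x a * x b else 0) =
      ∑ a ∈ I, ∑ b ∈ I, (if G.Adj a b then x a * x b else 0) +
      ∑ a ∈ I, ∑ b ∈ clN G I \ I, (if G.Adj a b then x a * x b else 0) := by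
    rw [← Finset.sum_add_distrib]
    refine Finset.sum_congr rfl fun a ha => ?_
    simp only [ha, true_or, and_true]
    rw [sp]
  have f2 : ∑ a ∈ clN G I \ I, ∑ b ∈ clN G I, (if G.Adj a b ∧ (a ∈ I ∨ b ∈ I) then x a * x b else 0) =
      ∑ a ∈ I, ∑ b ∈ clN G I \ I, (if G.Adj a b then x a * x b else 0) := by
    rw [Finset.sum_comm (s := I)]
    refine Finset.sum_congr rfl fun a ha => ?_
    have haI := (Finset.mem_sdiff.1 ha).2
    simp only [haI, false_or]
    rw [sp]
    have : ∑ b ∈ clN G I \ I, (if G.Adj a b ∧ b ∈ I then x a * x b else 0) = 0 :=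
      Finset.sum_eq_zero fun b hb => if_neg fun h => (Finset.mem_sdiff.1 hb).2 h.2
    rw [this, add_zero]
    refine Finset.sum_congr rfl fun b hb => ?_
    simp only [hb, and_true, G.adj_comm a b, mul_comm (x a)]
  rw [f1, f2]
  ring

theorem hamil_eq (I : Finset V) (ξ : V → ℝ) (φ : ↥I → ℝ) :
    hamil (Jnn G) β I ξ φ = hI G β I (Function.updateFinset ξ I φ) := by
  rw [← hamil_eq']
  unfold hamil
  have e1 : ∀ a : ↥I, Function.updateFinset ξ I φ a.1 = φ a := fun a => by
    simp [Function.updateFinset_def]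
  have e2 : ∀ a : {y : V // y ∉ I}, Function.updateFinset ξ I φ a.1 = ξ a.1 := fun a => by
    simp [Function.updateFinset_def, a.2]
  simp only [e1, e2]

theorem hI_super (hβ : 0 ≤ β) (I : Finset V) (x y : V → ℝ) :
    hI G β I x + hI G β I y ≤ hI G β I (x ⊔ y) + hI G β I (x ⊓ y) := by
  unfold hI hN
  rw [← mul_add, ← mul_add, ← Finset.sum_add_distrib, ← Finset.sum_add_distrib]
  refine mul_le_mul_of_nonneg_left (Finset.sum_le_sum fun a _ => ?_) (by positivity)
  rw [← Finset.sum_add_distrib, ← Finset.sum_add_distrib]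
  refine Finset.sum_le_sum fun b _ => ?_
  split_ifs
  · simp only [Pi.sup_apply, Pi.inf_apply]
    rcases le_total (x a) (y a) with h1 | h1 <;> rcases le_total (x b) (y b) with h2 | h2 <;>
      simp only [h1, h2, sup_of_le_left, sup_of_le_right, inf_of_le_left, inf_of_le_right] <;>
      nlinarith [mul_nonneg (sub_nonneg.2 h1) (sub_nonneg.2 h2)]
  · simp

theorem hI_measurable (I : Finset V) : Measurable (hI G β I) := by
  unfold hI hN
  refine Measurable.const_mul (Finset.measurable_fun_sum _ fun a _ => Finset.measurable_fun_sum _ fun b _ => ?_) _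
  split_ifs
  · exact (measurable_pi_apply a).mul (measurable_pi_apply b)
  · exact measurable_const

/-- The change of `h_Δ - h_I` does not depend on the spins in `I`. -/
theorem hI_diff {I Δ : Finset V} (h : I ⊆ Δ) (x y : V → ℝ) (hxy : ∀ v, v ∉ I → x v = y v) :
    hI G β Δ x - hI G β I x = hI G β Δ y - hI G β I y := by
  rw [← hN_eq (clN_mono h) x, ← hN_eq (clN_mono h) y]
  unfold hI hN
  rw [← mul_sub, ← mul_sub, ← Finset.sum_sub_distrib, ← Finset.sum_sub_distrib]
  congr 1
  refine Finset.sum_congr rfl fun a _ => ?_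
  rw [← Finset.sum_sub_distrib, ← Finset.sum_sub_distrib]
  refine Finset.sum_congr rfl fun b _ => ?_
  by_cases hab : G.Adj a b
  · by_cases ha : a ∈ I
    · simp [hab, ha, h ha]
    · by_cases hb : b ∈ I
      · simp [hab, hb, h hb]
      · simp [ha, hb, hxy a ha, hxy b hb]
  · simp [hab]

theorem hI_congr {I : Finset V} (x y : V → ℝ) (hxy : ∀ v ∈ clN G I, x v = y v) :
    hI G β I x = hI G β I y := by
  unfold hI hN
  congr 1
  refine Finset.sum_congr rfl fun a ha => Finset.sum_congr rfl fun b hb => ?_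
  rw [hxy a ha, hxy b hb]

end Ham

section Lop
variable {V : Type*}

theorem lmarginal_prod (μ : V → Measure ℝ) [∀ i, SigmaFinite (μ i)] (N : Finset V)
    (g : V → ℝ → ℝ≥0∞) (gm : ∀ a, Measurable (g a)) (I : Finset V) (hI : I ⊆ N) (x : V → ℝ) :
    (∫⋯∫⁻_I, (fun x => ∏ a ∈ N, g a (x a)) ∂μ) x =
      (∏ a ∈ I, ∫⁻ u, g a u ∂μ a) * ∏ a ∈ N \ I, g a (x a) := by
  have mm : Measurable fun x : V → ℝ => ∏ a ∈ N, g a (x a) :=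
    Finset.measurable_fun_prod _ fun a _ => (gm a).comp (measurable_pi_apply a)
  induction I using Finset.induction generalizing x with
  | empty => simp
  | insert i I hi ih =>
    rw [lmarginal_insert _ mm hi]
    have hI' : I ⊆ N := fun a ha => hI (Finset.mem_insert_of_mem ha)
    have hiN : i ∈ N \ I := Finset.mem_sdiff.2 ⟨hI (Finset.mem_insert_self _ _), hi⟩
    simp only [ih hI']
    have e : N \ insert i I = (N \ I).erase i := by
      ext a; simp only [Finset.mem_sdiff, Finset.mem_insert, Finset.mem_erase]; tauto
    have : ∀ u, ∏ a ∈ N \ I, g a (Function.update x i u a) = g i u * ∏ a ∈ N \ insert i I, g a (x a) := by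
      intro u
      rw [← Finset.mul_prod_erase _ _ hiN, Function.update_self, e]
      congr 1
      refine Finset.prod_congr rfl fun a ha => ?_
      rw [Function.update_of_ne (Finset.ne_of_mem_erase ha)]
    simp only [this]
    rw [lintegral_const_mul, lintegral_mul_const _ (gm i), Finset.prod_insert hi]
    · ring
    · exact (gm i).mul_const _

variable (G : SimpleGraph V) [∀ x : V, Fintype (G.neighborSet x)] (β : ℝ) (ρ : Measure ℝ)

noncomputable def eI (I : Finset V) (x : V → ℝ) : ℝ≥0∞ := ENNReal.ofReal (Real.exp (hI G β I x))

noncomputable def LI (I : Finset V) (F : (V → ℝ) → ℝ≥0∞) : (V → ℝ) → ℝ≥0∞ :=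
  ∫⋯∫⁻_I, (fun y => F y * eI G β I y) ∂(fun _ => ρ)

noncomputable def ZI (I : Finset V) : (V → ℝ) → ℝ≥0∞ := LI G β ρ I fun _ => 1

variable {G β ρ}

theorem eI_measurable (I : Finset V) : Measurable (eI G β I) :=
  ENNReal.measurable_ofReal.comp (Real.measurable_exp.comp (hI_measurable I))

theorem eI_pos (I : Finset V) (x : V → ℝ) : 0 < eI G β I x :=
  ENNReal.ofReal_pos.2 (Real.exp_pos _)

theorem eI_ne_top (I : Finset V) (x : V → ℝ) : eI G β I x ≠ ⊤ := ENNReal.ofReal_ne_top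

theorem eI_lsm (hβ : 0 ≤ β) (I : Finset V) (x y : V → ℝ) :
    eI G β I x * eI G β I y ≤ eI G β I (x ⊔ y) * eI G β I (x ⊓ y) := by
  unfold eI
  rw [← ENNReal.ofReal_mul (Real.exp_pos _).le, ← ENNReal.ofReal_mul (Real.exp_pos _).le,
    ← Real.exp_add, ← Real.exp_add]
  exact ENNReal.ofReal_le_ofReal (Real.exp_le_exp.2 (hI_super hβ I x y))

theorem LI_apply (I : Finset V) (F : (V → ℝ) → ℝ≥0∞) (x : V → ℝ) :
    LI G β ρ I F x = ∫⁻ φ, F (Function.updateFinset x I φ) * eI G β I (Function.updateFinset x I φ)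
      ∂Measure.pi fun _ : ↥I => ρ := rfl

theorem gibbs_lintegral [SigmaFinite ρ] (I : Finset V) (ξ : V → ℝ) (F : (V → ℝ) → ℝ≥0∞)
    (hF : Measurable F) :
    ∫⁻ φ, F (Function.updateFinset ξ I φ) ∂gibbs (Jnn G) β ρ I ξ =
      (ZI G β ρ I ξ)⁻¹ * LI G β ρ I F ξ := by
  have hm : Measurable fun φ : ↥I → ℝ => eI G β I (Function.updateFinset ξ I φ) :=
    (eI_measurable I).comp measurable_updateFinset
  have e : (fun φ => ENNReal.ofReal (Real.exp (hamil (Jnn G) β I ξ φ))) =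
      fun φ : ↥I → ℝ => eI G β I (Function.updateFinset ξ I φ) := by
    funext φ; rw [hamil_eq]; rfl
  unfold gibbs
  rw [e, lintegral_smul_measure, withDensity_apply _ MeasurableSet.univ, Measure.restrict_univ,
    lintegral_withDensity_eq_lintegral_mul (g := fun φ => F (Function.updateFinset ξ I φ)) _ hm
      (hF.comp measurable_updateFinset), smul_eq_mul]
  unfold ZI
  rw [LI_apply, LI_apply]
  simp only [one_mul]
  congr 1
  refine lintegral_congr fun φ => ?_
  rw [Pi.mul_apply, mul_comm]

theorem LI_measurable [SigmaFinite ρ] (I : Finset V) {F : (V → ℝ) → ℝ≥0∞} (hF : Measurable F) :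
    Measurable (LI G β ρ I F) :=
  Measurable.lmarginal _ (hF.mul (eI_measurable I))

theorem ZI_measurable [SigmaFinite ρ] (I : Finset V) : Measurable (ZI G β ρ I) :=
  LI_measurable I measurable_const

theorem LI_mono (I : Finset V) {F F' : (V → ℝ) → ℝ≥0∞} (h : ∀ x, F x ≤ F' x) (x : V → ℝ) :
    LI G β ρ I F x ≤ LI G β ρ I F' x :=
  lmarginal_mono (fun y => mul_le_mul_left (h y) _) x

theorem LI_congr (I : Finset V) (F : (V → ℝ) → ℝ≥0∞) {x y : V → ℝ} (h : ∀ v ∉ I, x v = y v) :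
    LI G β ρ I F x = LI G β ρ I F y :=
  lmarginal_congr _ _ h

theorem LI_local (I : Finset V) (F : (V → ℝ) → ℝ≥0∞) (A : Set V) (hF : ∀ x y, (∀ v ∈ A, x v = y v) → F x = F y)
    {x y : V → ℝ} (h : ∀ v ∉ I, v ∈ A ∨ v ∈ clN G I → x v = y v) :
    LI G β ρ I F x = LI G β ρ I F y := by
  rw [LI_apply, LI_apply]
  refine lintegral_congr fun φ => ?_
  have : ∀ v, v ∈ A ∨ v ∈ clN G I → Function.updateFinset x I φ v = Function.updateFinset y I φ v := by
    intro v hv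
    by_cases hI : v ∈ I
    · simp [Function.updateFinset_def, hI]
    · simp [Function.updateFinset_def, hI, h v hI hv]
  rw [hF _ _ fun v hv => this v (Or.inl hv)]
  unfold eI
  rw [hI_congr _ _ fun v hv => this v (Or.inr hv)]

theorem ZI_local (I : Finset V) {x y : V → ℝ} (h : ∀ v ∉ I, v ∈ clN G I → x v = y v) :
    ZI G β ρ I x = ZI G β ρ I y :=
  LI_local I _ ∅ (fun _ _ _ => rfl) fun v hv hv' => h v hv (by simpa using hv')

theorem hI_bound (hβ : 0 ≤ β) (I : Finset V) (x : V → ℝ) :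
    hI G β I x ≤ β * ((clN G I).card) * ∑ a ∈ clN G I, x a ^ 2 := by
  unfold hI hN
  have h1 : ∑ a ∈ clN G I, ∑ b ∈ clN G I, (if G.Adj a b ∧ (a ∈ I ∨ b ∈ I) then x a * x b else 0) ≤
      ∑ a ∈ clN G I, ∑ b ∈ clN G I, (x a ^ 2 + x b ^ 2) := by
    refine Finset.sum_le_sum fun a _ => Finset.sum_le_sum fun b _ => ?_
    split_ifs
    · nlinarith [sq_nonneg (x a - x b), sq_nonneg (x a), sq_nonneg (x b)]
    · positivity
  have h2 : ∑ a ∈ clN G I, ∑ b ∈ clN G I, (x a ^ 2 + x b ^ 2) =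
      2 * ((clN G I).card * ∑ a ∈ clN G I, x a ^ 2) := by
    simp only [Finset.sum_add_distrib, Finset.sum_const, nsmul_eq_mul, ← Finset.mul_sum]
    ring
  rw [h2] at h1
  calc _ ≤ β / 2 * (2 * ((clN G I).card * ∑ a ∈ clN G I, x a ^ 2)) :=
        mul_le_mul_of_nonneg_left h1 (by positivity)
    _ = _ := by ring

theorem eI_bound (hβ : 0 ≤ β) (I : Finset V) (x : V → ℝ) :
    eI G β I x ≤ ∏ a ∈ clN G I, ENNReal.ofReal (Real.exp (β * ((clN G I).card) * x a ^ 2)) := by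
  rw [← ENNReal.ofReal_prod_of_nonneg fun a _ => (Real.exp_pos _).le, ← Real.exp_sum,
    ← Finset.mul_sum]
  exact ENNReal.ofReal_le_ofReal (Real.exp_le_exp.2 (hI_bound hβ I x))

/-- standing assumption on the single-site measure -/
structure RhoOK (ρ : Measure ℝ) : Prop where
  fin : ∀ a : ℝ, 0 < a → ∫⁻ u, ENNReal.ofReal (Real.exp (a * u ^ 2)) ∂ρ < ⊤
  pos : 0 < ρ (Set.Ici (0 : ℝ))

theorem RhoOK.finite (h : RhoOK ρ) : IsFiniteMeasure ρ := by
  refine ⟨lt_of_le_of_lt ?_ (h.fin 1 one_pos)⟩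
  rw [← lintegral_one]
  refine lintegral_mono fun u => ?_
  rw [← ENNReal.ofReal_one]
  exact ENNReal.ofReal_le_ofReal (Real.one_le_exp (by positivity))

theorem RhoOK.ne_zero (h : RhoOK ρ) : ρ Set.univ ≠ 0 :=
  (lt_of_lt_of_le h.pos (measure_mono (Set.subset_univ _))).ne'

theorem RhoOK.fin' (h : RhoOK ρ) (a : ℝ) (ha : 0 ≤ a) :
    ∫⁻ u, ENNReal.ofReal (Real.exp (a * u ^ 2)) ∂ρ < ⊤ := by
  refine lt_of_le_of_lt (lintegral_mono fun u => ?_) (h.fin (a + 1) (by positivity))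
  refine ENNReal.ofReal_le_ofReal (Real.exp_le_exp.2 ?_)
  nlinarith [sq_nonneg u]

theorem ZI_lt_top (hβ : 0 ≤ β) (h : RhoOK ρ) (I : Finset V) (x : V → ℝ) : ZI G β ρ I x < ⊤ := by
  have := h.finite
  have h1 : ZI G β ρ I x ≤ (∫⋯∫⁻_I, (fun x => ∏ a ∈ clN G I,
      ENNReal.ofReal (Real.exp (β * ((clN G I).card) * x a ^ 2)))
        ∂(fun _ => ρ)) x := by
    unfold ZI LI
    exact lmarginal_mono (fun y => by rw [one_mul]; exact eI_bound hβ I y) x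
  refine lt_of_le_of_lt h1 ?_
  rw [lmarginal_prod (fun _ => ρ) (clN G I)
    (fun _ u => ENNReal.ofReal (Real.exp (β * ((clN G I).card) * u ^ 2)))
    (fun a => by fun_prop) _ (sub_clN I)]
  refine ENNReal.mul_lt_top (ENNReal.prod_lt_top fun a _ => ?_)
    (ENNReal.prod_lt_top fun a _ => ENNReal.ofReal_lt_top)
  exact h.fin' _ (by positivity)

theorem pi_univ_ne_zero {ι : Type*} [Fintype ι] (h : RhoOK ρ) :
    (Measure.pi fun _ : ι => ρ) ≠ 0 := by
  have := h.finite
  intro h0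
  have : (Measure.pi fun _ : ι => ρ) Set.univ = 0 := by rw [h0]; rfl
  rw [Measure.pi_univ] at this
  exact (Finset.prod_ne_zero_iff.2 fun i _ => h.ne_zero) this

theorem ZI_pos (h : RhoOK ρ) (I : Finset V) (x : V → ℝ) : 0 < ZI G β ρ I x := by
  rw [pos_iff_ne_zero]
  intro h0
  unfold ZI at h0
  rw [LI_apply, lintegral_eq_zero_iff] at h0
  · have : ∀ᵐ φ ∂Measure.pi fun _ : ↥I => ρ, False := by
      filter_upwards [h0] with φ hφ
      simp only [one_mul, Pi.zero_apply] at hφ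
      exact (eI_pos I _).ne' hφ
    rw [Filter.eventually_false_iff_eq_bot, ae_eq_bot] at this
    exact pi_univ_ne_zero h this
  · exact measurable_const.mul ((eI_measurable I).comp measurable_updateFinset)

/-- Monotonicity in boundary conditions, increasing observables. -/
theorem LI_fkg [SigmaFinite ρ] (hβ : 0 ≤ β) (I : Finset V) (F : (V → ℝ) → ℝ≥0∞)
    (hF : Measurable F) (hmono : Monotone F) {x y : V → ℝ} (hxy : x ≤ y) :
    LI G β ρ I F x * ZI G β ρ I y ≤ LI G β ρ I F y * ZI G β ρ I x := by
  have := four_fun (fun _ => ρ) I (fun y => F y * eI G β I y) (fun y => 1 * eI G β I y)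
    (fun y => F y * eI G β I y) (fun y => 1 * eI G β I y) (hF.mul (eI_measurable I))
    (measurable_const.mul (eI_measurable I)) (hF.mul (eI_measurable I))
    (measurable_const.mul (eI_measurable I)) (fun a b => by
      rw [one_mul, one_mul, mul_assoc, mul_assoc]
      exact mul_le_mul' (hmono le_sup_left) (eI_lsm hβ I a b)) x y
  rwa [sup_of_le_right hxy, inf_of_le_left hxy] at this

theorem LI_fkg_anti [SigmaFinite ρ] (hβ : 0 ≤ β) (I : Finset V) (F : (V → ℝ) → ℝ≥0∞)
    (hF : Measurable F) (hmono : Antitone F) {x y : V → ℝ} (hxy : x ≤ y) :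
    LI G β ρ I F y * ZI G β ρ I x ≤ LI G β ρ I F x * ZI G β ρ I y := by
  have := four_fun (fun _ => ρ) I (fun y => 1 * eI G β I y) (fun y => F y * eI G β I y)
    (fun y => 1 * eI G β I y) (fun y => F y * eI G β I y) (measurable_const.mul (eI_measurable I))
    (hF.mul (eI_measurable I)) (measurable_const.mul (eI_measurable I))
    (hF.mul (eI_measurable I)) (fun a b => by
      rw [one_mul, one_mul, mul_left_comm, mul_left_comm (eI G β I (a ⊔ b))]
      exact mul_le_mul' (hmono inf_le_right) (eI_lsm hβ I a b)) x y
  rw [sup_of_le_right hxy, inf_of_le_left hxy] at this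
  rw [mul_comm, mul_comm (LI G β ρ I F x)]
  exact this

/-- normalised kernel -/
noncomputable def KI (G : SimpleGraph V) [∀ x : V, Fintype (G.neighborSet x)] (β : ℝ) (ρ : Measure ℝ)
    (I : Finset V) (F : (V → ℝ) → ℝ≥0∞) (x : V → ℝ) : ℝ≥0∞ :=
  (ZI G β ρ I x)⁻¹ * LI G β ρ I F x

theorem KI_measurable [SigmaFinite ρ] (I : Finset V) {F : (V → ℝ) → ℝ≥0∞} (hF : Measurable F) :
    Measurable (KI G β ρ I F) :=
  (ZI_measurable I).inv.mul (LI_measurable I hF)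

theorem KI_mul (hβ : 0 ≤ β) (h : RhoOK ρ) (I : Finset V) (F : (V → ℝ) → ℝ≥0∞) (x : V → ℝ) :
    KI G β ρ I F x * ZI G β ρ I x = LI G β ρ I F x := by
  unfold KI
  rw [mul_comm, ← mul_assoc, ENNReal.mul_inv_cancel (ZI_pos h I x).ne' (ZI_lt_top hβ h I x).ne,
    one_mul]

theorem KI_mono (hβ : 0 ≤ β) (h : RhoOK ρ) (I : Finset V) (F : (V → ℝ) → ℝ≥0∞)
    (hF : Measurable F) (hmono : Monotone F) : Monotone (KI G β ρ I F) := by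
  have := h.finite
  intro x y hxy
  have := LI_fkg (G := G) (ρ := ρ) hβ I F hF hmono hxy
  unfold KI
  rw [mul_comm, mul_comm (ZI G β ρ I y)⁻¹, ← div_eq_mul_inv, ← div_eq_mul_inv]
  have hx := ZI_pos (G := G) (β := β) h I x
  have hy := ZI_pos (G := G) (β := β) h I y
  rw [ENNReal.div_le_iff hx.ne' (ZI_lt_top hβ h I x).ne, ENNReal.mul_comm_div, ← mul_div_assoc,
    ENNReal.le_div_iff_mul_le (Or.inl hy.ne') (Or.inl (ZI_lt_top hβ h I y).ne)]
  exact this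

theorem KI_one (hβ : 0 ≤ β) (h : RhoOK ρ) (I : Finset V) (x : V → ℝ) :
    KI G β ρ I (fun _ => 1) x = 1 :=
  ENNReal.inv_mul_cancel (ZI_pos h I x).ne' (ZI_lt_top hβ h I x).ne

theorem KI_congr (I : Finset V) (F : (V → ℝ) → ℝ≥0∞) {x y : V → ℝ} (h : ∀ v ∉ I, x v = y v) :
    KI G β ρ I F x = KI G β ρ I F y := by
  unfold KI ZI
  rw [LI_congr I F h, LI_congr I _ h]

/-- DLR equations. -/
theorem LI_dlr (hβ : 0 ≤ β) (h : RhoOK ρ) {I Δ : Finset V} (hsub : I ⊆ Δ) (F : (V → ℝ) → ℝ≥0∞)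
    (hF : Measurable F) : LI G β ρ Δ (KI G β ρ I F) = LI G β ρ Δ F := by
  have := h.finite
  set r : (V → ℝ) → ℝ≥0∞ := fun x => ENNReal.ofReal (Real.exp (hI G β Δ x - hI G β I x)) with hr
  have eΔ : ∀ x, eI G β Δ x = eI G β I x * r x := fun x => by
    simp only [hr, eI]
    rw [← ENNReal.ofReal_mul (Real.exp_pos _).le, ← Real.exp_add]; congr 2; ring
  have up : ∀ (x : V → ℝ) (φ : ↥I → ℝ) v, v ∉ I → Function.updateFinset x I φ v = x v := by
    intro x φ v hv; simp [Function.updateFinset_def, hv]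
  have rI : ∀ x (φ : ↥I → ℝ), r (Function.updateFinset x I φ) = r x := fun x φ => by
    simp only [hr]; rw [hI_diff hsub _ x (up x φ)]
  have inner : ∀ F : (V → ℝ) → ℝ≥0∞, Measurable F →
      (∫⋯∫⁻_I, (fun y => F y * eI G β Δ y) ∂(fun _ => ρ)) = fun x => LI G β ρ I F x * r x := by
    intro F hF
    funext x
    rw [LI_apply, ← lintegral_mul_const]
    · refine lintegral_congr fun φ => ?_
      simp only [eΔ, rI]; ring
    · exact (hF.mul (eI_measurable I)).comp measurable_updateFinset
  have e : Δ = (Δ \ I) ∪ I := (Finset.sdiff_union_of_subset hsub).symm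
  have hK := KI_measurable (G := G) (β := β) (ρ := ρ) I hF
  unfold LI
  rw [e, lmarginal_union _ _ (by rw [← e]; exact hK.mul (eI_measurable Δ)) Finset.sdiff_disjoint,
    lmarginal_union _ _ (by rw [← e]; exact hF.mul (eI_measurable Δ)) Finset.sdiff_disjoint, ← e,
    inner _ hK, inner _ hF]
  congr 1
  funext x
  congr 1
  rw [LI_apply, ← KI_mul hβ h, ZI, LI_apply, ← lintegral_const_mul]
  · refine lintegral_congr fun φ => ?_
    rw [KI_congr I F (up x φ), one_mul]
  · exact measurable_const.mul ((eI_measurable I).comp measurable_updateFinset)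

end Lop

section Wmono
variable {V : Type*} {G : SimpleGraph V} [∀ x : V, Fintype (G.neighborSet x)] {β : ℝ} {ρ : Measure ℝ}

theorem hI_split {Δ Bd : Finset V} (hcl : clN G Δ ⊆ Δ ∪ Bd) (hdisj : Disjoint Δ Bd) (x : V → ℝ) :
    hI G β Δ x = β * ((1 / 2) * ∑ a ∈ Δ, ∑ b ∈ Δ, (if G.Adj a b then x a * x b else 0) +
      ∑ a ∈ Δ, ∑ z ∈ Bd, if G.Adj a z then x a * x z else 0) := by
  have e1 : ∑ a : ↥Δ, ∑ b : ↥Δ, (if a.1 ≠ b.1 then Jnn G a.1 b.1 * x a.1 * x b.1 else 0) =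
      ∑ a ∈ Δ, ∑ b ∈ Δ, if G.Adj a b then x a * x b else 0 := by
    rw [← Finset.sum_coe_sort Δ]
    refine Finset.sum_congr rfl fun a _ => ?_
    rw [← Finset.sum_coe_sort Δ]
    refine Finset.sum_congr rfl fun b _ => ?_
    unfold Jnn
    by_cases h : G.Adj a.1 b.1
    · simp [h, h.ne]
    · simp [h]
  have e2 : ∑ a : ↥Δ, x a.1 * ∑' y : {y : V // y ∉ Δ}, Jnn G a.1 y.1 * x y.1 =
      ∑ a ∈ Δ, ∑ z ∈ Bd, if G.Adj a z then x a * x z else 0 := by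
    rw [← Finset.sum_coe_sort Δ]
    refine Finset.sum_congr rfl fun a _ => ?_
    rw [hamil_tsum Δ a.1 a.2, Finset.mul_sum]
    have hs : clN G Δ \ Δ ⊆ Bd := fun v hv => by
      obtain ⟨h1, h2⟩ := Finset.mem_sdiff.1 hv
      rcases Finset.mem_union.1 (hcl h1) with h | h
      · exact absurd h h2
      · exact h
    rw [Finset.sum_subset hs]
    · refine Finset.sum_congr rfl fun b _ => ?_
      split_ifs <;> simp
    · intro z hz hz'
      rw [if_neg, mul_zero]
      intro h
      exact hz' (Finset.mem_sdiff.2 ⟨nbr_clN a.2 h, fun h' => Finset.disjoint_left.1 hdisj h' hz⟩)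
  rw [← hamil_eq']
  unfold hamil
  rw [e1, e2]

theorem hI_change {Δ Bd : Finset V} (hcl : clN G Δ ⊆ Δ ∪ Bd) (hdisj : Disjoint Δ Bd) (x y : V → ℝ)
    (hxy : ∀ v ∈ Δ, x v = y v) :
    hI G β Δ y = hI G β Δ x +
      β * ∑ a ∈ Δ, ∑ z ∈ Bd, if G.Adj a z then x a * (y z - x z) else 0 := by
  rw [hI_split hcl hdisj, hI_split hcl hdisj]
  have e1 : ∑ a ∈ Δ, ∑ b ∈ Δ, (if G.Adj a b then y a * y b else 0) =
      ∑ a ∈ Δ, ∑ b ∈ Δ, (if G.Adj a b then x a * x b else 0) :=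
    Finset.sum_congr rfl fun a ha => Finset.sum_congr rfl fun b hb => by rw [hxy a ha, hxy b hb]
  have e2 : ∑ a ∈ Δ, ∑ z ∈ Bd, (if G.Adj a z then y a * y z else 0) =
      ∑ a ∈ Δ, ∑ z ∈ Bd, (if G.Adj a z then x a * x z else 0) +
      ∑ a ∈ Δ, ∑ z ∈ Bd, (if G.Adj a z then x a * (y z - x z) else 0) := by
    rw [← Finset.sum_add_distrib]
    refine Finset.sum_congr rfl fun a ha => ?_
    rw [← Finset.sum_add_distrib]
    refine Finset.sum_congr rfl fun b hb => ?_
    rw [hxy a ha]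
    split_ifs <;> ring
  rw [e1, e2]
  ring

theorem lmarg_ae {ζ : Measure ℝ} [SigmaFinite ζ] {B : ℝ} (hζ : ∀ᵐ u ∂ζ, B ≤ u) (Bd : Finset V)
    {f g : (V → ℝ) → ℝ≥0∞}
    (h : ∀ x : V → ℝ, (∀ z ∈ Bd, B ≤ x z) → (∀ v ∉ Bd, x v = 0) → f x ≤ g x) :
    (∫⋯∫⁻_Bd, f ∂(fun _ => ζ)) 0 ≤ (∫⋯∫⁻_Bd, g ∂(fun _ => ζ)) 0 := by
  unfold lmarginal
  refine lintegral_mono_ae ?_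
  have : ∀ᵐ y ∂(Measure.pi fun _ : ↥Bd => ζ), ∀ i : ↥Bd, B ≤ y i := by
    rw [ae_all_iff]
    intro i
    exact Measure.tendsto_eval_ae_ae.eventually hζ
  filter_upwards [this] with y hy
  refine h _ ?_ ?_
  · intro z hz
    simpa [Function.updateFinset_def, hz] using hy ⟨z, hz⟩
  · intro v hv
    simp [Function.updateFinset_def, hv]

theorem card_nbr_le {D : ℕ} (hdeg : ∀ x : V, G.degree x ≤ D) (Δ : Finset V) (z : V) :
    (Δ.filter fun y => G.Adj y z).card ≤ D := by
  refine le_trans (Finset.card_le_card ?_) (hdeg z)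
  intro y hy
  rw [SimpleGraph.mem_neighborFinset]
  exact (Finset.mem_filter.1 hy).2.symm

theorem LI_sum [SigmaFinite ρ] {κ : Type*} (I : Finset V) (s : Finset κ) (F : κ → (V → ℝ) → ℝ≥0∞)
    (hF : ∀ i, Measurable (F i)) (x : V → ℝ) :
    LI G β ρ I (fun y => ∑ i ∈ s, F i y) x = ∑ i ∈ s, LI G β ρ I (F i) x := by
  simp only [LI_apply, Finset.sum_mul]
  rw [lintegral_finsetSum]
  intro i _
  exact (((hF i).mul (eI_measurable I)).comp measurable_updateFinset)

theorem LI_const_mul [SigmaFinite ρ] (I : Finset V) (c : ℝ≥0∞) (F : (V → ℝ) → ℝ≥0∞)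
    (hF : Measurable F) (x : V → ℝ) :
    LI G β ρ I (fun y => c * F y) x = c * LI G β ρ I F x := by
  simp only [LI_apply, mul_assoc]
  rw [lintegral_const_mul]
  exact ((hF.mul (eI_measurable I)).comp measurable_updateFinset)

theorem Z_mono (hβ : 0 ≤ β) (h : RhoOK ρ) {D : ℕ} (hdeg : ∀ x : V, G.degree x ≤ D)
    {Δ Bd : Finset V} (hcl : clN G Δ ⊆ Δ ∪ Bd)
    (hdisj : Disjoint Δ Bd) {M : ℝ} (hM0 : 0 ≤ M)
    (hM : ∀ y ∈ Δ, LI G β ρ Δ (fun x => ENNReal.ofReal (-x y)) 0 ≤ ENNReal.ofReal M * ZI G β ρ Δ 0)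
    (x x' : V → ℝ) (hx0 : 0 ≤ x) (hxx : x ≤ x') :
    ZI G β ρ Δ x * ENNReal.ofReal (Real.exp (-(β * D * M * ∑ z ∈ Bd, (x' z - x z)))) ≤
      ZI G β ρ Δ x' := by
  have := h.finite
  set v : V → ℝ := fun z => x' z - x z with hv
  have v0 : ∀ z, 0 ≤ v z := fun z => sub_nonneg.2 (hxx z)
  set q : ℝ := β * D * M * ∑ z ∈ Bd, (x' z - x z) with hq
  have q0 : 0 ≤ q := by
    have : 0 ≤ ∑ z ∈ Bd, (x' z - x z) := Finset.sum_nonneg fun z _ => v0 z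
    positivity
  set t : V → V → (V → ℝ) → ℝ := fun z y φ => if G.Adj y z then β * v z * max (-φ y) 0 else 0 with ht
  have t0 : ∀ z y φ, 0 ≤ t z y φ := fun z y φ => by
    simp only [ht]; split_ifs
    · exact mul_nonneg (mul_nonneg hβ (v0 z)) (le_max_right _ _)
    · exact le_rfl
  set W : (V → ℝ) → ℝ := fun φ => ∑ z ∈ Bd, ∑ y ∈ Δ, t z y φ with hW
  have W0 : ∀ φ, 0 ≤ W φ := fun φ => Finset.sum_nonneg fun z _ => Finset.sum_nonneg fun y _ => t0 z y φ
  have tm : ∀ z y, Measurable (t z y) := fun z y => by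
    simp only [ht]; split_ifs
    · fun_prop
    · exact measurable_const
  have Wm : Measurable W := Finset.measurable_fun_sum _ fun z _ => Finset.measurable_fun_sum _ fun y _ => tm z y
  have Wanti : Antitone fun φ => ENNReal.ofReal (W φ) := by
    intro φ ψ hφψ
    refine ENNReal.ofReal_le_ofReal (Finset.sum_le_sum fun z _ => Finset.sum_le_sum fun y _ => ?_)
    simp only [ht]; split_ifs
    · exact mul_le_mul_of_nonneg_left (max_le_max (neg_le_neg (hφψ y)) le_rfl)
        (mul_nonneg hβ (v0 z))
    · exact le_rfl
  have LW0 : LI G β ρ Δ (fun φ => ENNReal.ofReal (W φ)) 0 ≤ ENNReal.ofReal q * ZI G β ρ Δ 0 := by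
    have e : (fun φ => ENNReal.ofReal (W φ)) =
        fun φ => ∑ z ∈ Bd, ∑ y ∈ Δ, ENNReal.ofReal (t z y φ) := by
      funext φ
      rw [hW, ENNReal.ofReal_sum_of_nonneg fun z _ => Finset.sum_nonneg fun y _ => t0 z y φ]
      refine Finset.sum_congr rfl fun z _ => ?_
      rw [ENNReal.ofReal_sum_of_nonneg fun y _ => t0 z y φ]
    rw [e, LI_sum _ _ _ (fun z => Finset.measurable_fun_sum _ fun y _ => (tm z y).ennreal_ofReal)]
    have step : ∀ z ∈ Bd, LI G β ρ Δ (fun φ => ∑ y ∈ Δ, ENNReal.ofReal (t z y φ)) 0 ≤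
        ENNReal.ofReal (β * D * M * v z) * ZI G β ρ Δ 0 := by
      intro z _
      rw [LI_sum _ _ _ (fun y => (tm z y).ennreal_ofReal)]
      have s1 : ∀ y ∈ Δ, LI G β ρ Δ (fun φ => ENNReal.ofReal (t z y φ)) 0 ≤
          if G.Adj y z then ENNReal.ofReal (β * v z * M) * ZI G β ρ Δ 0 else 0 := by
        intro y hy
        by_cases hyz : G.Adj y z
        · simp only [ht, hyz, if_true]
          have : ∀ φ : V → ℝ, ENNReal.ofReal (β * v z * max (-φ y) 0) =
              ENNReal.ofReal (β * v z) * ENNReal.ofReal (-φ y) := fun φ => by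
            rw [ENNReal.ofReal_mul (mul_nonneg hβ (v0 z)), ENNReal.ofReal_max]; simp
          simp only [this]
          rw [LI_const_mul _ _ _ (by fun_prop), ENNReal.ofReal_mul (mul_nonneg hβ (v0 z)), mul_assoc]
          exact mul_le_mul_right (hM y hy) _
        · simp [ht, hyz, LI_apply]
      refine (Finset.sum_le_sum s1).trans ?_
      rw [← Finset.sum_filter, Finset.sum_const, nsmul_eq_mul, ← mul_assoc]
      refine mul_le_mul_left ?_ _
      rw [← ENNReal.ofReal_natCast, ← ENNReal.ofReal_mul (by positivity)]
      refine ENNReal.ofReal_le_ofReal ?_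
      have c1 : ((Δ.filter fun y => G.Adj y z).card : ℝ) ≤ D := by exact_mod_cast card_nbr_le hdeg Δ z
      have := mul_le_mul_of_nonneg_right c1 (mul_nonneg (mul_nonneg hβ (v0 z)) hM0)
      linarith
    refine (Finset.sum_le_sum step).trans ?_
    rw [← Finset.sum_mul, ← ENNReal.ofReal_sum_of_nonneg, ← Finset.mul_sum]
    intro z _
    have := v0 z
    positivity
  have LWx : LI G β ρ Δ (fun φ => ENNReal.ofReal (W φ)) x ≤ ENNReal.ofReal q * ZI G β ρ Δ x := by
    have a1 := LI_fkg_anti (G := G) (ρ := ρ) hβ Δ _ Wm.ennreal_ofReal Wanti hx0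
    have zp := ZI_pos (G := G) (β := β) h Δ 0
    have zt := ZI_lt_top (G := G) hβ h Δ 0
    rw [← ENNReal.mul_le_mul_iff_left zp.ne' zt.ne]
    refine a1.trans ?_
    rw [mul_assoc, mul_comm (ZI G β ρ Δ x), ← mul_assoc]
    exact mul_le_mul_left LW0 _
  -- pointwise inequality
  have pw : ∀ φ : ↥Δ → ℝ, ENNReal.ofReal (Real.exp (-q) * (1 + q)) * eI G β Δ (Function.updateFinset x Δ φ) ≤
      eI G β Δ (Function.updateFinset x' Δ φ) +
      ENNReal.ofReal (Real.exp (-q)) * (ENNReal.ofReal (W (Function.updateFinset x Δ φ)) *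
        eI G β Δ (Function.updateFinset x Δ φ)) := by
    intro φ
    set X := Function.updateFinset x Δ φ with hX
    set X' := Function.updateFinset x' Δ φ with hX'
    have in1 : ∀ a ∈ Δ, X a = X' a := fun a ha => by simp [hX, hX', Function.updateFinset_def, ha]
    have out : ∀ z ∈ Bd, X' z - X z = v z := fun z hz => by
      have : z ∉ Δ := fun h' => Finset.disjoint_left.1 hdisj h' hz
      simp [hX, hX', Function.updateFinset_def, this, hv]
    have ch := hI_change (β := β) hcl hdisj X X' in1
    have lower : -W X ≤ β * ∑ a ∈ Δ, ∑ z ∈ Bd, if G.Adj a z then X a * (X' z - X z) else 0 := by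
      rw [hW, Finset.sum_comm, Finset.mul_sum, ← Finset.sum_neg_distrib]
      refine Finset.sum_le_sum fun z hz => ?_
      rw [Finset.mul_sum, ← Finset.sum_neg_distrib]
      refine Finset.sum_le_sum fun a _ => ?_
      simp only [ht]
      split_ifs
      · rw [out z hz]
        have := mul_le_mul_of_nonneg_left (le_max_left (-X a) 0) (mul_nonneg hβ (v0 z))
        linarith
      · simp
    have w1 : Real.exp (-q) * (1 + q) ≤ Real.exp (hI G β Δ X' - hI G β Δ X) + Real.exp (-q) * W X := by
      have : Real.exp (-W X) ≤ Real.exp (hI G β Δ X' - hI G β Δ X) :=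
        Real.exp_le_exp.2 (by rw [ch]; linarith)
      have h2 : Real.exp (-W X) = Real.exp (-q) * Real.exp (q - W X) := by
        rw [← Real.exp_add]; ring_nf
      have h3 := Real.add_one_le_exp (q - W X)
      have h4 := mul_le_mul_of_nonneg_left h3 (Real.exp_pos (-q)).le
      linarith
    unfold eI
    rw [← ENNReal.ofReal_mul (by positivity), ← ENNReal.ofReal_mul (W0 X),
      ← ENNReal.ofReal_mul (by positivity),
      ← ENNReal.ofReal_add (by positivity) (mul_nonneg (by positivity) (mul_nonneg (W0 X) (by positivity)))]
    refine ENNReal.ofReal_le_ofReal ?_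
    have h5 := mul_le_mul_of_nonneg_right w1 (Real.exp_pos (hI G β Δ X)).le
    have h6 : Real.exp (hI G β Δ X') = Real.exp (hI G β Δ X' - hI G β Δ X) * Real.exp (hI G β Δ X) := by
      rw [← Real.exp_add]; ring_nf
    rw [h6]
    linarith
  have int := lintegral_mono (μ := Measure.pi fun _ : ↥Δ => ρ) pw
  have em : ∀ y, Measurable fun φ : ↥Δ → ℝ => eI G β Δ (Function.updateFinset y Δ φ) := fun y =>
    (eI_measurable Δ).comp measurable_updateFinset
  rw [lintegral_const_mul _ (em x), lintegral_add_left (em x'), lintegral_const_mul] at int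
  · have z1 : ∀ y, ∫⁻ φ, eI G β Δ (Function.updateFinset y Δ φ) ∂(Measure.pi fun _ : ↥Δ => ρ) =
        ZI G β ρ Δ y := fun y => by unfold ZI; rw [LI_apply]; simp
    rw [z1, z1] at int
    change _ ≤ _ + _ * LI G β ρ Δ (fun φ => ENNReal.ofReal (W φ)) x at int
    have zt := ZI_lt_top (G := G) hβ h Δ x
    have i2 := int.trans (add_le_add_right (mul_le_mul_right LWx _) _)
    rw [mul_add, mul_one, ENNReal.ofReal_add (by positivity) (by positivity), add_mul,
      ENNReal.ofReal_mul (by positivity), mul_assoc (ENNReal.ofReal (Real.exp (-q)))] at i2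
    have i3 := (ENNReal.add_le_add_iff_right (ENNReal.mul_ne_top ENNReal.ofReal_ne_top
      (ENNReal.mul_ne_top ENNReal.ofReal_ne_top zt.ne))).1 i2
    rwa [mul_comm]
  · exact ((Wm.ennreal_ofReal.mul (eI_measurable Δ)).comp measurable_updateFinset)

end Wmono

section Harris
variable {V : Type*}

theorem one_site {ζ : Measure ℝ} [IsFiniteMeasure ζ] (hζ : ζ Set.univ ≠ 0) (K : ℝ) (H φ : ℝ → ℝ≥0∞)
    (Hm : Measurable H) (hH : ∀ u, u ≤ K → H u = 1) (hφ : ∀ u' u, K < u' → φ u' ≤ φ u) :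
    ∫⁻ u, H u * φ u ∂ζ ≤ (1 + (∫⁻ u in Set.Ioi K, H u ∂ζ) / ζ Set.univ) * ∫⁻ u, φ u ∂ζ := by
  have hφ2 : ∀ u', K < u' → φ u' ≤ (∫⁻ u, φ u ∂ζ) / ζ Set.univ := by
    intro u' hu'
    rw [ENNReal.le_div_iff_mul_le (Or.inl hζ) (Or.inl (measure_ne_top _ _)), ← lintegral_const]
    exact lintegral_mono fun u => hφ u' u hu'
  rw [← lintegral_add_compl (fun u => H u * φ u) (measurableSet_Ioi (a := K)), add_comm, add_mul, one_mul]
  refine add_le_add ?_ ?_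
  · refine le_trans (le_of_eq (setLIntegral_congr_fun measurableSet_Ioi.compl fun u hu => ?_))
      (setLIntegral_le_lintegral (Set.Ioi K)ᶜ φ)
    simp only [Set.mem_compl_iff, Set.mem_Ioi, not_lt] at hu
    simp [hH u hu]
  · calc ∫⁻ u in Set.Ioi K, H u * φ u ∂ζ
        ≤ ∫⁻ u in Set.Ioi K, H u * ((∫⁻ u, φ u ∂ζ) / ζ Set.univ) ∂ζ :=
          setLIntegral_mono' measurableSet_Ioi fun u hu => mul_le_mul_right (hφ2 u hu) _
      _ = (∫⁻ u in Set.Ioi K, H u ∂ζ) * ((∫⁻ u, φ u ∂ζ) / ζ Set.univ) := lintegral_mul_const _ Hm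
      _ = _ := by rw [ENNReal.div_eq_inv_mul, ENNReal.div_eq_inv_mul]; ring

theorem multi_site {ζ : Measure ℝ} [IsFiniteMeasure ζ] (hζ : ζ Set.univ ≠ 0) (K : V → ℝ)
    (H : V → ℝ → ℝ≥0∞) (Hm : ∀ z, Measurable (H z)) (hH : ∀ z u, u ≤ K z → H z u = 1)
    (T : Finset V) (f : (V → ℝ) → ℝ≥0∞) (fm : Measurable f)
    (hf : ∀ z ∈ T, ∀ x u' u, K z < u' → f (Function.update x z u') ≤ f (Function.update x z u))
    (x : V → ℝ) :
    (∫⋯∫⁻_T, (fun x => (∏ z ∈ T, H z (x z)) * f x) ∂(fun _ => ζ)) x ≤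
      (∏ z ∈ T, (1 + (∫⁻ u in Set.Ioi (K z), H z u ∂ζ) / ζ Set.univ)) *
        (∫⋯∫⁻_T, f ∂(fun _ => ζ)) x := by
  induction T using Finset.induction generalizing f with
  | empty => simp
  | insert i T hi ih =>
    have pm : ∀ T : Finset V, Measurable fun x : V → ℝ => ∏ z ∈ T, H z (x z) := fun T =>
      Finset.measurable_fun_prod _ fun z _ => (Hm z).comp (measurable_pi_apply z)
    rw [lmarginal_insert' (fun x => (∏ z ∈ insert i T, H z (x z)) * f x) ((pm _).mul fm) hi, lmarginal_insert' _ fm hi, Finset.prod_insert hi]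
    set f' : (V → ℝ) → ℝ≥0∞ := fun x => ∫⁻ u, f (Function.update x i u) ∂ζ with hf'
    have f'm : Measurable f' := by
      have := Measurable.lmarginal (fun _ : V => ζ) (s := {i}) fm
      convert this using 1
      funext x
      rw [lmarginal_singleton]
    set cc := (1 + (∫⁻ u in Set.Ioi (K i), H i u ∂ζ) / ζ Set.univ)
    have step : ∀ x, ∫⁻ u, (∏ z ∈ insert i T, H z (Function.update x i u z)) * f (Function.update x i u) ∂ζ ≤
        cc * ((∏ z ∈ T, H z (x z)) * f' x) := by
      intro x
      have e : ∀ u, (∏ z ∈ insert i T, H z (Function.update x i u z)) * f (Function.update x i u) =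
          (∏ z ∈ T, H z (x z)) * (H i u * f (Function.update x i u)) := by
        intro u
        rw [Finset.prod_insert hi, Function.update_self]
        have : ∏ z ∈ T, H z (Function.update x i u z) = ∏ z ∈ T, H z (x z) :=
          Finset.prod_congr rfl fun z hz => by
            have hzi : z ≠ i := fun h => hi (h ▸ hz)
            rw [Function.update_of_ne hzi]
        rw [this]; ring
      simp only [e]
      have mm : Measurable fun u => H i u * f (Function.update x i u) :=
        (Hm i).mul (fm.comp (measurable_update x))
      rw [lintegral_const_mul _ mm, mul_left_comm]
      refine mul_le_mul_right ?_ _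
      exact one_site hζ (K i) (H i) (fun u => f (Function.update x i u)) (Hm i) (hH i)
        (fun u' u hu => hf i (Finset.mem_insert_self _ _) x u' u hu)
    refine (lmarginal_mono step x).trans ?_
    have pull : (∫⋯∫⁻_T, (fun x => cc * ((∏ z ∈ T, H z (x z)) * f' x)) ∂(fun _ => ζ)) x =
        cc * (∫⋯∫⁻_T, (fun x => (∏ z ∈ T, H z (x z)) * f' x) ∂(fun _ => ζ)) x := by
      unfold lmarginal
      rw [lintegral_const_mul]
      exact (((pm T).mul f'm).comp measurable_updateFinset)
    rw [pull, mul_assoc]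
    refine mul_le_mul_right (ih f' f'm ?_) _
    intro z hz x u' u hu
    refine lintegral_mono fun s => ?_
    have hzi : z ≠ i := fun h => hi (h ▸ hz)
    rw [Function.update_comm hzi, Function.update_comm hzi]
    exact hf z (Finset.mem_insert_of_mem hz) _ u' u hu

noncomputable def clipF (Bd : Finset V) (B : ℝ) (x : V → ℝ) : V → ℝ :=
  fun v => if v ∈ Bd then max (x v) B else 0

noncomputable def xBF (Bd : Finset V) (B : ℝ) (K : V → ℝ) (x : V → ℝ) : V → ℝ :=
  fun v => if v ∈ Bd then (if K v < x v then B else max (x v) B) else 0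

noncomputable def twF (Bd : Finset V) (c : ℝ) (x : V → ℝ) : ℝ≥0∞ :=
  ENNReal.ofReal (Real.exp (c * ∑ z ∈ Bd, x z))

theorem clipF_mono (Bd : Finset V) (B : ℝ) : Monotone (clipF Bd B) := by
  intro x y h v
  unfold clipF
  split_ifs
  · exact max_le_max (h v) le_rfl
  · exact le_rfl

theorem clipF_eq (Bd : Finset V) (B : ℝ) (x : V → ℝ) (h1 : ∀ z ∈ Bd, B ≤ x z) (h2 : ∀ v ∉ Bd, x v = 0) :
    clipF Bd B x = x := by
  funext v
  unfold clipF
  split_ifs with h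
  · exact max_eq_left (h1 v h)
  · exact (h2 v h).symm

theorem clipF_measurable (Bd : Finset V) (B : ℝ) : Measurable (clipF Bd B) := by
  refine measurable_pi_lambda _ fun v => ?_
  unfold clipF
  split_ifs
  · exact (measurable_pi_apply v).max measurable_const
  · exact measurable_const

theorem xBF_measurable (Bd : Finset V) (B : ℝ) (K : V → ℝ) : Measurable (xBF Bd B K) := by
  refine measurable_pi_lambda _ fun v => ?_
  unfold xBF
  by_cases hv : v ∈ Bd
  · simp only [hv, if_true]
    exact Measurable.ite (measurableSet_lt measurable_const (measurable_pi_apply v)) measurable_const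
      ((measurable_pi_apply v).max measurable_const)
  · simp only [hv, if_false]; exact measurable_const

theorem clip_xBF (Bd : Finset V) (B : ℝ) (K : V → ℝ) (x : V → ℝ) :
    clipF Bd B (xBF Bd B K x) = xBF Bd B K x := by
  refine clipF_eq _ _ _ ?_ ?_
  · intro z hz
    unfold xBF
    simp only [hz, if_true]
    split_ifs
    · exact le_rfl
    · exact le_max_right _ _
  · intro v hv; simp [xBF, hv]

theorem xBF_le (Bd : Finset V) (B : ℝ) (K : V → ℝ) (x : V → ℝ) : xBF Bd B K x ≤ clipF Bd B x := by
  intro v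
  unfold xBF clipF
  split_ifs
  · exact le_max_right _ _
  · exact le_rfl
  · exact le_rfl

theorem xBF_update (Bd : Finset V) (B : ℝ) (K : V → ℝ) (x : V → ℝ) (z : V) (u' u : ℝ)
    (hu : K z < u') : xBF Bd B K (Function.update x z u') ≤ xBF Bd B K (Function.update x z u) := by
  intro v
  unfold xBF
  by_cases hv : v ∈ Bd
  · simp only [hv, if_true]
    by_cases hvz : v = z
    · subst hvz
      simp only [Function.update_self, hu, if_true]
      split_ifs
      · exact le_rfl
      · exact le_max_right _ _
    · simp only [Function.update_of_ne hvz]; exact le_rfl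
  · simp [hv]

theorem twF_measurable (Bd : Finset V) (c : ℝ) : Measurable (twF Bd c) := by
  unfold twF
  refine ENNReal.measurable_ofReal.comp (Real.measurable_exp.comp ?_)
  exact (Finset.measurable_fun_sum _ fun z _ => measurable_pi_apply z).const_mul _

variable (G : SimpleGraph V) [∀ x : V, Fintype (G.neighborSet x)] (β : ℝ) (ρ : Measure ℝ)

noncomputable def wF (Δ Bd : Finset V) (c B : ℝ) (x : V → ℝ) : ℝ≥0∞ :=
  twF Bd c (clipF Bd B x) * ZI G β ρ Δ (clipF Bd B x)

noncomputable def NF (ζ : Measure ℝ) (Δ Bd : Finset V) (c : ℝ) (F : (V → ℝ) → ℝ≥0∞) : ℝ≥0∞ :=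
  (∫⋯∫⁻_Bd, (fun x => twF Bd c x * LI G β ρ Δ F x) ∂(fun _ => ζ)) 0

/-- The hypotheses shared by the estimates on a fixed volume. -/
structure Hyp (D : ℕ) (Δ Bd : Finset V) (M : ℝ) : Prop where
  hβ : 0 ≤ β
  hρ : RhoOK ρ
  hdeg : ∀ x : V, G.degree x ≤ D
  hcl : clN G Δ ⊆ Δ ∪ Bd
  hdisj : Disjoint Δ Bd
  hM0 : 0 ≤ M
  hM : ∀ y ∈ Δ, LI G β ρ Δ (fun x => ENNReal.ofReal (-x y)) 0 ≤ ENNReal.ofReal M * ZI G β ρ Δ 0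

variable {G β ρ}

theorem wF_mono {D : ℕ} {Δ Bd : Finset V} {M B : ℝ} (H : Hyp G β ρ D Δ Bd M) (hB : 0 ≤ B) :
    Monotone (wF G β ρ Δ Bd (β * D * M) B) := by
  intro x x' hxx
  unfold wF
  have hc := clipF_mono Bd B hxx
  have h0 : 0 ≤ clipF Bd B x := fun v => by
    unfold clipF; split_ifs
    · exact hB.trans (le_max_right _ _)
    · exact le_rfl
  have := Z_mono H.hβ H.hρ H.hdeg H.hcl H.hdisj H.hM0 H.hM _ _ h0 hc
  refine le_trans (le_of_eq ?_) (mul_le_mul_right this _)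
  unfold twF
  rw [mul_comm (ZI G β ρ Δ _), ← mul_assoc, ← ENNReal.ofReal_mul (Real.exp_pos _).le, ← Real.exp_add]
  congr 3
  rw [Finset.sum_sub_distrib]; ring

theorem wF_measurable [SigmaFinite ρ] (Δ Bd : Finset V) (c B : ℝ) :
    Measurable (wF G β ρ Δ Bd c B) :=
  ((twF_measurable Bd c).comp (clipF_measurable Bd B)).mul
    ((ZI_measurable Δ).comp (clipF_measurable Bd B))

theorem wF_int_le {ζ : Measure ℝ} [SigmaFinite ζ] {B : ℝ} (hζ : ∀ᵐ u ∂ζ, B ≤ u) (Δ Bd : Finset V) (c : ℝ) :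
    (∫⋯∫⁻_Bd, wF G β ρ Δ Bd c B ∂(fun _ => ζ)) 0 = NF G β ρ ζ Δ Bd c (fun _ => 1) := by
  unfold NF
  refine le_antisymm (lmarg_ae hζ Bd fun x h1 h2 => ?_) (lmarg_ae hζ Bd fun x h1 h2 => ?_)
  · unfold wF; rw [clipF_eq _ _ _ h1 h2]; exact le_rfl
  · unfold wF; rw [clipF_eq _ _ _ h1 h2]; exact le_rfl

theorem harris {ζ : Measure ℝ} [SigmaFinite ζ] {D : ℕ} {Δ Bd : Finset V} {M B : ℝ}
    (hζ : ∀ᵐ u ∂ζ, B ≤ u) (H : Hyp G β ρ D Δ Bd M) (hB : 0 ≤ B)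
    (F : (V → ℝ) → ℝ≥0∞) (hF : Measurable F) (hmono : Monotone F) :
    (∫⋯∫⁻_Bd, KI G β ρ Δ F ∂(fun _ => ζ)) 0 * NF G β ρ ζ Δ Bd (β * D * M) (fun _ => 1) ≤
      NF G β ρ ζ Δ Bd (β * D * M) F * (∫⋯∫⁻_Bd, (fun _ => 1) ∂(fun _ => ζ)) 0 := by
  have := H.hρ.finite
  have wm := wF_measurable (G := G) (β := β) (ρ := ρ) Δ Bd (β * D * M) B
  have km := KI_measurable (G := G) (β := β) (ρ := ρ) Δ hF
  have h1 := four_fun (fun _ => ζ) Bd (KI G β ρ Δ F) (wF G β ρ Δ Bd (β * D * M) B)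
    (fun x => KI G β ρ Δ F x * wF G β ρ Δ Bd (β * D * M) B x) (fun _ => 1) km wm (km.mul wm)
    measurable_const (fun x y => by
      rw [mul_one]
      exact mul_le_mul' (KI_mono H.hβ H.hρ Δ F hF hmono le_sup_left) (wF_mono H hB le_sup_right)) 0 0
  rw [sup_idem, inf_idem, wF_int_le hζ] at h1
  refine h1.trans (mul_le_mul_left ?_ _)
  unfold NF
  refine lmarg_ae hζ Bd fun x h1 h2 => ?_
  unfold wF
  rw [clipF_eq _ _ _ h1 h2, mul_left_comm, KI_mul H.hβ H.hρ]

end Harris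

section Reg
variable {V : Type*} {G : SimpleGraph V} [∀ x : V, Fintype (G.neighborSet x)] {β : ℝ} {ρ : Measure ℝ}

/-- regularity with `λ = 2` -/
def RegH (G : SimpleGraph V) (β : ℝ) (ρ : Measure ℝ) (C Ct b : ℝ) : Prop :=
  ∀ (Λ Λ' : Finset V) (hsub : Λ' ⊆ Λ) (ξ : V → ℝ),
      marg hsub (gibbs (Jnn G) β ρ Λ ξ) ≤
        ENNReal.ofReal (∏ x ∈ Λ', Real.exp
          (Ct * ARealL (Jnn G) (fun _ => 1) 2 ξ C x (↑Λ) ^ 2)) • prodN (rhoMod ρ b) Λ'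

noncomputable def kap (ρ : Measure ℝ) (b : ℝ) (g : ℝ → ℝ≥0∞) : ℝ≥0∞ :=
  (rhoMod ρ b Set.univ)⁻¹ * ∫⁻ u, g u ∂rhoMod ρ b

theorem rhoMod_univ (ρ : Measure ℝ) (b : ℝ) :
    rhoMod ρ b Set.univ = ∫⁻ u, ENNReal.ofReal (Real.exp (b * u ^ 2)) ∂ρ := by
  unfold rhoMod
  rw [withDensity_apply _ MeasurableSet.univ, Measure.restrict_univ]

theorem rhoMod_finite (h : RhoOK ρ) {b : ℝ} (hb : 0 ≤ b) : IsFiniteMeasure (rhoMod ρ b) :=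
  ⟨by rw [rhoMod_univ]; exact h.fin' b hb⟩

theorem rhoMod_lintegral (ρ : Measure ℝ) (b : ℝ) {g : ℝ → ℝ≥0∞} (hg : Measurable g) :
    ∫⁻ u, g u ∂rhoMod ρ b = ∫⁻ u, ENNReal.ofReal (Real.exp (b * u ^ 2)) * g u ∂ρ := by
  unfold rhoMod
  rw [lintegral_withDensity_eq_lintegral_mul _ (by fun_prop) hg]
  rfl

theorem rhoMod_ne_zero (h : RhoOK ρ) {b : ℝ} (hb : 0 ≤ b) : rhoMod ρ b Set.univ ≠ 0 := by
  rw [rhoMod_univ]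
  intro h0
  have h1 : ρ Set.univ ≤ ∫⁻ u, ENNReal.ofReal (Real.exp (b * u ^ 2)) ∂ρ := by
    rw [← lintegral_one]
    refine lintegral_mono fun u => ?_
    rw [← ENNReal.ofReal_one]
    exact ENNReal.ofReal_le_ofReal (Real.one_le_exp (by positivity))
  rw [h0] at h1
  exact h.ne_zero (le_antisymm h1 zero_le)

theorem lintegral_prod_coe (μ : Measure ℝ) [SigmaFinite μ] (T : Finset V) (g : V → ℝ → ℝ≥0∞)
    (gm : ∀ a, Measurable (g a)) :
    ∫⁻ ψ : ↥T → ℝ, ∏ a : ↥T, g a.1 (ψ a) ∂Measure.pi (fun _ => μ) = ∏ a ∈ T, ∫⁻ u, g a u ∂μ := by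
  have h := lmarginal_prod (fun _ : V => μ) T g gm T subset_rfl 0
  rw [Finset.sdiff_self, Finset.prod_empty, mul_one] at h
  rw [← h, lmarginal]
  refine lintegral_congr fun ψ => ?_
  refine Eq.trans ?_ (Finset.prod_coe_sort T (fun a => g a (Function.updateFinset (0 : V → ℝ) T ψ a)))
  refine Finset.prod_congr rfl fun a _ => ?_
  simp [Function.updateFinset_def]

theorem reg_prod (hβ : 0 ≤ β) (h : RhoOK ρ) {C Ct b : ℝ} (hb : 0 ≤ b) (hreg : RegH G β ρ C Ct b)
    (Δ T : Finset V) (hT : T ⊆ Δ) (ξ : V → ℝ) (g : V → ℝ → ℝ≥0∞) (gm : ∀ a, Measurable (g a)) :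
    LI G β ρ Δ (fun x => ∏ a ∈ T, g a (x a)) ξ ≤ ZI G β ρ Δ ξ *
      ∏ a ∈ T, (ENNReal.ofReal (Real.exp (Ct * ARealL (Jnn G) (fun _ => 1) 2 ξ C a (↑Δ) ^ 2)) *
        kap ρ b (g a)) := by
  have := h.finite
  have := rhoMod_finite h hb
  have Fm : Measurable fun x : V → ℝ => ∏ a ∈ T, g a (x a) :=
    Finset.measurable_fun_prod _ fun a _ => (gm a).comp (measurable_pi_apply a)
  rw [← KI_mul hβ h, mul_comm]
  refine mul_le_mul_right ?_ _
  unfold KI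
  rw [← gibbs_lintegral _ _ _ Fm]
  have e : ∀ φ : ↥Δ → ℝ, ∏ a ∈ T, g a (Function.updateFinset ξ Δ φ a) =
      ∏ a : ↥T, g a.1 ((fun (φ : ↥Δ → ℝ) (x : ↥T) => φ ⟨x.1, hT x.2⟩) φ a) := by
    intro φ
    rw [← Finset.prod_coe_sort]
    refine Finset.prod_congr rfl fun a _ => ?_
    simp [Function.updateFinset_def, hT a.2]
  simp only [e]
  have Fm2 : Measurable fun ψ : ↥T → ℝ => ∏ a : ↥T, g a.1 (ψ a) :=
    Finset.measurable_fun_prod _ fun a _ => (gm a).comp (measurable_pi_apply a)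
  have mm : Measurable fun (φ : ↥Δ → ℝ) (x : ↥T) => φ ⟨x.1, hT x.2⟩ :=
    measurable_pi_lambda _ fun x => measurable_pi_apply _
  have l1 : ∫⁻ ψ, ∏ a : ↥T, g a.1 (ψ a) ∂marg hT (gibbs (Jnn G) β ρ Δ ξ) = _ := lintegral_map Fm2 mm
  rw [← l1]
  refine (lintegral_mono' (hreg Δ T hT ξ) le_rfl).trans ?_
  unfold prodN
  rw [lintegral_smul_measure, lintegral_smul_measure, smul_eq_mul, smul_eq_mul,
    lintegral_prod_coe _ T g gm, Measure.pi_univ,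
    ENNReal.ofReal_prod_of_nonneg (fun a _ => (Real.exp_pos _).le), Finset.prod_mul_distrib]
  refine mul_le_mul_right (le_of_eq ?_) _
  unfold kap
  rw [Finset.prod_mul_distrib]
  simp only [Finset.prod_const, Finset.card_univ, Fintype.card_coe]
  rw [ENNReal.inv_pow]

theorem A_bound (hconn : G.Connected) {C : ℝ} (hC : 1 ≤ C) {Δ Bd : Finset V} (hcl : clN G Δ ⊆ Δ ∪ Bd)
    (ξ : V → ℝ) (y : V) (k : ℕ)
    (h : ∀ z ∈ Bd, 0 ≤ ξ z ∧ ξ z ≤ C * 2 ^ (G.dist y z + k)) :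
    0 ≤ ARealL (Jnn G) (fun _ => 1) 2 ξ C y (↑Δ) ∧
    ARealL (Jnn G) (fun _ => 1) 2 ξ C y (↑Δ) ≤ 2 ^ k := by
  unfold ARealL
  set S := {A : ℝ | 1 ≤ A ∧ ∀ (m : ℕ) (w : ℕ → V), IsWalk (Jnn G) (↑Δ) m w → w 0 = y → w m ∈ (↑Δ : Set V) →
    |∑' z : {z : V // z ∉ (↑Δ : Set V)}, Jnn G (w m) z.1 * ξ z.1| ≤
      (∑' z : {z : V // z ∉ (↑Δ : Set V)}, |Jnn G (w m) z.1| * (fun _ => 1) (Jnn G (w m) z.1)) * C * A * 2 ^ (m + 1) *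
        ∏ i ∈ Finset.range m, (fun _ => (1:ℝ)) (Jnn G (w i) (w (i + 1)))} with hS
  have mem : (2:ℝ) ^ k ∈ S := by
    refine ⟨one_le_pow₀ (by norm_num), ?_⟩
    intro m w hw h0 hm
    have hm' : w m ∈ Δ := by simpa using hm
    have e1 : ∑' z : {z : V // z ∉ (↑Δ : Set V)}, Jnn G (w m) z.1 * ξ z.1 =
      ∑ z ∈ clN G Δ \ Δ, if G.Adj (w m) z then ξ z else 0 := hamil_tsum Δ (w m) hm' ξ
    have e2 : ∑' z : {z : V // z ∉ (↑Δ : Set V)}, |Jnn G (w m) z.1| * (1:ℝ) =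
      ∑ z ∈ clN G Δ \ Δ, if G.Adj (w m) z then 1 else 0 := by
      have := hamil_tsum (G := G) Δ (w m) hm' (fun _ => 1)
      rw [← this]
      refine tsum_congr fun z => ?_
      unfold Jnn
      split_ifs <;> simp
    have dst : ∀ j ≤ m, G.dist y (w j) ≤ j := by
      intro j hj
      induction j with
      | zero => simp [h0]
      | succ j ih =>
        have hadj : G.Adj (w j) (w (j+1)) := by
          have := hw.2 j (by omega)
          unfold Jnn at this
          by_contra hc
          simp [hc] at this
        have t := hconn.dist_triangle (u := y) (v := w j) (w := w (j+1))
        have := SimpleGraph.dist_eq_one_iff_adj.2 hadj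
        have := ih (by omega)
        omega
    simp only [Finset.prod_const_one, mul_one]
    rw [e1]
    simp only [mul_one] at e2
    rw [e2]
    have hz : ∀ z ∈ clN G Δ \ Δ, z ∈ Bd := fun z hz => by
      obtain ⟨h1, h2⟩ := Finset.mem_sdiff.1 hz
      exact (Finset.mem_union.1 (hcl h1)).resolve_left h2
    rw [abs_of_nonneg (Finset.sum_nonneg fun z hz' => by
      split_ifs
      · exact (h z (hz z hz')).1
      · exact le_rfl), Finset.sum_mul, Finset.sum_mul, Finset.sum_mul]
    refine Finset.sum_le_sum fun z hz' => ?_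
    split_ifs with hadj
    · refine (h z (hz z hz')).2.trans ?_
      have t := hconn.dist_triangle (u := y) (v := w m) (w := z)
      have := SimpleGraph.dist_eq_one_iff_adj.2 hadj
      have := dst m le_rfl
      have : (2:ℝ) ^ (G.dist y z + k) ≤ 2 ^ (k + (m+1)) := pow_le_pow_right₀ (by norm_num) (by omega)
      rw [pow_add 2 k] at this
      nlinarith
    · simp
  refine ⟨le_csInf ⟨_, mem⟩ fun A hA => zero_le_one.trans hA.1, csInf_le ⟨1, fun A hA => hA.1⟩ mem⟩

end Reg

section Orth
variable {V : Type*} {G : SimpleGraph V} [∀ x : V, Fintype (G.neighborSet x)] {β : ℝ} {ρ : Measure ℝ}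

theorem card_nbr_le' {D : ℕ} (hdeg : ∀ x : V, G.degree x ≤ D) (Δ : Finset V) (z : V) :
    (Δ.filter fun y => G.Adj z y).card ≤ D := by
  have := card_nbr_le hdeg Δ z
  simpa only [G.adj_comm z] using this

/-- vertices of `Δ` adjacent to `Bad` -/
noncomputable def nbY (G : SimpleGraph V) (Δ Bad : Finset V) : Finset V :=
  Δ.filter fun a => ∃ z ∈ Bad, G.Adj a z

theorem swap_sum_le {D : ℕ} (hdeg : ∀ x : V, G.degree x ≤ D) (Y Bad : Finset V) (w : V → ℝ)
    (hw : ∀ z ∈ Bad, 0 ≤ w z) :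
    ∑ a ∈ Y, ∑ z ∈ Bad, (if G.Adj a z then w z else 0) ≤ D * ∑ z ∈ Bad, w z := by
  rw [Finset.sum_comm, Finset.mul_sum]
  refine Finset.sum_le_sum fun z hz => ?_
  rw [← Finset.sum_filter, Finset.sum_const, nsmul_eq_mul]
  exact mul_le_mul_of_nonneg_right (by exact_mod_cast card_nbr_le hdeg Y z) (hw z hz)

theorem ham_bound (hβ : 0 ≤ β) {D : ℕ} (hdeg : ∀ x : V, G.degree x ≤ D) {Δ Bd : Finset V}
    (hcl : clN G Δ ⊆ Δ ∪ Bd) (hdisj : Disjoint Δ Bd) (x y : V → ℝ)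
    (hxy : ∀ v ∈ Δ, x v = y v) (Bad : Finset V) (hbad : Bad ⊆ Bd)
    (h1 : ∀ z ∈ Bd, z ∉ Bad → y z = x z) (h2 : ∀ z ∈ Bad, 0 ≤ x z ∧ x z ≤ y z) :
    hI G β Δ y ≤ hI G β Δ x + β * D * ∑ z ∈ Bad, y z ^ 2 + β * D * ∑ a ∈ nbY G Δ Bad, x a ^ 2 := by
  rw [hI_change hcl hdisj x y hxy]
  have key : ∑ a ∈ Δ, ∑ z ∈ Bd, (if G.Adj a z then x a * (y z - x z) else 0) ≤
      D * ∑ z ∈ Bad, y z ^ 2 + D * ∑ a ∈ nbY G Δ Bad, x a ^ 2 := by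
    have e1 : ∑ a ∈ Δ, ∑ z ∈ Bd, (if G.Adj a z then x a * (y z - x z) else 0) ≤
        ∑ a ∈ Δ, ∑ z ∈ Bad, ((if G.Adj a z then y z ^ 2 else 0) + (if G.Adj a z then x a ^ 2 else 0)) := by
      refine Finset.sum_le_sum fun a _ => ?_
      rw [← Finset.sum_subset hbad]
      · refine Finset.sum_le_sum fun z hz => ?_
        obtain ⟨p, q⟩ := h2 z hz
        split_ifs
        · nlinarith [sq_nonneg (x a - (y z - x z)), sq_nonneg (x a)]
        · simp
      · intro z hz hz'
        rw [h1 z hz hz']; simp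
    refine e1.trans ?_
    simp only [Finset.sum_add_distrib]
    refine add_le_add (swap_sum_le hdeg Δ Bad (fun z => y z ^ 2) fun z _ => sq_nonneg _) ?_
    unfold nbY
    rw [Finset.mul_sum, Finset.sum_filter]
    refine Finset.sum_le_sum fun a _ => ?_
    split_ifs with ha
    · rw [← Finset.sum_filter, Finset.sum_const, nsmul_eq_mul]
      exact mul_le_mul_of_nonneg_right (by exact_mod_cast card_nbr_le' hdeg Bad a) (sq_nonneg _)
    · refine le_of_eq (Finset.sum_eq_zero fun z hz => if_neg fun hh => ha ⟨z, hz, hh⟩)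
  have := mul_le_mul_of_nonneg_left key hβ
  linarith

noncomputable def Hf (K c u : ℝ) : ℝ≥0∞ := if u ≤ K then 1 else ENNReal.ofReal (Real.exp (c * u ^ 2))

theorem Hf_measurable (K c : ℝ) : Measurable (Hf K c) := by
  unfold Hf
  exact Measurable.ite measurableSet_Iic measurable_const (by fun_prop)

structure Geo (G : SimpleGraph V) (Δ Bd S : Finset V) (d : V → ℕ) : Prop where
  hS : S ⊆ Δ
  hadj : ∀ s ∈ S, ∀ z ∈ Bd, ¬ G.Adj s z
  d1 : ∀ s ∈ S, ∀ z, d z ≤ G.dist s z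
  d2 : ∀ z z', d z' ≤ d z + G.dist z z'

theorem exp_mul_ofReal (a b : ℝ) : ENNReal.ofReal (Real.exp a) * ENNReal.ofReal (Real.exp b) =
    ENNReal.ofReal (Real.exp (a + b)) := by
  rw [← ENNReal.ofReal_mul (Real.exp_pos _).le, ← Real.exp_add]

theorem exp_prod_ofReal {κ : Type*} (s : Finset κ) (a : κ → ℝ) : ∏ i ∈ s, ENNReal.ofReal (Real.exp (a i)) =
    ENNReal.ofReal (Real.exp (∑ i ∈ s, a i)) := by
  rw [Real.exp_sum, ENNReal.ofReal_prod_of_nonneg fun a _ => (Real.exp_pos _).le]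

theorem exp_le_ofReal {a b : ℝ} (h : a ≤ b) : ENNReal.ofReal (Real.exp a) ≤ ENNReal.ofReal (Real.exp b) :=
  ENNReal.ofReal_le_ofReal (Real.exp_le_exp.2 h)

theorem pt_bound (hconn : G.Connected) (hβ : 0 ≤ β) (h : RhoOK ρ) {C Ct b : ℝ} (hC : 1 ≤ C) (hCt : 0 ≤ Ct)
    (hb : 0 ≤ b) (hreg : RegH G β ρ C Ct b) {D : ℕ} (hdeg : ∀ x : V, G.degree x ≤ D) {Δ Bd S : Finset V}
    (hcl : clN G Δ ⊆ Δ ∪ Bd) (hdisj : Disjoint Δ Bd) {d : V → ℕ} (geo : Geo G Δ Bd S d)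
    {B c k0 : ℝ} (hB : 0 ≤ B) (hc : 0 ≤ c) (hk0 : 0 ≤ k0)
    (hK0 : kap ρ b (fun u => ENNReal.ofReal (Real.exp (β * D * u ^ 2))) ≤ ENNReal.ofReal (Real.exp k0))
    (hBK : ∀ z ∈ Bd, B ≤ C * 2 ^ d z)
    (g : V → ℝ → ℝ≥0∞) (gm : ∀ a, Measurable (g a)) (x : V → ℝ) (hx : ∀ z ∈ Bd, B ≤ x z)
    (hx0 : ∀ v ∉ Bd, x v = 0) :
    twF Bd c x * LI G β ρ Δ (fun x => ∏ a ∈ S, g a (x a)) x ≤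
      (∏ s ∈ S, (ENNReal.ofReal (Real.exp Ct) * kap ρ b (g s))) *
      ((∏ z ∈ Bd, Hf (C * 2 ^ d z) (c + β * D + D * (4 * Ct + k0)) (x z)) *
        wF G β ρ Δ Bd c B (xBF Bd B (fun z => C * 2 ^ d z) x)) := by
  have := h.finite
  set K : V → ℝ := fun z => C * 2 ^ d z with hKdef
  set Bad := Bd.filter fun z => K z < x z with hBad
  have hbs : Bad ⊆ Bd := Finset.filter_subset _ _
  set xB := xBF Bd B K x with hxB
  set Y := nbY G Δ Bad with hY
  have hK1 : ∀ z, (1:ℝ) ≤ 2 ^ d z ∧ (2:ℝ) ^ d z ≤ K z := fun z => by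
    have h1 : (1:ℝ) ≤ 2 ^ d z := one_le_pow₀ (by norm_num)
    refine ⟨h1, ?_⟩
    simp only [hKdef]; nlinarith
  have xBbad : ∀ z ∈ Bad, xB z = B := fun z hz => by
    obtain ⟨p, q⟩ := Finset.mem_filter.1 hz
    simp only [hxB, xBF, p, q, if_true]
  have xBgood : ∀ z ∈ Bd, z ∉ Bad → xB z = x z ∧ x z ≤ K z := fun z hz hz' => by
    have q : ¬ K z < x z := fun q => hz' (Finset.mem_filter.2 ⟨hz, q⟩)
    simp only [hxB, xBF, hz, q, if_true, if_false]
    exact ⟨max_eq_left (hx z hz), not_lt.1 q⟩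
  have xB0 : ∀ z ∈ Bd, 0 ≤ xB z ∧ xB z ≤ K z := fun z hz => by
    by_cases hz' : z ∈ Bad
    · rw [xBbad z hz']; exact ⟨hB, hBK z hz⟩
    · rw [(xBgood z hz hz').1]; exact ⟨hB.trans (hx z hz), (xBgood z hz hz').2⟩
  have badx : ∀ z ∈ Bad, (1:ℝ) ≤ x z ∧ (2:ℝ) ^ d z ≤ x z := fun z hz => by
    have q := (Finset.mem_filter.1 hz).2
    have := hK1 z
    exact ⟨by linarith, by linarith⟩
  have hSY : Disjoint S Y := by
    rw [Finset.disjoint_left]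
    intro s hs hs'
    obtain ⟨_, z, hz, hz'⟩ := Finset.mem_filter.1 hs'
    exact geo.hadj s hs z (hbs hz) hz'
  have hYΔ : Y ⊆ Δ := Finset.filter_subset _ _
  set g' : V → ℝ → ℝ≥0∞ := fun a => if a ∈ S then g a else fun u => ENNReal.ofReal (Real.exp (β * D * u ^ 2)) with hg'
  have gm' : ∀ a, Measurable (g' a) := fun a => by
    simp only [hg']; split_ifs
    · exact gm a
    · fun_prop
  set sb := ∑ z ∈ Bad, x z ^ 2 with hsb
  have step1 : LI G β ρ Δ (fun x => ∏ a ∈ S, g a (x a)) x ≤ ENNReal.ofReal (Real.exp (β * D * sb)) *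
      LI G β ρ Δ (fun x => ∏ a ∈ S ∪ Y, g' a (x a)) xB := by
    rw [← LI_const_mul Δ _ (fun x => ∏ a ∈ S ∪ Y, g' a (x a)) (Finset.measurable_fun_prod _ fun a _ => (gm' a).comp (measurable_pi_apply a)),
      LI_apply, LI_apply]
    refine lintegral_mono fun φ => ?_
    have eΔ : ∀ v ∈ Δ, Function.updateFinset xB Δ φ v = Function.updateFinset x Δ φ v := fun v hv => by
      simp [Function.updateFinset_def, hv]
    have eB : ∀ (w : V → ℝ), ∀ v ∈ Bd, Function.updateFinset w Δ φ v = w v := fun w v hv => by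
      have : v ∉ Δ := fun h' => Finset.disjoint_left.1 hdisj h' hv
      simp [Function.updateFinset_def, this]
    have hb1 := ham_bound hβ hdeg hcl hdisj (Function.updateFinset xB Δ φ) (Function.updateFinset x Δ φ) eΔ
      Bad hbs (fun z hz hz' => by rw [eB _ _ hz, eB _ _ hz, (xBgood z hz hz').1])
      (fun z hz => by
        rw [eB _ _ (hbs hz), eB _ _ (hbs hz), xBbad z hz]
        exact ⟨hB, hx z (hbs hz)⟩)
    rw [Finset.sum_congr rfl (fun z hz => by rw [eB x z (hbs hz)] : ∀ z ∈ Bad, Function.updateFinset x Δ φ z ^ 2 = x z ^ 2)] at hb1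
    have eS : ∏ a ∈ S ∪ Y, g' a (Function.updateFinset xB Δ φ a) =
        (∏ a ∈ S, g a (Function.updateFinset x Δ φ a)) *
          ENNReal.ofReal (Real.exp (β * D * ∑ a ∈ Y, Function.updateFinset xB Δ φ a ^ 2)) := by
      rw [Finset.prod_union hSY, Finset.mul_sum, ← exp_prod_ofReal]
      congr 1
      · refine Finset.prod_congr rfl fun a ha => ?_
        rw [eΔ a (geo.hS ha)]
        simp only [hg', ha, if_true]
      · refine Finset.prod_congr rfl fun a ha => ?_
        have : a ∉ S := fun h' => Finset.disjoint_left.1 hSY h' ha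
        simp only [hg', this, if_false]
    rw [eS]
    have := exp_le_ofReal hb1
    rw [← exp_mul_ofReal, ← exp_mul_ofReal] at this
    refine (mul_le_mul_right this _).trans (le_of_eq ?_)
    unfold eI
    ring
  have step2 := reg_prod hβ h hb hreg Δ (S ∪ Y) (Finset.union_subset geo.hS hYΔ) xB g' gm'
  have step3 : ∏ a ∈ S ∪ Y, (ENNReal.ofReal (Real.exp (Ct * ARealL (Jnn G) (fun _ => 1) 2 xB C a (↑Δ) ^ 2)) *
        kap ρ b (g' a)) ≤ (∏ s ∈ S, (ENNReal.ofReal (Real.exp Ct) * kap ρ b (g s))) *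
        ENNReal.ofReal (Real.exp (D * (4 * Ct + k0) * sb)) := by
    rw [Finset.prod_union hSY]
    refine mul_le_mul' (Finset.prod_le_prod' fun s hs => ?_) ?_
    · have hA := A_bound hconn hC hcl xB s 0 (fun z hz => by
        refine ⟨(xB0 z hz).1, (xB0 z hz).2.trans ?_⟩
        simp only [hKdef]
        exact mul_le_mul_of_nonneg_left (pow_le_pow_right₀ (by norm_num) (geo.d1 s hs z)) (by linarith))
      rw [pow_zero] at hA
      simp only [hg', hs, if_true]
      refine mul_le_mul_left (exp_le_ofReal ?_) _
      nlinarith [mul_le_mul_of_nonneg_left (show ARealL (Jnn G) (fun _ => 1) 2 xB C s (↑Δ) ^ 2 ≤ 1 by nlinarith) hCt]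
    · have : ∀ y ∈ Y, ENNReal.ofReal (Real.exp (Ct * ARealL (Jnn G) (fun _ => 1) 2 xB C y (↑Δ) ^ 2)) *
          kap ρ b (g' y) ≤ ENNReal.ofReal (Real.exp (∑ z ∈ Bad, if G.Adj y z then (4 * Ct + k0) * x z ^ 2 else 0)) := by
        intro y hy
        obtain ⟨_, z0, hz0, hz0'⟩ := Finset.mem_filter.1 hy
        have hyS : y ∉ S := fun h' => Finset.disjoint_left.1 hSY h' hy
        have hA := A_bound hconn hC hcl xB y (d z0 + 1) (fun z hz => by
          refine ⟨(xB0 z hz).1, (xB0 z hz).2.trans ?_⟩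
          simp only [hKdef]
          refine mul_le_mul_of_nonneg_left (pow_le_pow_right₀ (by norm_num) ?_) (by linarith)
          have t1 := geo.d2 z0 z
          have t2 := hconn.dist_triangle (u := z0) (v := y) (w := z)
          have t3 := SimpleGraph.dist_eq_one_iff_adj.2 hz0'.symm
          omega)
        simp only [hg', hyS, if_false]
        refine (mul_le_mul_right hK0 _).trans ?_
        rw [exp_mul_ofReal]
        refine exp_le_ofReal ?_
        refine le_trans ?_ (Finset.single_le_sum (f := fun z => if G.Adj y z then (4 * Ct + k0) * x z ^ 2 else 0)
          (fun z _ => by split_ifs <;> positivity) hz0)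
        simp only [hz0', if_true]
        obtain ⟨p1, p2⟩ := badx z0 hz0
        have hA2 : ARealL (Jnn G) (fun _ => 1) 2 xB C y (↑Δ) ≤ 2 * x z0 := by
          refine hA.2.trans ?_
          rw [pow_succ]; linarith
        have hA3 : ARealL (Jnn G) (fun _ => 1) 2 xB C y (↑Δ) ^ 2 ≤ 4 * x z0 ^ 2 := by nlinarith [hA.1]
        have := mul_le_mul_of_nonneg_left hA3 hCt
        nlinarith [mul_nonneg hk0 (show 0 ≤ x z0 ^ 2 - 1 by nlinarith)]
      refine (Finset.prod_le_prod' this).trans ?_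
      rw [exp_prod_ofReal]
      refine exp_le_ofReal ((swap_sum_le hdeg Y Bad (fun z => (4 * Ct + k0) * x z ^ 2)
        fun z _ => by positivity).trans (le_of_eq ?_))
      rw [← Finset.mul_sum]; ring
  have step4 : twF Bd c x ≤ ENNReal.ofReal (Real.exp (c * sb)) * twF Bd c xB := by
    unfold twF
    rw [exp_mul_ofReal, ← mul_add]
    refine exp_le_ofReal (mul_le_mul_of_nonneg_left ?_ hc)
    rw [hsb, hBad, Finset.sum_filter, ← Finset.sum_add_distrib]
    refine Finset.sum_le_sum fun z hz => ?_
    split_ifs with hh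
    · have := badx z (Finset.mem_filter.2 ⟨hz, hh⟩)
      have := (xB0 z hz).1
      nlinarith
    · rw [(xBgood z hz (fun h' => hh (Finset.mem_filter.1 h').2)).1]; linarith
  have step5 : ∏ z ∈ Bd, Hf (K z) (c + β * D + D * (4 * Ct + k0)) (x z) =
      ENNReal.ofReal (Real.exp ((c + β * D + D * (4 * Ct + k0)) * sb)) := by
    rw [hsb, Finset.mul_sum, ← exp_prod_ofReal, hBad, Finset.prod_filter]
    refine Finset.prod_congr rfl fun z _ => ?_
    unfold Hf
    by_cases hh : x z ≤ K z
    · rw [if_pos hh, if_neg (not_lt.2 hh)]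
    · rw [if_neg hh, if_pos (not_le.1 hh)]
  have hw : wF G β ρ Δ Bd c B xB = twF Bd c xB * ZI G β ρ Δ xB := by
    unfold wF
    rw [hxB, clip_xBF]
  rw [hw]
  show _ ≤ _ * ((∏ z ∈ Bd, Hf (K z) (c + β * D + D * (4 * Ct + k0)) (x z)) * _)
  rw [step5]
  calc _ ≤ (ENNReal.ofReal (Real.exp (c * sb)) * twF Bd c xB) * (ENNReal.ofReal (Real.exp (β * D * sb)) *
        (ZI G β ρ Δ xB * ((∏ s ∈ S, (ENNReal.ofReal (Real.exp Ct) * kap ρ b (g s))) *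
        ENNReal.ofReal (Real.exp (D * (4 * Ct + k0) * sb))))) :=
        mul_le_mul' step4 (step1.trans (mul_le_mul_right (step2.trans (mul_le_mul_right step3 _)) _))
    _ = (∏ s ∈ S, (ENNReal.ofReal (Real.exp Ct) * kap ρ b (g s))) * ((ENNReal.ofReal (Real.exp (c * sb)) *
        ENNReal.ofReal (Real.exp (β * D * sb)) * ENNReal.ofReal (Real.exp (D * (4 * Ct + k0) * sb))) *
        (twF Bd c xB * ZI G β ρ Δ xB)) := by ring
    _ = _ := by
        rw [exp_mul_ofReal, exp_mul_ofReal]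
        congr 5
        ring

end Orth

section Tail
variable {V : Type*} {G : SimpleGraph V} [∀ x : V, Fintype (G.neighborSet x)]

theorem exists_pred (hconn : G.Connected) (s z : V) (n : ℕ) (h : G.dist s z = n + 1) :
    ∃ p, G.Adj p z ∧ G.dist s p = n := by
  obtain ⟨w, hw⟩ := hconn.exists_walk_length_eq_dist z s
  rw [G.dist_comm, h] at hw
  cases w with
  | nil => simp at hw
  | @cons _ p _ hadj w' =>
    rw [SimpleGraph.Walk.length_cons] at hw
    refine ⟨p, hadj.symm, ?_⟩
    have h1 := SimpleGraph.dist_le w'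
    rw [G.dist_comm] at h1
    have h2 := hconn.dist_triangle (u := s) (v := p) (w := z)
    have h3 := SimpleGraph.dist_eq_one_iff_adj.2 hadj.symm
    omega

theorem card_sphere (hconn : G.Connected) {D : ℕ} (hdeg : ∀ x : V, G.degree x ≤ D) (s : V) (n : ℕ) :
    ∀ T : Finset V, (∀ z ∈ T, G.dist s z = n) → T.card ≤ D ^ n := by
  induction n with
  | zero =>
    intro T hT
    rw [pow_zero, Finset.card_le_one]
    intro a ha b hb
    have h1 := (hconn.dist_eq_zero_iff).1 (hT a ha)
    have h2 := (hconn.dist_eq_zero_iff).1 (hT b hb)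
    rw [← h1, ← h2]
  | succ n ih =>
    intro T hT
    choose! p hp1 hp2 using fun z (hz : z ∈ T) => exists_pred hconn s z n (hT z hz)
    have hsub : T ⊆ (T.image p).biUnion fun a => G.neighborFinset a := by
      intro z hz
      rw [Finset.mem_biUnion]
      exact ⟨p z, Finset.mem_image_of_mem _ hz, by simpa using hp1 z hz⟩
    refine (Finset.card_le_card hsub).trans ?_
    refine (Finset.card_biUnion_le_card_mul _ _ D fun a _ => hdeg a).trans ?_
    rw [pow_succ]
    refine Nat.mul_le_mul_right _ (ih _ ?_)
    intro a ha
    obtain ⟨z, hz, rfl⟩ := Finset.mem_image.1 ha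
    exact hp2 z hz

theorem summ_aux (D : ℕ) : Summable fun n : ℕ => (D : ℝ) ^ n * Real.exp (-4 ^ n) := by
  refine Summable.of_nonneg_of_le (fun n => by positivity) (fun n => ?_) (Real.summable_pow_div_factorial (D : ℝ))
  rw [Real.exp_neg, ← div_eq_mul_inv]
  refine div_le_div_of_nonneg_left (by positivity) (by positivity) ?_
  have h1 : ((n.factorial : ℕ) : ℝ) ≤ (n : ℝ) ^ n := by exact_mod_cast n.factorial_le_pow
  have h2 : (n : ℝ) ≤ Real.exp n := by have := Real.add_one_le_exp (n : ℝ); linarith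
  have h3 : (n : ℝ) ^ n ≤ Real.exp n ^ n := pow_le_pow_left₀ (by positivity) h2 n
  have h4 : Real.exp n ^ n = Real.exp ((n : ℝ) * n) := by rw [← Real.exp_nat_mul]
  have h5 : (n : ℝ) ≤ 2 ^ n := by exact_mod_cast n.lt_two_pow_self.le
  have h6 : (4 : ℝ) ^ n = 2 ^ n * 2 ^ n := by rw [← mul_pow]; norm_num
  have h7 : (n : ℝ) * n ≤ 4 ^ n := by rw [h6]; exact mul_le_mul h5 h5 (by positivity) (by positivity)
  have := Real.exp_le_exp.2 h7
  linarith

theorem tail_bound (hconn : G.Connected) {D : ℕ} (hdeg : ∀ x : V, G.degree x ≤ D) {ε : ℝ} (hε : 0 < ε)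
    {K1 : ℝ} (hK1 : 0 ≤ K1) :
    ∃ r : ℕ, ∀ (s : V) (T : Finset V), (∀ z ∈ T, r < G.dist s z) →
      ∑ z ∈ T, K1 * Real.exp (-4 ^ G.dist s z) ≤ ε := by
  have hs : Summable fun n : ℕ => K1 * ((D : ℝ) ^ n * Real.exp (-4 ^ n)) := (summ_aux D).mul_left K1
  obtain ⟨s0, hs0⟩ := summable_iff_vanishing_norm.1 hs ε hε
  refine ⟨s0.sup id, fun s T hT => ?_⟩
  have hd : Disjoint (T.image fun z => G.dist s z) s0 := by
    rw [Finset.disjoint_left]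
    intro n hn hn'
    obtain ⟨z, hz, rfl⟩ := Finset.mem_image.1 hn
    have := hT z hz
    have h2 : id (G.dist s z) ≤ s0.sup id := Finset.le_sup hn'
    simp only [id] at h2
    omega
  have h1 := (le_abs_self _).trans (hs0 _ hd).le
  refine le_trans ?_ h1
  rw [← Finset.sum_fiberwise_of_maps_to (fun z hz => Finset.mem_image_of_mem (fun z => G.dist s z) hz)]
  refine Finset.sum_le_sum fun n _ => ?_
  have : ∀ z ∈ T.filter (fun z => G.dist s z = n), K1 * Real.exp (-4 ^ G.dist s z) = K1 * Real.exp (-4 ^ n) :=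
    fun z hz => by rw [(Finset.mem_filter.1 hz).2]
  rw [Finset.sum_congr rfl this, Finset.sum_const, nsmul_eq_mul]
  have hc : (((T.filter fun z => G.dist s z = n).card : ℕ) : ℝ) ≤ (D : ℝ) ^ n := by
    exact_mod_cast card_sphere hconn hdeg s n _ fun z hz => (Finset.mem_filter.1 hz).2
  have := mul_le_mul_of_nonneg_right hc (show 0 ≤ K1 * Real.exp (-4 ^ n) by positivity)
  linarith

end Tail

section Zeta
variable {ρ : Measure ℝ} {a b B Ct : ℝ}

theorem zeta_Ici (t : ℝ) : zetaM ρ a B (Set.Ici t) = rhoMod ρ a (Set.Ici (t - B) ∩ Set.Ici 0) := by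
  unfold zetaM
  rw [Measure.restrict_apply measurableSet_Ici, Measure.map_apply (by fun_prop) (measurableSet_Ici.inter measurableSet_Ici)]
  congr 1
  ext u
  simp

theorem zeta_univ : zetaM ρ a B Set.univ = rhoMod ρ a (Set.Ici 0) := by
  unfold zetaM
  rw [Measure.restrict_apply MeasurableSet.univ, Measure.map_apply (by fun_prop) (MeasurableSet.univ.inter measurableSet_Ici)]
  congr 1
  ext u
  simp

theorem zeta_finite (h : RhoOK ρ) (ha : 0 ≤ a) : IsFiniteMeasure (zetaM ρ a B) := by
  have := rhoMod_finite h ha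
  unfold zetaM
  infer_instance

theorem zeta_ne_zero (h : RhoOK ρ) (ha : 0 ≤ a) : zetaM ρ a B Set.univ ≠ 0 := by
  rw [zeta_univ]
  unfold rhoMod
  rw [withDensity_apply _ measurableSet_Ici]
  intro h0
  have h1 : ρ (Set.Ici 0) ≤ ∫⁻ u in Set.Ici 0, ENNReal.ofReal (Real.exp (a * u ^ 2)) ∂ρ := by
    rw [← setLIntegral_one]
    refine lintegral_mono fun u => ?_
    rw [← ENNReal.ofReal_one]
    exact ENNReal.ofReal_le_ofReal (Real.one_le_exp (by positivity))
  rw [h0] at h1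
  exact absurd h.pos (not_lt.2 h1)

theorem zeta_ae : ∀ᵐ u ∂zetaM ρ a B, B ≤ u := by
  unfold zetaM
  exact ae_restrict_mem measurableSet_Ici

theorem zeta_exp (h : RhoOK ρ) (ha : 0 ≤ a) {c : ℝ} (hc : 0 ≤ c) :
    ∫⁻ u, ENNReal.ofReal (Real.exp (c * u ^ 2)) ∂zetaM ρ a B < ⊤ := by
  unfold zetaM
  refine lt_of_le_of_lt (lintegral_mono' Measure.restrict_le_self le_rfl) ?_
  rw [lintegral_map (by fun_prop) (by fun_prop), rhoMod_lintegral _ _ (by fun_prop)]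
  have : ∀ u, ENNReal.ofReal (Real.exp (a * u ^ 2)) * ENNReal.ofReal (Real.exp (c * (u + B) ^ 2)) ≤
      ENNReal.ofReal (Real.exp (2 * c * B ^ 2)) * ENNReal.ofReal (Real.exp ((a + 2 * c) * u ^ 2)) := fun u => by
    rw [exp_mul_ofReal, exp_mul_ofReal]
    refine exp_le_ofReal ?_
    nlinarith [mul_nonneg hc (sq_nonneg (u - B))]
  refine lt_of_le_of_lt (lintegral_mono this) ?_
  rw [lintegral_const_mul _ (by fun_prop)]
  exact ENNReal.mul_lt_top ENNReal.ofReal_lt_top (h.fin' _ (by positivity))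

theorem zeta_site (h : RhoOK ρ) (hb : 0 ≤ b) (hab : a = 2 * b) (hB : 0 ≤ B)
    (hBd : b * B ^ 2 = 2 * Ct + Real.log (rhoMod ρ a Set.univ).toReal - Real.log (rhoMod ρ b Set.univ).toReal)
    {t : ℝ} (ht : B ≤ t) :
    ENNReal.ofReal (Real.exp (2 * Ct)) * kap ρ b ((Set.Ici t).indicator 1) ≤
      zetaM ρ a B (Set.Ici t) / zetaM ρ a B Set.univ := by
  have ha : 0 ≤ a := by rw [hab]; positivity
  have := rhoMod_finite h ha
  have := rhoMod_finite h hb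
  have za : 0 < (rhoMod ρ a Set.univ).toReal :=
    ENNReal.toReal_pos (rhoMod_ne_zero h ha) (measure_ne_top _ _)
  have zb : 0 < (rhoMod ρ b Set.univ).toReal :=
    ENNReal.toReal_pos (rhoMod_ne_zero h hb) (measure_ne_top _ _)
  have e1 : ENNReal.ofReal (Real.exp (2 * Ct)) * (rhoMod ρ b Set.univ)⁻¹ =
      ENNReal.ofReal (Real.exp (b * B ^ 2)) * (rhoMod ρ a Set.univ)⁻¹ := by
    have ea := ENNReal.ofReal_toReal (measure_ne_top (rhoMod ρ a) Set.univ)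
    have eb := ENNReal.ofReal_toReal (measure_ne_top (rhoMod ρ b) Set.univ)
    rw [← ea, ← eb, ← ENNReal.ofReal_inv_of_pos za, ← ENNReal.ofReal_inv_of_pos zb,
      ← ENNReal.ofReal_mul (Real.exp_pos _).le, ← ENNReal.ofReal_mul (Real.exp_pos _).le, hBd,
      Real.exp_sub, Real.exp_add, Real.exp_log za, Real.exp_log zb]
    congr 1
    field_simp
  have e2 : ENNReal.ofReal (Real.exp (b * B ^ 2)) * rhoMod ρ b (Set.Ici t) ≤ rhoMod ρ a (Set.Ici t) := by
    unfold rhoMod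
    rw [withDensity_apply _ measurableSet_Ici, withDensity_apply _ measurableSet_Ici,
      ← lintegral_const_mul _ (by fun_prop)]
    refine setLIntegral_mono (by fun_prop) fun u hu => ?_
    rw [exp_mul_ofReal]
    refine exp_le_ofReal ?_
    have hu' : t ≤ u := hu
    have : B ^ 2 ≤ u ^ 2 := pow_le_pow_left₀ hB (ht.trans hu') 2
    rw [hab]
    nlinarith [mul_le_mul_of_nonneg_left this hb]
  unfold kap
  rw [lintegral_indicator_one measurableSet_Ici, ← mul_assoc, e1, mul_right_comm, zeta_Ici, zeta_univ,
    ← div_eq_mul_inv]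
  refine ENNReal.div_le_div (e2.trans (measure_mono ?_)) (measure_mono (Set.subset_univ _))
  intro u hu
  have hu' : t ≤ u := hu
  exact ⟨by show t - B ≤ u; linarith, by show 0 ≤ u; linarith⟩

theorem kap_exp_fin (h : RhoOK ρ) (hb : 0 ≤ b) {c : ℝ} (hc : 0 ≤ c) :
    kap ρ b (fun u => ENNReal.ofReal (Real.exp (c * u ^ 2))) < ⊤ := by
  unfold kap
  refine ENNReal.mul_lt_top (ENNReal.inv_lt_top.2 (pos_iff_ne_zero.2 (rhoMod_ne_zero h hb))) ?_
  rw [rhoMod_lintegral _ _ (by fun_prop)]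
  simp only [exp_mul_ofReal, ← add_mul]
  exact h.fin' _ (by positivity)

theorem kap_mono {g g' : ℝ → ℝ≥0∞} (hg : ∀ u, g u ≤ g' u) : kap ρ b g ≤ kap ρ b g' :=
  mul_le_mul_right (lintegral_mono hg) _

variable {V : Type*} {G : SimpleGraph V} [∀ x : V, Fintype (G.neighborSet x)] {β : ℝ}

theorem M_bound (hconn : G.Connected) (hβ : 0 ≤ β) (h : RhoOK ρ) {C : ℝ} (hC : 1 ≤ C) (hCt : 0 ≤ Ct)
    (hb : 0 ≤ b) (hreg : RegH G β ρ C Ct b) {D : ℕ} (hdeg : ∀ x : V, G.degree x ≤ D) {Δ Bd : Finset V}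
    (hcl : clN G Δ ⊆ Δ ∪ Bd) (hdisj : Disjoint Δ Bd) :
    Hyp G β ρ D Δ Bd (Real.exp Ct * (kap ρ b (fun u => ENNReal.ofReal (Real.exp (1 * u ^ 2)))).toReal) := by
  refine ⟨hβ, h, hdeg, hcl, hdisj, by positivity, fun y hy => ?_⟩
  have := reg_prod hβ h hb hreg Δ {y} (by simpa using hy) 0 (fun _ u => ENNReal.ofReal (-u))
    (fun _ => by fun_prop)
  simp only [Finset.prod_singleton] at this
  refine this.trans ?_
  rw [mul_comm]
  refine mul_le_mul_left ?_ _
  rw [ENNReal.ofReal_mul (Real.exp_pos _).le, ENNReal.ofReal_toReal (kap_exp_fin h hb zero_le_one).ne]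
  have hA := A_bound hconn hC hcl 0 y 0 (fun z hz => ⟨le_rfl, by simp only [Pi.zero_apply]; positivity⟩)
  rw [pow_zero] at hA
  refine mul_le_mul' (exp_le_ofReal ?_) (kap_mono fun u => ENNReal.ofReal_le_ofReal ?_)
  · nlinarith [mul_le_mul_of_nonneg_left (show ARealL (Jnn G) (fun _ => 1) 2 0 C y (↑Δ) ^ 2 ≤ 1 by nlinarith) hCt]
  · have := Real.add_one_le_exp (1 * u ^ 2)
    nlinarith [sq_nonneg (u + 1)]

end Zeta

section OrthM
variable {V : Type*} {G : SimpleGraph V} [∀ x : V, Fintype (G.neighborSet x)] {β : ℝ} {ρ : Measure ℝ}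

theorem NF_mono {ζ : Measure ℝ} {Δ Bd : Finset V} {c : ℝ} {F F' : (V → ℝ) → ℝ≥0∞} (h : ∀ x, F x ≤ F' x) :
    NF G β ρ ζ Δ Bd c F ≤ NF G β ρ ζ Δ Bd c F' :=
  lmarginal_mono (fun x => mul_le_mul_right (LI_mono Δ h x) _) 0

theorem orth1 (hconn : G.Connected) {C Ct b : ℝ} (hC : 1 ≤ C) (hCt : 0 ≤ Ct)
    (hb : 0 ≤ b) (hreg : RegH G β ρ C Ct b) {D : ℕ} {Δ Bd S : Finset V} {M : ℝ}
    (H : Hyp G β ρ D Δ Bd M) {d : V → ℕ} (geo : Geo G Δ Bd S d)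
    {B k0 : ℝ} (hB : 0 ≤ B) (hk0 : 0 ≤ k0)
    (hK0 : kap ρ b (fun u => ENNReal.ofReal (Real.exp (β * D * u ^ 2))) ≤ ENNReal.ofReal (Real.exp k0))
    (hBK : ∀ z ∈ Bd, B ≤ C * 2 ^ d z)
    (g : V → ℝ → ℝ≥0∞) (gm : ∀ a, Measurable (g a)) {ζ : Measure ℝ} [IsFiniteMeasure ζ]
    (hζ0 : ζ Set.univ ≠ 0) (hζ : ∀ᵐ u ∂ζ, B ≤ u) :
    NF G β ρ ζ Δ Bd (β * D * M) (fun x => ∏ a ∈ S, g a (x a)) ≤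
      (∏ s ∈ S, (ENNReal.ofReal (Real.exp Ct) * kap ρ b (g s))) *
      ((∏ z ∈ Bd, (1 + (∫⁻ u in Set.Ioi (C * 2 ^ d z),
        Hf (C * 2 ^ d z) (β * D * M + β * D + D * (4 * Ct + k0)) u ∂ζ) / ζ Set.univ)) *
        NF G β ρ ζ Δ Bd (β * D * M) (fun _ => 1)) := by
  have := H.hρ.finite
  have hβ := H.hβ
  have hM := H.hM0
  set c1 := β * D * M + β * D + D * (4 * Ct + k0) with hc1
  set K : V → ℝ := fun z => C * 2 ^ d z with hK
  set f := fun x => wF G β ρ Δ Bd (β * D * M) B (xBF Bd B K x) with hf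
  have fm : Measurable f := (wF_measurable Δ Bd _ B).comp (xBF_measurable Bd B K)
  have hfm : Measurable fun x : V → ℝ => (∏ z ∈ Bd, Hf (K z) c1 (x z)) * f x :=
    (Finset.measurable_fun_prod _ fun a _ => (Hf_measurable _ _).comp (measurable_pi_apply a)).mul fm
  have s1 : NF G β ρ ζ Δ Bd (β * D * M) (fun x => ∏ a ∈ S, g a (x a)) ≤
      (∫⋯∫⁻_Bd, (fun x => (∏ s ∈ S, (ENNReal.ofReal (Real.exp Ct) * kap ρ b (g s))) *
        ((∏ z ∈ Bd, Hf (K z) c1 (x z)) * f x)) ∂(fun _ => ζ)) 0 :=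
    lmarg_ae hζ Bd fun x hx hx0 => pt_bound hconn hβ H.hρ hC hCt hb hreg H.hdeg H.hcl H.hdisj geo hB
      (by positivity) hk0 hK0 hBK g gm x hx hx0
  refine s1.trans ?_
  have s2 : (∫⋯∫⁻_Bd, (fun x => (∏ s ∈ S, (ENNReal.ofReal (Real.exp Ct) * kap ρ b (g s))) *
        ((∏ z ∈ Bd, Hf (K z) c1 (x z)) * f x)) ∂(fun _ => ζ)) 0 =
      (∏ s ∈ S, (ENNReal.ofReal (Real.exp Ct) * kap ρ b (g s))) *
        (∫⋯∫⁻_Bd, (fun x => (∏ z ∈ Bd, Hf (K z) c1 (x z)) * f x) ∂(fun _ => ζ)) 0 := by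
    unfold lmarginal
    exact lintegral_const_mul _ (hfm.comp measurable_updateFinset)
  rw [s2]
  refine mul_le_mul_right ?_ _
  refine (multi_site hζ0 K (fun z => Hf (K z) c1) (fun z => Hf_measurable _ _)
    (fun z u hu => by unfold Hf; rw [if_pos hu]) Bd f fm (fun z hz x u' u hu => ?_) 0).trans ?_
  · exact wF_mono H hB (xBF_update Bd B K x z u' u hu)
  · refine mul_le_mul_right ?_ _
    rw [← wF_int_le hζ]
    refine lmarginal_mono (fun x => ?_) 0
    have := wF_mono H hB (xBF_le Bd B K x)
    refine this.trans (le_of_eq ?_)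
    unfold wF
    rw [clipF_eq Bd B (clipF Bd B x)]
    · intro z hz; unfold clipF; simp [hz]
    · intro z hz; unfold clipF; simp [hz]

theorem delta_bound {ζ : Measure ℝ} {C c1 K1 : ℝ} (hC : 1 ≤ C) (n : ℕ)
    (hK1 : (∫⁻ u, ENNReal.ofReal (Real.exp ((c1 + 1) * u ^ 2)) ∂ζ) / ζ Set.univ ≤ ENNReal.ofReal K1) :
    (∫⁻ u in Set.Ioi (C * 2 ^ n), Hf (C * 2 ^ n) c1 u ∂ζ) / ζ Set.univ ≤
      ENNReal.ofReal (K1 * Real.exp (-4 ^ n)) := by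
  have h1 : ∫⁻ u in Set.Ioi (C * 2 ^ n), Hf (C * 2 ^ n) c1 u ∂ζ ≤
      (∫⁻ u, ENNReal.ofReal (Real.exp ((c1 + 1) * u ^ 2)) ∂ζ) * ENNReal.ofReal (Real.exp (-4 ^ n)) := by
    rw [← lintegral_mul_const _ (by fun_prop)]
    refine le_trans (setLIntegral_mono (by fun_prop) fun u hu => ?_) (setLIntegral_le_lintegral _ _)
    have hu' : C * 2 ^ n < u := hu
    unfold Hf
    rw [if_neg (not_le.2 hu'), exp_mul_ofReal]
    refine exp_le_ofReal ?_
    have h2 : (2 : ℝ) ^ n ≤ u := by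
      have : (0:ℝ) < 2 ^ n := by positivity
      nlinarith
    have h3 : ((2 : ℝ) ^ n) ^ 2 ≤ u ^ 2 := pow_le_pow_left₀ (by positivity) h2 2
    have h4 : ((2 : ℝ) ^ n) ^ 2 = 4 ^ n := by rw [← pow_mul, mul_comm, pow_mul]; norm_num
    nlinarith
  refine (ENNReal.div_le_div_right h1 _).trans ?_
  rw [ENNReal.ofReal_mul' (Real.exp_pos _).le, mul_comm, mul_div_assoc, mul_comm]
  exact mul_le_mul_left hK1 _

theorem orth_main (hconn : G.Connected) (hβ : 0 ≤ β) (h : RhoOK ρ) {C Ct a b B M : ℝ} (hC : 1 ≤ C) (hCt : 0 < Ct)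
    (hb : 0 ≤ b) (hab : a = 2 * b) (hreg : RegH G β ρ C Ct b) {D : ℕ} (hdeg : ∀ x : V, G.degree x ≤ D)
    (hB : 0 ≤ B) (hM : 0 ≤ M)
    (hBd : b * B ^ 2 = 2 * Ct + Real.log (rhoMod ρ a Set.univ).toReal - Real.log (rhoMod ρ b Set.univ).toReal) :
    ∃ r : ℕ, 1 ≤ r ∧ ∀ Δ Bd : Finset V, Hyp G β ρ D Δ Bd M → ∀ S ⊆ Δ, (∀ s ∈ S, ∀ z ∈ Bd, r < G.dist s z) →
      ∀ t : V → ℝ, NF G β ρ (zetaM ρ a B) Δ Bd (β * D * M)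
        (fun x => ∏ s ∈ S, (Set.Ici (t s)).indicator 1 (x s)) ≤
        (∏ s ∈ S, zetaM ρ a B (Set.Ici (t s)) / zetaM ρ a B Set.univ) *
          NF G β ρ (zetaM ρ a B) Δ Bd (β * D * M) (fun _ => 1) := by
  have ha : 0 ≤ a := by rw [hab]; positivity
  have := zeta_finite (B := B) h ha
  have hζ0 := zeta_ne_zero (B := B) h ha
  set ζ := zetaM ρ a B with hζdef
  -- constants
  set κ := kap ρ b (fun u => ENNReal.ofReal (Real.exp (β * D * u ^ 2))) with hκ
  have hκfin : κ < ⊤ := kap_exp_fin h hb (by positivity)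
  obtain ⟨k0, hk0, hK0⟩ : ∃ k0 : ℝ, 0 ≤ k0 ∧ κ ≤ ENNReal.ofReal (Real.exp k0) := by
    refine ⟨κ.toReal, ENNReal.toReal_nonneg, ?_⟩
    rw [← ENNReal.ofReal_toReal hκfin.ne]
    refine ENNReal.ofReal_le_ofReal ?_
    rw [ENNReal.toReal_ofReal ENNReal.toReal_nonneg]
    have := Real.add_one_le_exp κ.toReal
    linarith
  set c1 := β * D * M + β * D + D * (4 * Ct + k0) with hc1
  have hc1' : 0 ≤ c1 := by positivity
  set q := (∫⁻ u, ENNReal.ofReal (Real.exp ((c1 + 1) * u ^ 2)) ∂ζ) / ζ Set.univ with hq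
  have hqf : q < ⊤ := ENNReal.div_lt_top (zeta_exp h ha (by positivity)).ne hζ0
  have hK1 : q ≤ ENNReal.ofReal q.toReal := by rw [ENNReal.ofReal_toReal hqf.ne]
  have hK1' : 0 ≤ q.toReal := ENNReal.toReal_nonneg
  obtain ⟨r1, hr1⟩ := tail_bound hconn hdeg hCt hK1'
  obtain ⟨r2, hr2⟩ := exists_nat_ge B
  refine ⟨max 1 (max r1 r2), le_max_left _ _, ?_⟩
  intro Δ Bd H S hS hr t
  set S' := S.filter fun s => B < t s with hS'
  have hS'S : S' ⊆ S := Finset.filter_subset _ _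
  have eS : ∏ s ∈ S, ζ (Set.Ici (t s)) / ζ Set.univ = ∏ s ∈ S', ζ (Set.Ici (t s)) / ζ Set.univ := by
    symm
    refine Finset.prod_subset hS'S fun s hs hs' => ?_
    have ht : t s ≤ B := by
      by_contra hh
      exact hs' (Finset.mem_filter.2 ⟨hs, not_le.1 hh⟩)
    have : ζ (Set.Ici (t s)) = ζ Set.univ := by
      rw [hζdef, zeta_Ici, zeta_univ]
      congr 1
      exact Set.inter_eq_self_of_subset_right fun u (hu : 0 ≤ u) => by show t s - B ≤ u; linarith
    rw [this, ENNReal.div_self hζ0 (measure_ne_top _ _)]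
  have mS : NF G β ρ ζ Δ Bd (β * D * M) (fun x => ∏ s ∈ S, (Set.Ici (t s)).indicator 1 (x s)) ≤
      NF G β ρ ζ Δ Bd (β * D * M) (fun x => ∏ s ∈ S', (Set.Ici (t s)).indicator 1 (x s)) := by
    refine NF_mono fun x => Finset.prod_le_prod_of_subset_of_le_one' hS'S fun s _ _ => ?_
    exact Set.indicator_le_self' (fun _ _ => zero_le_one) _
  rw [eS]
  refine mS.trans ?_
  by_cases hne : S'.Nonempty
  swap
  · rw [Finset.not_nonempty_iff_eq_empty] at hne
    rw [hne]; simp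
  set d : V → ℕ := fun z => S'.inf' hne fun s => G.dist s z with hd
  have hdex : ∀ z, ∃ s ∈ S', d z = G.dist s z := fun z => S'.exists_mem_eq_inf' hne _
  have d1 : ∀ s ∈ S', ∀ z, d z ≤ G.dist s z := fun s hs z => Finset.inf'_le (f := fun s => G.dist s z) hs
  have hr' : ∀ s ∈ S', ∀ z ∈ Bd, 1 < G.dist s z ∧ r1 < G.dist s z ∧ r2 < G.dist s z := fun s hs z hz => by
    have := hr s (hS'S hs) z hz
    simp only [max_lt_iff] at this
    exact this
  have geo : Geo G Δ Bd S' d := by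
    refine ⟨hS'S.trans hS, fun s hs z hz hadj => ?_, d1, fun z z' => ?_⟩
    · have := (hr' s hs z hz).1
      rw [SimpleGraph.dist_eq_one_iff_adj.2 hadj] at this
      omega
    · obtain ⟨s, hs, e⟩ := hdex z
      rw [e]
      exact (d1 s hs z').trans hconn.dist_triangle
  have hBK : ∀ z ∈ Bd, B ≤ C * 2 ^ d z := by
    intro z hz
    obtain ⟨s, hs, e⟩ := hdex z
    have h1 := (hr' s hs z hz).2.2
    have h2 : ((d z : ℕ) : ℝ) ≤ 2 ^ d z := by exact_mod_cast (d z).lt_two_pow_self.le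
    have h3 : (r2 : ℝ) ≤ d z := by exact_mod_cast (by omega : r2 ≤ d z)
    have h4 : (0:ℝ) < 2 ^ d z := by positivity
    nlinarith
  refine (orth1 hconn hC hCt.le hb hreg H geo hB hk0 hK0 hBK (fun s => (Set.Ici (t s)).indicator 1)
    (fun s => measurable_one.indicator measurableSet_Ici) hζ0 zeta_ae).trans ?_
  rw [← mul_assoc]
  refine mul_le_mul_left ?_ _
  have p1 : ∏ z ∈ Bd, (1 + (∫⁻ u in Set.Ioi (C * 2 ^ d z), Hf (C * 2 ^ d z) c1 u ∂ζ) / ζ Set.univ) ≤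
      ∏ s ∈ S', ENNReal.ofReal (Real.exp Ct) := by
    have e1 : ∀ z ∈ Bd, 1 + (∫⁻ u in Set.Ioi (C * 2 ^ d z), Hf (C * 2 ^ d z) c1 u ∂ζ) / ζ Set.univ ≤
        ENNReal.ofReal (Real.exp (q.toReal * Real.exp (-4 ^ d z))) := by
      intro z _
      refine (add_le_add_right (delta_bound hC (d z) hK1) _).trans ?_
      rw [← ENNReal.ofReal_one, ← ENNReal.ofReal_add zero_le_one (by positivity)]
      refine ENNReal.ofReal_le_ofReal ?_
      rw [add_comm]
      exact Real.add_one_le_exp _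
    refine (Finset.prod_le_prod' e1).trans ?_
    rw [exp_prod_ofReal, exp_prod_ofReal]
    refine exp_le_ofReal ?_
    calc ∑ z ∈ Bd, q.toReal * Real.exp (-4 ^ d z) ≤ ∑ z ∈ Bd, ∑ s ∈ S', q.toReal * Real.exp (-4 ^ G.dist s z) := by
          refine Finset.sum_le_sum fun z _ => ?_
          obtain ⟨s, hs, e⟩ := hdex z
          rw [e]
          exact Finset.single_le_sum (f := fun s => q.toReal * Real.exp (-4 ^ G.dist s z))
            (fun s _ => by positivity) hs
      _ = ∑ s ∈ S', ∑ z ∈ Bd, q.toReal * Real.exp (-4 ^ G.dist s z) := Finset.sum_comm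
      _ ≤ ∑ s ∈ S', Ct := Finset.sum_le_sum fun s hs => hr1 s Bd fun z hz => (hr' s hs z hz).2.1
  refine (mul_le_mul_right p1 _).trans ?_
  rw [← Finset.prod_mul_distrib]
  refine Finset.prod_le_prod' fun s hs => ?_
  have ht : B < t s := (Finset.mem_filter.1 hs).2
  refine le_trans (le_of_eq ?_) (zeta_site h hb hab hB hBd ht.le)
  rw [mul_right_comm, exp_mul_ofReal, two_mul]

end OrthM

section MuV
variable {V : Type*} {G : SimpleGraph V} [∀ x : V, Fintype (G.neighborSet x)] {β : ℝ} {ρ ζ : Measure ℝ}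

/-- glue of boundary and bulk spins -/
noncomputable def glue2 (Δ Bd : Finset V) (p : (↥Bd → ℝ) × (↥Δ → ℝ)) : V → ℝ :=
  Function.updateFinset (Function.updateFinset (0 : V → ℝ) Bd p.1) Δ p.2

theorem glue2_measurable (Δ Bd : Finset V) : Measurable (glue2 Δ Bd) := by
  refine measurable_pi_lambda _ fun v => ?_
  unfold glue2
  simp only [Function.updateFinset_def]
  by_cases h1 : v ∈ Δ
  · simp only [h1, dite_true]
    exact (measurable_pi_apply _).comp measurable_snd
  · by_cases h2 : v ∈ Bd
    · simp only [h1, h2, dite_true, dite_false]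
      exact (measurable_pi_apply _).comp measurable_fst
    · simp only [h1, h2, dite_false]
      exact measurable_const

noncomputable def dens (G : SimpleGraph V) [∀ x : V, Fintype (G.neighborSet x)] (β : ℝ) (Δ Bd : Finset V) (c : ℝ)
    (p : (↥Bd → ℝ) × (↥Δ → ℝ)) : ℝ≥0∞ :=
  twF Bd c (Function.updateFinset (0 : V → ℝ) Bd p.1) * eI G β Δ (glue2 Δ Bd p)

theorem dens_measurable (Δ Bd : Finset V) (c : ℝ) : Measurable (dens G β Δ Bd c) :=
  (((twF_measurable Bd c).comp measurable_updateFinset).comp measurable_fst).mul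
    ((eI_measurable Δ).comp (glue2_measurable Δ Bd))

noncomputable def muV (G : SimpleGraph V) [∀ x : V, Fintype (G.neighborSet x)] (β : ℝ) (ρ ζ : Measure ℝ)
    (Δ Bd : Finset V) (c : ℝ) : Measure (V → ℝ) :=
  (((Measure.pi fun _ : ↥Bd => ζ).prod (Measure.pi fun _ : ↥Δ => ρ)).withDensity (dens G β Δ Bd c)).map
    (glue2 Δ Bd)

theorem muV_lintegral [SigmaFinite ρ] [SigmaFinite ζ] (Δ Bd : Finset V) (c : ℝ) {F : (V → ℝ) → ℝ≥0∞}
    (hF : Measurable F) : ∫⁻ x, F x ∂muV G β ρ ζ Δ Bd c = NF G β ρ ζ Δ Bd c F := by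
  unfold muV
  have m1 := dens_measurable (G := G) (β := β) Δ Bd c
  have m2 : Measurable fun p => F (glue2 Δ Bd p) := hF.comp (glue2_measurable Δ Bd)
  rw [lintegral_map hF (glue2_measurable Δ Bd), lintegral_withDensity_eq_lintegral_mul _ m1 m2,
    lintegral_prod _ (m1.mul m2).aemeasurable]
  unfold NF lmarginal
  refine lintegral_congr fun ξ => ?_
  show _ = twF Bd c (Function.updateFinset 0 Bd ξ) * LI G β ρ Δ F (Function.updateFinset 0 Bd ξ)
  rw [LI_apply, ← lintegral_const_mul]
  · refine lintegral_congr fun φ => ?_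
    simp only [Pi.mul_apply, dens, glue2, Function.comp]
    ring
  · exact (hF.mul (eI_measurable Δ)).comp measurable_updateFinset

theorem twF_mod (Bd : Finset V) (c : ℝ) (x y : V → ℝ) :
    twF Bd c x * twF Bd c y = twF Bd c (x ⊔ y) * twF Bd c (x ⊓ y) := by
  unfold twF
  rw [exp_mul_ofReal, exp_mul_ofReal, ← mul_add, ← mul_add, ← Finset.sum_add_distrib, ← Finset.sum_add_distrib]
  congr 3
  refine Finset.sum_congr rfl fun z _ => ?_
  simp only [Pi.sup_apply, Pi.inf_apply]
  exact (max_add_min _ _).symm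

theorem NF_lsm [SigmaFinite ρ] [SigmaFinite ζ] (hβ : 0 ≤ β) (Δ Bd : Finset V) (c : ℝ)
    (f1 f2 f3 f4 : (V → ℝ) → ℝ≥0∞) (m1 : Measurable f1) (m2 : Measurable f2) (m3 : Measurable f3)
    (m4 : Measurable f4) (h : ∀ x y, f1 x * f2 y ≤ f3 (x ⊔ y) * f4 (x ⊓ y)) :
    NF G β ρ ζ Δ Bd c f1 * NF G β ρ ζ Δ Bd c f2 ≤ NF G β ρ ζ Δ Bd c f3 * NF G β ρ ζ Δ Bd c f4 := by
  have tm := twF_measurable Bd c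
  have em := eI_measurable (G := G) (β := β) Δ
  have hL : ∀ x y, LI G β ρ Δ f1 x * LI G β ρ Δ f2 y ≤ LI G β ρ Δ f3 (x ⊔ y) * LI G β ρ Δ f4 (x ⊓ y) := by
    refine four_fun (fun _ => ρ) Δ _ _ _ _ (m1.mul em) (m2.mul em) (m3.mul em) (m4.mul em) fun x y => ?_
    calc _ = (f1 x * f2 y) * (eI G β Δ x * eI G β Δ y) := by ring
      _ ≤ (f3 (x ⊔ y) * f4 (x ⊓ y)) * (eI G β Δ (x ⊔ y) * eI G β Δ (x ⊓ y)) :=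
        mul_le_mul' (h x y) (eI_lsm hβ Δ x y)
      _ = _ := by ring
  have := four_fun (fun _ => ζ) Bd (fun x => twF Bd c x * LI G β ρ Δ f1 x) (fun x => twF Bd c x * LI G β ρ Δ f2 x)
    (fun x => twF Bd c x * LI G β ρ Δ f3 x) (fun x => twF Bd c x * LI G β ρ Δ f4 x)
    (tm.mul (LI_measurable Δ m1)) (tm.mul (LI_measurable Δ m2)) (tm.mul (LI_measurable Δ m3))
    (tm.mul (LI_measurable Δ m4)) (fun x y => by
      calc _ = (twF Bd c x * twF Bd c y) * (LI G β ρ Δ f1 x * LI G β ρ Δ f2 y) := by ring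
        _ ≤ (twF Bd c (x ⊔ y) * twF Bd c (x ⊓ y)) * (LI G β ρ Δ f3 (x ⊔ y) * LI G β ρ Δ f4 (x ⊓ y)) :=
          mul_le_mul' (twF_mod Bd c x y).le (hL x y)
        _ = _ := by ring) 0 0
  rw [sup_idem, inf_idem] at this
  exact this

theorem NF_pos (h : RhoOK ρ) [IsFiniteMeasure ζ] (hζ0 : ζ Set.univ ≠ 0) (Δ Bd : Finset V) (c : ℝ) :
    NF G β ρ ζ Δ Bd c (fun _ => 1) ≠ 0 := by
  have := h.finite
  intro h0
  unfold NF lmarginal at h0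
  rw [lintegral_eq_zero_iff] at h0
  · have hne : (Measure.pi fun _ : ↥Bd => ζ) ≠ 0 := by
      intro h1
      have : (Measure.pi fun _ : ↥Bd => ζ) Set.univ = 0 := by rw [h1]; rfl
      rw [Measure.pi_univ, Finset.prod_eq_zero_iff] at this
      obtain ⟨_, _, h2⟩ := this
      exact hζ0 h2
    have : (ae (Measure.pi fun _ : ↥Bd => ζ)).NeBot := ae_neBot.2 hne
    obtain ⟨ξ, hξ⟩ := h0.exists
    have h3 := ZI_pos (G := G) (β := β) h Δ (Function.updateFinset 0 Bd ξ)
    have h4 : 0 < twF Bd c (Function.updateFinset 0 Bd ξ) := ENNReal.ofReal_pos.2 (Real.exp_pos _)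
    exact (ENNReal.mul_pos h4.ne' h3.ne').ne' hξ
  · exact ((twF_measurable Bd c).mul (ZI_measurable Δ)).comp measurable_updateFinset

theorem NF_fin (h : RhoOK ρ) (hβ : 0 ≤ β) [IsFiniteMeasure ζ] {c : ℝ} (hc : 0 ≤ c)
    (hζ : ∀ c : ℝ, 0 ≤ c → ∫⁻ u, ENNReal.ofReal (Real.exp (c * u ^ 2)) ∂ζ < ⊤)
    {Δ Bd : Finset V} (hcl : clN G Δ ⊆ Δ ∪ Bd) :
    NF G β ρ ζ Δ Bd c (fun _ => 1) < ⊤ := by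
  have := h.finite
  set k := β * ((clN G Δ).card) with hk
  have hk0 : 0 ≤ k := by positivity
  set E0 : ℝ≥0∞ := ∏ _a ∈ Δ, ∫⁻ u, ENNReal.ofReal (Real.exp (k * u ^ 2)) ∂ρ with hE0
  have hE0f : E0 < ⊤ := ENNReal.prod_lt_top fun a _ => h.fin' _ hk0
  have hZ : ∀ x, ZI G β ρ Δ x ≤ E0 * ∏ a ∈ clN G Δ \ Δ, ENNReal.ofReal (Real.exp (k * x a ^ 2)) := by
    intro x
    rw [hE0, ← lmarginal_prod (fun _ => ρ) (clN G Δ) (fun _ u => ENNReal.ofReal (Real.exp (k * u ^ 2)))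
      (fun a => by fun_prop) Δ (sub_clN Δ)]
    unfold ZI LI
    exact lmarginal_mono (fun y => by rw [one_mul]; exact eI_bound hβ Δ y) x
  have hall : ∀ x, twF Bd c x * ZI G β ρ Δ x ≤
      E0 * ∏ z ∈ Bd, ENNReal.ofReal (Real.exp (c + (c + k) * x z ^ 2)) := by
    intro x
    have h1 : twF Bd c x ≤ ∏ z ∈ Bd, ENNReal.ofReal (Real.exp (c + c * x z ^ 2)) := by
      unfold twF
      rw [← ENNReal.ofReal_prod_of_nonneg fun a _ => (Real.exp_pos _).le, ← Real.exp_sum, Finset.mul_sum]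
      refine ENNReal.ofReal_le_ofReal (Real.exp_le_exp.2 (Finset.sum_le_sum fun z _ => ?_))
      nlinarith [sq_nonneg (x z - 1), sq_nonneg (x z)]
    have h2 : ∏ a ∈ clN G Δ \ Δ, ENNReal.ofReal (Real.exp (k * x a ^ 2)) ≤
        ∏ a ∈ Bd, ENNReal.ofReal (Real.exp (k * x a ^ 2)) := by
      refine Finset.prod_le_prod_of_subset_of_one_le' ?_ fun i _ _ => ?_
      · intro v hv
        rw [Finset.mem_sdiff] at hv
        rcases Finset.mem_union.1 (hcl hv.1) with h | h
        · exact absurd h hv.2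
        · exact h
      · rw [← ENNReal.ofReal_one]
        exact ENNReal.ofReal_le_ofReal (Real.one_le_exp (by positivity))
    calc _ ≤ (∏ z ∈ Bd, ENNReal.ofReal (Real.exp (c + c * x z ^ 2))) *
          (E0 * ∏ a ∈ Bd, ENNReal.ofReal (Real.exp (k * x a ^ 2))) :=
          mul_le_mul' h1 ((hZ x).trans (mul_le_mul_right h2 _))
      _ = E0 * ∏ z ∈ Bd, (ENNReal.ofReal (Real.exp (c + c * x z ^ 2)) *
            ENNReal.ofReal (Real.exp (k * x z ^ 2))) := by
          rw [Finset.prod_mul_distrib]; ring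
      _ = _ := by
          congr 1
          refine Finset.prod_congr rfl fun z _ => ?_
          rw [← ENNReal.ofReal_mul (Real.exp_pos _).le, ← Real.exp_add]
          congr 2
          ring
  have h3 : NF G β ρ ζ Δ Bd c (fun _ => 1) ≤
      E0 * (∫⋯∫⁻_Bd, (fun x => ∏ z ∈ Bd, ENNReal.ofReal (Real.exp (c + (c + k) * x z ^ 2))) ∂(fun _ => ζ)) 0 := by
    unfold NF lmarginal
    rw [← lintegral_const_mul' _ _ hE0f.ne]
    exact lintegral_mono fun ξ => hall _
  refine lt_of_le_of_lt h3 (ENNReal.mul_lt_top hE0f ?_)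
  rw [lmarginal_prod (fun _ => ζ) Bd (fun _ u => ENNReal.ofReal (Real.exp (c + (c + k) * u ^ 2)))
      (fun a => by fun_prop) Bd subset_rfl, Finset.sdiff_self, Finset.prod_empty, mul_one]
  refine ENNReal.prod_lt_top fun _ _ => ?_
  have : ∀ u : ℝ, ENNReal.ofReal (Real.exp (c + (c + k) * u ^ 2)) =
      ENNReal.ofReal (Real.exp c) * ENNReal.ofReal (Real.exp ((c + k) * u ^ 2)) := fun u => by
    rw [← ENNReal.ofReal_mul (Real.exp_pos _).le, ← Real.exp_add]
  simp_rw [this]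
  rw [lintegral_const_mul' _ _ ENNReal.ofReal_ne_top]
  exact ENNReal.mul_lt_top ENNReal.ofReal_lt_top (hζ _ (by positivity))

end MuV

section Core
variable {V : Type*} {G : SimpleGraph V} [∀ x : V, Fintype (G.neighborSet x)] {β : ℝ} {ρ ζ : Measure ℝ}

theorem updateFinset_zero_measurable (E : Finset V) :
    Measurable fun φ : ↥E → ℝ => Function.updateFinset (0 : V → ℝ) E φ := by
  refine measurable_pi_lambda _ fun v => ?_
  simp only [Function.updateFinset_def]
  by_cases h1 : v ∈ E
  · simp only [h1, dite_true]
    exact measurable_pi_apply _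
  · simp only [h1, dite_false]
    exact measurable_const

theorem KI_local (I : Finset V) (F : (V → ℝ) → ℝ≥0∞) (A : Set V)
    (hF : ∀ x y, (∀ v ∈ A, x v = y v) → F x = F y)
    {x y : V → ℝ} (h : ∀ v ∉ I, v ∈ A ∨ v ∈ clN G I → x v = y v) :
    KI G β ρ I F x = KI G β ρ I F y := by
  unfold KI
  rw [LI_local I F A hF h, ZI_local I fun v hv hv' => h v hv (Or.inr hv')]

theorem core (hβ : 0 ≤ β) (h : RhoOK ρ) [IsFiniteMeasure ζ] (hζ0 : ζ Set.univ ≠ 0) {Δ Bd I E : Finset V} {c : ℝ}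
    (hfin : NF G β ρ ζ Δ Bd c (fun _ => 1) < ⊤)
    (hI : I ⊆ Δ) (hcl : clN G I ⊆ I ∪ E) (hdisj : Disjoint I E)
    (ho : ∀ S ⊆ E, ∀ t : V → ℝ, NF G β ρ ζ Δ Bd c (fun x => ∏ s ∈ S, (Set.Ici (t s)).indicator 1 (x s)) ≤
      (∏ s ∈ S, ζ (Set.Ici (t s)) / ζ Set.univ) * NF G β ρ ζ Δ Bd c (fun _ => 1))
    (F : (V → ℝ) → ℝ≥0∞) (hF : Measurable F) (hmono : Monotone F) (K : ℝ≥0∞) (hK : K ≠ ⊤) (hFK : ∀ x, F x ≤ K)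
    (hloc : ∀ x y, (∀ v ∈ I ∪ E, x v = y v) → F x = F y) :
    NF G β ρ ζ Δ Bd c F ≤ NF G β ρ ζ Δ Bd c (fun _ => 1) *
      ∫⁻ φ, KI G β ρ I F (Function.updateFinset 0 E φ) ∂Measure.pi (fun _ : ↥E => (ζ Set.univ)⁻¹ • ζ) := by
  have := h.finite
  have hprob : IsProbabilityMeasure ((ζ Set.univ)⁻¹ • ζ) := ⟨by
    rw [Measure.smul_apply, smul_eq_mul, ENNReal.inv_mul_cancel hζ0 (measure_ne_top _ _)]⟩
  have hKm := KI_measurable (G := G) (β := β) (ρ := ρ) I hF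
  have hdlr : NF G β ρ ζ Δ Bd c F = NF G β ρ ζ Δ Bd c (KI G β ρ I F) := by
    unfold NF
    rw [LI_dlr hβ h hI F hF]
  have hKb : ∀ x, KI G β ρ I F x ≤ K := by
    intro x
    have h1 : LI G β ρ I F x ≤ K * ZI G β ρ I x := by
      unfold ZI
      rw [LI_apply, LI_apply, ← lintegral_const_mul' _ _ hK]
      exact lintegral_mono fun φ => by rw [one_mul]; exact mul_le_mul_left (hFK _) _
    unfold KI
    calc _ ≤ (ZI G β ρ I x)⁻¹ * (K * ZI G β ρ I x) := mul_le_mul_right h1 _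
      _ = K * ((ZI G β ρ I x)⁻¹ * ZI G β ρ I x) := by ring
      _ = K := by rw [ENNReal.inv_mul_cancel (ZI_pos h I x).ne' (ZI_lt_top hβ h I x).ne, mul_one]
  have um := updateFinset_zero_measurable E
  set p : (V → ℝ) → (↥E → ℝ) := fun x i => x i.1 with hp
  have pm : Measurable p := measurable_pi_lambda _ fun i => measurable_pi_apply _
  have hKl : ∀ x, KI G β ρ I F x = KI G β ρ I F (Function.updateFinset 0 E (p x)) := by
    intro x
    refine KI_local I F (↑(I ∪ E)) (fun x y hxy => hloc x y fun v hv => hxy v (by exact_mod_cast hv)) fun v hv hv' => ?_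
    have : v ∈ E := by
      have : v ∈ I ∪ E := by
        rcases hv' with hv' | hv'
        · exact_mod_cast hv'
        · exact hcl hv'
      exact (Finset.mem_union.1 this).resolve_left hv
    simp [Function.updateFinset_def, this, hp]
  set μ := (muV G β ρ ζ Δ Bd c).map p with hμ
  have μl : ∀ f : (↥E → ℝ) → ℝ≥0∞, Measurable f → ∫⁻ φ, f φ ∂μ = NF G β ρ ζ Δ Bd c (fun x => f (p x)) := by
    intro f fm
    rw [hμ, lintegral_map fm pm, muV_lintegral Δ Bd c (F := fun x => f (p x)) (fm.comp pm)]
  have μs : ∀ s : Set (↥E → ℝ), MeasurableSet s → μ s = NF G β ρ ζ Δ Bd c (fun x => s.indicator 1 (p x)) := by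
    intro s hs
    rw [← μl _ (measurable_one.indicator hs), lintegral_indicator_one hs]
  have μu : μ Set.univ = NF G β ρ ζ Δ Bd c (fun _ => 1) := by
    rw [μs _ MeasurableSet.univ]; simp
  have μfin : IsFiniteMeasure μ := ⟨by rw [μu]; exact hfin⟩
  have hlsm : ∀ A B C D : Set (↥E → ℝ), MeasurableSet A → MeasurableSet B → MeasurableSet C →
      MeasurableSet D → (∀ x ∈ A, ∀ y ∈ B, x ⊔ y ∈ C ∧ x ⊓ y ∈ D) →
      μ.real A * μ.real B ≤ μ.real C * μ.real D := by
    intro A B C D hA hB hC hD hh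
    simp only [Measure.real]
    rw [← ENNReal.toReal_mul, ← ENNReal.toReal_mul]
    refine ENNReal.toReal_mono (ENNReal.mul_ne_top (measure_ne_top _ _) (measure_ne_top _ _)) ?_
    rw [μs _ hA, μs _ hB, μs _ hC, μs _ hD]
    refine NF_lsm hβ Δ Bd c _ _ _ _ ((measurable_one.indicator hA).comp pm) ((measurable_one.indicator hB).comp pm)
      ((measurable_one.indicator hC).comp pm) ((measurable_one.indicator hD).comp pm) fun x y => ?_
    by_cases hx : p x ∈ A
    · by_cases hy : p y ∈ B
      · have h1 : p (x ⊔ y) ∈ C := (hh _ hx _ hy).1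
        have h2 : p (x ⊓ y) ∈ D := (hh _ hx _ hy).2
        simp [hx, hy, h1, h2]
      · simp [hy]
    · simp [hx]
  have horth : ∀ (S : Finset ↥E) (t : ↥E → ℝ), μ.real {x | ∀ i ∈ S, t i ≤ x i} ≤
      μ.real Set.univ * ∏ i ∈ S, ((ζ Set.univ)⁻¹ • ζ).real (Set.Ici (t i)) := by
    intro S t
    have hms : MeasurableSet {x : ↥E → ℝ | ∀ i ∈ S, t i ≤ x i} := by
      have : {x : ↥E → ℝ | ∀ i ∈ S, t i ≤ x i} = ⋂ i ∈ S, {x | t i ≤ x i} := by ext; simp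
      rw [this]
      exact Finset.measurableSet_biInter _ fun i _ => measurableSet_le measurable_const (measurable_pi_apply i)
    have key := ho (S.map (Function.Embedding.subtype _)) (by
      intro v hv
      rw [Finset.mem_map] at hv
      obtain ⟨w, _, rfl⟩ := hv
      exact w.2) (fun v => if hv : v ∈ E then t ⟨v, hv⟩ else 0)
    simp only [Finset.prod_map, Function.Embedding.subtype_apply, Subtype.coe_eta, Finset.coe_mem, dite_true] at key
    simp only [Measure.real]
    rw [← ENNReal.toReal_prod, ← ENNReal.toReal_mul]
    refine ENNReal.toReal_mono (ENNReal.mul_ne_top (measure_ne_top _ _)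
      (ENNReal.prod_lt_top fun _ _ => measure_lt_top _ _).ne) ?_
    rw [μs _ hms, μu, mul_comm]
    have e1 : (fun x : V → ℝ => ({x | ∀ i ∈ S, t i ≤ x i} : Set (↥E → ℝ)).indicator (1 : (↥E → ℝ) → ℝ≥0∞) (p x)) =
        fun x => ∏ s ∈ S, (Set.Ici (t s)).indicator 1 (x s) := by
      funext x
      by_cases hx : ∀ i ∈ S, t i ≤ x i
      · rw [Set.indicator_of_mem (show p x ∈ {x : ↥E → ℝ | ∀ i ∈ S, t i ≤ x i} from hx), Pi.one_apply]
        refine (Finset.prod_eq_one fun s hs => ?_).symm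
        rw [Set.indicator_of_mem (show x s.1 ∈ Set.Ici (t s) from hx s hs), Pi.one_apply]
      · rw [Set.indicator_of_notMem (show p x ∉ {x : ↥E → ℝ | ∀ i ∈ S, t i ≤ x i} from hx)]
        push Not at hx
        obtain ⟨i, hi, hlt⟩ := hx
        refine (Finset.prod_eq_zero hi ?_).symm
        rw [Set.indicator_of_notMem (by simpa using hlt)]
    rw [e1]
    refine key.trans (mul_le_mul_left (le_of_eq (Finset.prod_congr rfl fun s _ => ?_)) _)
    rw [Measure.smul_apply, smul_eq_mul, ENNReal.div_eq_inv_mul]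
  have hg : ∀ φ : ↥E → ℝ, ENNReal.ofReal (KI G β ρ I F (Function.updateFinset 0 E φ)).toReal =
      KI G β ρ I F (Function.updateFinset 0 E φ) := fun φ =>
    ENNReal.ofReal_toReal (ne_top_of_le_ne_top hK (hKb _))
  have fin := dom_lintegral μ (fun _ => (ζ Set.univ)⁻¹ • ζ) hlsm horth
    (fun φ => (KI G β ρ I F (Function.updateFinset 0 E φ)).toReal) (fun _ => ENNReal.toReal_nonneg)
    (hKm.comp um).ennreal_toReal (fun φ ψ hφ => by
      refine ENNReal.toReal_mono (ne_top_of_le_ne_top hK (hKb _)) (KI_mono hβ h I F hF hmono ?_)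
      intro v
      simp only [Function.updateFinset_def]
      split_ifs
      · exact hφ _
      · exact le_rfl)
  simp only [hg] at fin
  rw [μl (fun φ => KI G β ρ I F (Function.updateFinset 0 E φ)) (hKm.comp um), μu] at fin
  rw [hdlr]
  refine le_trans (le_of_eq ?_) fin
  congr 1
  funext x
  exact hKl x

end Core

section Fin
variable {V : Type*} {G : SimpleGraph V} [∀ x : V, Fintype (G.neighborSet x)] {β : ℝ} {ρ ζ : Measure ℝ}

theorem bdry_sub (Λ : Finset V) : bdry G Λ ⊆ Λ := Finset.filter_subset _ _

theorem clN_bulk (Λ : Finset V) : clN G (Λ \ bdry G Λ) ⊆ (Λ \ bdry G Λ) ∪ bdry G Λ := by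
  intro v hv
  rw [Finset.sdiff_union_of_subset (bdry_sub Λ)]
  unfold clN at hv
  rcases Finset.mem_union.1 hv with h | h
  · exact (Finset.mem_sdiff.1 h).1
  · obtain ⟨a, ha, hav⟩ := Finset.mem_biUnion.1 h
    rw [SimpleGraph.mem_neighborFinset] at hav
    by_contra hn
    rw [Finset.mem_sdiff] at ha
    exact ha.2 (Finset.mem_filter.2 ⟨ha.1, v, hn, hav⟩)

noncomputable def kerN (G : SimpleGraph V) (β : ℝ) (ρ : Measure ℝ) (Λ : Finset V) (ξb : ↥(bdry G Λ) → ℝ) :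
    Measure (↥Λ → ℝ) :=
  (gibbs (Jnn G) β ρ (Λ \ bdry G Λ)
        (fun y => if h : y ∈ bdry G Λ then ξb ⟨y, h⟩ else 0)).map
      fun ψ x => if h : x.1 ∈ bdry G Λ then ξb ⟨x.1, h⟩
        else ψ ⟨x.1, Finset.mem_sdiff.mpr ⟨x.2, h⟩⟩

theorem kerN_lintegral [SigmaFinite ρ] (Λ : Finset V) (ξ : ↥(bdry G Λ) → ℝ) (Φ : (↥Λ → ℝ) → ℝ≥0∞)
    (hΦ : Measurable Φ) : ∫⁻ φ, Φ φ ∂kerN G β ρ Λ ξ =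
      KI G β ρ (Λ \ bdry G Λ) (fun x => Φ fun v => x v.1) (Function.updateFinset 0 (bdry G Λ) ξ) := by
  unfold kerN
  have e1 : (fun y => if h : y ∈ bdry G Λ then ξ ⟨y, h⟩ else (0 : ℝ)) =
      Function.updateFinset (0 : V → ℝ) (bdry G Λ) ξ := by
    funext y
    by_cases hy : y ∈ bdry G Λ <;> simp [Function.updateFinset_def, hy]
  rw [e1, lintegral_map hΦ]
  · unfold KI
    rw [← gibbs_lintegral (Λ \ bdry G Λ) (Function.updateFinset 0 (bdry G Λ) ξ) (fun x => Φ fun v => x v.1)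
      (hΦ.comp (measurable_pi_lambda _ fun v => measurable_pi_apply _))]
    refine lintegral_congr fun ψ => ?_
    congr 1
    funext v
    by_cases hy : v.1 ∈ bdry G Λ <;> simp [Function.updateFinset_def, hy]
  · refine measurable_pi_lambda _ fun v => ?_
    by_cases hy : v.1 ∈ bdry G Λ
    · simp only [hy, dite_true]; exact measurable_const
    · simp only [hy, dite_false]; exact measurable_pi_apply _

theorem kerN_measurable [SigmaFinite ρ] (Λ : Finset V) : Measurable (kerN G β ρ Λ) := by
  refine Measure.measurable_of_measurable_coe _ fun s hs => ?_
  have : (fun ξ => kerN G β ρ Λ ξ s) = fun ξ => KI G β ρ (Λ \ bdry G Λ) (fun x => s.indicator 1 fun v : ↥Λ => x v.1)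
      (Function.updateFinset 0 (bdry G Λ) ξ) := by
    funext ξ
    rw [← kerN_lintegral Λ ξ (s.indicator 1) (measurable_one.indicator hs), lintegral_indicator_one hs]
  rw [this]
  exact (KI_measurable _ ((measurable_one.indicator hs).comp
    (measurable_pi_lambda _ fun v => measurable_pi_apply _))).comp (updateFinset_zero_measurable _)

theorem nuTilde_lintegral [SigmaFinite ρ] (Λ : Finset V) (Φ : (↥Λ → ℝ) → ℝ≥0∞) (hΦ : Measurable Φ) :
    ∫⁻ φ, Φ φ ∂nuTilde G β ρ ζ Λ = ∫⁻ ξ, KI G β ρ (Λ \ bdry G Λ) (fun x => Φ fun v => x v.1)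
      (Function.updateFinset 0 (bdry G Λ) ξ) ∂prodN ζ (bdry G Λ) := by
  have : nuTilde G β ρ ζ Λ = (prodN ζ (bdry G Λ)).bind (kerN G β ρ Λ) := rfl
  rw [this, Measure.lintegral_bind (kerN_measurable Λ).aemeasurable hΦ.aemeasurable]
  exact lintegral_congr fun ξ => kerN_lintegral Λ ξ Φ hΦ

theorem prodN_eq [IsFiniteMeasure ζ] (hζ0 : ζ Set.univ ≠ 0) (E : Finset V) :
    prodN ζ E = Measure.pi fun _ : ↥E => (ζ Set.univ)⁻¹ • ζ := by
  have hprob : IsProbabilityMeasure ((ζ Set.univ)⁻¹ • ζ) := ⟨by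
    rw [Measure.smul_apply, smul_eq_mul, ENNReal.inv_mul_cancel hζ0 (measure_ne_top _ _)]⟩
  refine (Measure.pi_eq fun s hs => ?_).symm
  unfold prodN
  rw [Measure.smul_apply, Measure.pi_pi, Measure.pi_univ, smul_eq_mul]
  simp only [Measure.smul_apply, smul_eq_mul, Finset.prod_mul_distrib]
  rw [ENNReal.prod_inv_distrib]
  intro i _ j _ _
  exact Or.inl hζ0

theorem prodN_prob [IsFiniteMeasure ζ] (hζ0 : ζ Set.univ ≠ 0) (E : Finset V) : IsProbabilityMeasure (prodN ζ E) := by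
  have hprob : IsProbabilityMeasure ((ζ Set.univ)⁻¹ • ζ) := ⟨by
    rw [Measure.smul_apply, smul_eq_mul, ENNReal.inv_mul_cancel hζ0 (measure_ne_top _ _)]⟩
  rw [prodN_eq hζ0]
  infer_instance

theorem nuTilde_prob (hβ : 0 ≤ β) (h : RhoOK ρ) [IsFiniteMeasure ζ] (hζ0 : ζ Set.univ ≠ 0) (Λ : Finset V) :
    IsProbabilityMeasure (nuTilde G β ρ ζ Λ) := by
  have := h.finite
  have := prodN_prob hζ0 (bdry G Λ)
  refine ⟨?_⟩
  rw [← lintegral_one, nuTilde_lintegral Λ (fun _ => 1) measurable_const]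
  simp only [KI_one hβ h]
  simp

theorem mono_lintegral (hβ : 0 ≤ β) (h : RhoOK ρ) [IsFiniteMeasure ζ] (hζ0 : ζ Set.univ ≠ 0)
    (hζe : ∀ c : ℝ, 0 ≤ c → ∫⁻ u, ENNReal.ofReal (Real.exp (c * u ^ 2)) ∂ζ < ⊤) {B M : ℝ} (hB : 0 ≤ B)
    (hζB : ∀ᵐ u ∂ζ, B ≤ u) {D : ℕ} {Λ' Λ : Finset V} (hsub : Λ' ⊆ Λ) (hsub' : Λ' ⊆ Λ \ bdry G Λ)
    (H : Hyp G β ρ D (Λ \ bdry G Λ) (bdry G Λ) M)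
    (ho : ∀ S ⊆ bdry G Λ', ∀ t : V → ℝ, NF G β ρ ζ (Λ \ bdry G Λ) (bdry G Λ) (β * D * M)
        (fun x => ∏ s ∈ S, (Set.Ici (t s)).indicator 1 (x s)) ≤
      (∏ s ∈ S, ζ (Set.Ici (t s)) / ζ Set.univ) *
        NF G β ρ ζ (Λ \ bdry G Λ) (bdry G Λ) (β * D * M) (fun _ => 1))
    (Φ : (↥Λ' → ℝ) → ℝ≥0∞) (hΦ : Measurable Φ) (hmono : Monotone Φ) (K : ℝ≥0∞) (hK : K ≠ ⊤) (hΦK : ∀ x, Φ x ≤ K) :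
    ∫⁻ φ, Φ φ ∂marg hsub (nuTilde G β ρ ζ Λ) ≤ ∫⁻ φ, Φ φ ∂nuTilde G β ρ ζ Λ' := by
  have := h.finite
  have hfin := NF_fin (G := G) h hβ (c := β * D * M) (mul_nonneg (by positivity) H.hM0) hζe H.hcl
  have hpos := NF_pos (G := G) (β := β) h hζ0 (Λ \ bdry G Λ) (bdry G Λ) (β * D * M)
  have hI : Λ' \ bdry G Λ' ⊆ Λ \ bdry G Λ := Finset.sdiff_subset.trans hsub'
  have rm : Measurable fun (x : V → ℝ) (v : ↥Λ') => x v.1 := measurable_pi_lambda _ fun v => measurable_pi_apply _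
  set F : (V → ℝ) → ℝ≥0∞ := fun x => Φ fun v => x v.1 with hFdef
  have Fm : Measurable F := hΦ.comp rm
  have Fmono : Monotone F := fun x y hxy => hmono fun v => hxy v.1
  have hcore := core hβ h hζ0 hfin hI (clN_bulk Λ') Finset.sdiff_disjoint ho F Fm Fmono K hK (fun x => hΦK _)
    (fun x y hxy => by
      simp only [hFdef]
      congr 1
      funext v
      refine hxy v.1 ?_
      rw [Finset.sdiff_union_of_subset (bdry_sub Λ')]
      exact v.2)
  have hh := harris hζB H hB F Fm Fmono
  rw [nuTilde_lintegral Λ' Φ hΦ, prodN_eq hζ0 (bdry G Λ')]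
  have mm : Measurable fun (φ : ↥Λ → ℝ) (x : ↥Λ') => φ ⟨x.1, hsub x.2⟩ :=
    measurable_pi_lambda _ fun v => measurable_pi_apply _
  unfold marg
  rw [lintegral_map hΦ mm, nuTilde_lintegral Λ (fun φ => Φ fun x => φ ⟨x.1, hsub x.2⟩) (hΦ.comp mm)]
  unfold prodN
  rw [lintegral_smul_measure, smul_eq_mul]
  set R := ∫⁻ φ, KI G β ρ (Λ' \ bdry G Λ') F (Function.updateFinset 0 (bdry G Λ') φ)
    ∂Measure.pi (fun _ : ↥(bdry G Λ') => (ζ Set.univ)⁻¹ • ζ) with hR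
  set N1 := NF G β ρ ζ (Λ \ bdry G Λ) (bdry G Λ) (β * D * M) (fun _ => 1) with hN1
  set P := (Measure.pi fun _ : ↥(bdry G Λ) => ζ) Set.univ with hP
  have eP : (∫⋯∫⁻_(bdry G Λ), (fun _ => 1) ∂(fun _ => ζ)) (0 : V → ℝ) = P := by
    unfold lmarginal
    rw [lintegral_one]
  rw [eP] at hh
  have hP0 : P ≠ 0 := by
    rw [hP, Measure.pi_univ]
    exact Finset.prod_ne_zero_iff.2 fun _ _ => hζ0
  have hPt : P ≠ ⊤ := measure_ne_top _ _
  set L := (∫⋯∫⁻_(bdry G Λ), KI G β ρ (Λ \ bdry G Λ) F ∂(fun _ => ζ)) (0 : V → ℝ) with hL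
  change P⁻¹ * L ≤ R
  have h1 : N1 * L ≤ N1 * (P * R) := by
    calc N1 * L = L * N1 := mul_comm _ _
      _ ≤ _ := hh
      _ ≤ (N1 * R) * P := mul_le_mul_left hcore _
      _ = _ := by ring
  have h2 : L ≤ P * R := (ENNReal.mul_le_mul_iff_right hpos hfin.ne).1 h1
  calc P⁻¹ * L ≤ P⁻¹ * (P * R) := mul_le_mul_right h2 _
    _ = R := by rw [← mul_assoc, ENNReal.inv_mul_cancel hP0 hPt, one_mul]

theorem stochDom_of_lintegral {ι : Type*} [Finite ι] (μ ν : Measure (ι → ℝ)) [IsProbabilityMeasure μ]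
    [IsProbabilityMeasure ν]
    (hh : ∀ Φ : (ι → ℝ) → ℝ≥0∞, Measurable Φ → Monotone Φ → ∀ K : ℝ≥0∞, K ≠ ⊤ → (∀ x, Φ x ≤ K) →
      ∫⁻ φ, Φ φ ∂μ ≤ ∫⁻ φ, Φ φ ∂ν) : StochDom μ ν := by
  intro g gm gmono ⟨K, hK⟩
  have g1 : ∀ x, 0 ≤ g x + K := fun x => by have := (abs_le.1 (hK x)).1; linarith
  have g2 : ∀ x, g x + K ≤ 2 * K := fun x => by have := (abs_le.1 (hK x)).2; linarith
  have int : ∀ (m : Measure (ι → ℝ)) [IsProbabilityMeasure m], Integrable g m := fun m _ =>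
    Integrable.of_bound gm.aestronglyMeasurable K (Filter.Eventually.of_forall hK)
  have e : ∀ (m : Measure (ι → ℝ)) [IsProbabilityMeasure m], ∫ x, g x ∂m =
      (∫⁻ x, ENNReal.ofReal (g x + K) ∂m).toReal - K := fun m _ => by
    rw [← integral_eq_lintegral_of_nonneg_ae (Filter.Eventually.of_forall g1)
      (gm.add_const K).aestronglyMeasurable, integral_add (int m) (integrable_const K)]
    simp
  rw [e μ, e ν]
  refine sub_le_sub_right (ENNReal.toReal_mono ?_ ?_) K
  · refine ne_top_of_le_ne_top (b := ∫⁻ _, ENNReal.ofReal (2 * K) ∂ν) ?_ ?_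
    · rw [lintegral_const, measure_univ, mul_one]; exact ENNReal.ofReal_ne_top
    exact lintegral_mono fun x => ENNReal.ofReal_le_ofReal (g2 x)
  · exact hh (fun x => ENNReal.ofReal (g x + K)) (gm.add_const K).ennreal_ofReal
      (fun x y hxy => ENNReal.ofReal_le_ofReal (by have := gmono hxy; linarith)) _ ENNReal.ofReal_ne_top
      fun x => ENNReal.ofReal_le_ofReal (g2 x)

end Fin

/-- Proposition `prop: Lambda monotonicity`: monotonicity in the
volume of the random-boundary-condition measures. On a connected graph of degree at
most `D`, with `a = 8βD`, `B = ((2/a)(2C̃ + log ρ_a(ℝ) - log ρ_{a/2}(ℝ)))^{1/2}` and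
`ζ = ζ_{a,B}` (where `C̃` is a constant realizing the `n = 2` regularity theorem),
there exists `r > 0` such that whenever `d_G(∂Λ, Λ') > r`, the measure `ν̃⁰_{Λ',β,ρ}`
stochastically dominates the `Λ'`-marginal of `ν̃⁰_{Λ,β,ρ}`. -/
theorem stmt16 {V : Type*} [Countable V] (G : SimpleGraph V) (hconn : G.Connected)
    [∀ x : V, Fintype (G.neighborSet x)] (D : ℕ) (hD : 0 < D)
    (hdeg : ∀ x : V, G.degree x ≤ D)
    (β : ℝ) (hβ : 0 < β) (ρ : Measure ℝ)
    (hρ : ∀ a : ℝ, 0 < a →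
      0 < ∫⁻ u, ENNReal.ofReal (Real.exp (a * u ^ 2)) ∂ρ ∧
      ∫⁻ u, ENNReal.ofReal (Real.exp (a * u ^ 2)) ∂ρ < ⊤)
    (hρpos : 0 < ρ (Set.Ici (0 : ℝ)))
    (C Ct : ℝ) (hC : 1 ≤ C) (hCt : 0 < Ct)
    -- `C` and `C̃` realize the `n = 2` regularity theorem (with `a = 8βD`, `M_f = D`):
    (hreg : ∀ lam : ℝ, 1 ≤ lam → 4 * β * (D : ℝ) * lam ≤ 8 * β * D →
      ∀ (Λ Λ' : Finset V) (hsub : Λ' ⊆ Λ) (ξ : V → ℝ),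
      marg hsub (gibbs (Jnn G) β ρ Λ ξ) ≤
        ENNReal.ofReal (∏ x ∈ Λ', Real.exp
          (Ct * ARealL (Jnn G) (fun _ => 1) lam ξ C x (↑Λ) ^ 2)) •
        prodN (rhoMod ρ (4 * β * D)) Λ') :
    ∃ r : ℝ, 0 < r ∧ ∀ (Λ' Λ : Finset V) (hsub : Λ' ⊆ Λ),
      (∀ x ∈ Λ', ∀ y ∈ bdry G Λ, r < (G.dist x y : ℝ)) →
      StochDom
        (marg hsub (nuTilde G β ρ
          (zetaM ρ (8 * β * D)
            (Real.sqrt (2 / (8 * β * D) * (2 * Ct +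
              Real.log ((rhoMod ρ (8 * β * D)) Set.univ).toReal -
              Real.log ((rhoMod ρ (4 * β * D)) Set.univ).toReal)))) Λ))
        (nuTilde G β ρ
          (zetaM ρ (8 * β * D)
            (Real.sqrt (2 / (8 * β * D) * (2 * Ct +
              Real.log ((rhoMod ρ (8 * β * D)) Set.univ).toReal -
              Real.log ((rhoMod ρ (4 * β * D)) Set.univ).toReal)))) Λ') := by
  have h : RhoOK ρ := ⟨fun a ha => (hρ a ha).2, hρpos⟩
  have hD' : (0 : ℝ) < D := by exact_mod_cast hD
  have ha : 0 ≤ 8 * β * D := by positivity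
  have hb : 0 ≤ 4 * β * D := by positivity
  have hR : RegH G β ρ C Ct (4 * β * D) := hreg 2 (by norm_num) (by linarith)
  set X := 2 * Ct + Real.log ((rhoMod ρ (8 * β * D)) Set.univ).toReal -
    Real.log ((rhoMod ρ (4 * β * D)) Set.univ).toReal with hX
  set B := Real.sqrt (2 / (8 * β * D) * X) with hBdef
  have hB : 0 ≤ B := Real.sqrt_nonneg _
  have fa := rhoMod_finite h ha
  have fb := rhoMod_finite h hb
  have hX0 : 0 ≤ X := by
    have : Real.log ((rhoMod ρ (4 * β * D)) Set.univ).toReal ≤ Real.log ((rhoMod ρ (8 * β * D)) Set.univ).toReal := by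
      refine Real.log_le_log (ENNReal.toReal_pos (rhoMod_ne_zero h hb) (measure_ne_top _ _)) ?_
      refine ENNReal.toReal_mono (measure_ne_top _ _) ?_
      rw [rhoMod_univ, rhoMod_univ]
      refine lintegral_mono fun u => ENNReal.ofReal_le_ofReal (Real.exp_le_exp.2 ?_)
      nlinarith [mul_nonneg hb (sq_nonneg u)]
    linarith
  have hBd : 4 * β * D * B ^ 2 = X := by
    rw [hBdef, Real.sq_sqrt (by positivity)]
    field_simp
    ring
  set M := Real.exp Ct * (kap ρ (4 * β * D) (fun u => ENNReal.ofReal (Real.exp (1 * u ^ 2)))).toReal with hM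
  have hM0 : 0 ≤ M := by positivity
  obtain ⟨r, hr1, hr⟩ := orth_main hconn hβ.le h hC hCt hb (a := 8 * β * D) (by ring) hR hdeg hB hM0 (by rw [hBd])
  have zf := zeta_finite (B := B) h ha
  have z0 := zeta_ne_zero (B := B) h ha
  refine ⟨r, by exact_mod_cast hr1, fun Λ' Λ hsub hdist => ?_⟩
  have hsub' : Λ' ⊆ Λ \ bdry G Λ := by
    intro v hv
    refine Finset.mem_sdiff.2 ⟨hsub hv, fun hv' => ?_⟩
    have := hdist v hv v hv'
    rw [SimpleGraph.dist_self] at this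
    have h0 : (0 : ℝ) ≤ r := Nat.cast_nonneg r
    simp only [Nat.cast_zero] at this
    linarith
  have H := M_bound hconn hβ.le h hC hCt.le hb hR hdeg (clN_bulk Λ) (Finset.sdiff_disjoint)
  have p1 := nuTilde_prob (G := G) hβ.le h z0 Λ
  have p2 := nuTilde_prob (G := G) hβ.le h z0 Λ'
  have p3 : IsProbabilityMeasure (marg hsub (nuTilde G β ρ (zetaM ρ (8 * β * D) B) Λ)) :=
    Measure.isProbabilityMeasure_map (measurable_pi_lambda _ fun v => measurable_pi_apply _).aemeasurable
  refine stochDom_of_lintegral _ _ fun Φ hΦ hmono K hK hΦK => ?_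
  refine mono_lintegral hβ.le h z0 (fun c hc => zeta_exp h ha hc) hB zeta_ae hsub hsub' H ?_ Φ hΦ hmono K hK hΦK
  intro S hS t
  refine hr _ _ H S ((hS.trans (bdry_sub Λ')).trans hsub') (fun s hs z hz => ?_) t
  exact_mod_cast hdist s (bdry_sub Λ' (hS hs)) z hz
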